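/- Fix a ∈ (0,1) and R ≥ 1; set x₀ = a + R and Ω = B_R((x₀, 0)), the Grushin ball of radius R centered at (x₀,0). Then there exist a real number λ and a function φ, not identically zero, continuous on the closure of Ω and C² in Ω, such that Δ_G φ + λ φ = 0 in Ω and φ = 0 on ∂Ω; moreover λ can be taken to satisfy 0 < λ ≤ C/R² for a constant C > 0 independent of a and R. -/

import Mathlib

open MeasureTheory

/-- Partial derivative in `x`. -/
noncomputable def pX (u : ℝ × ℝ → ℝ) (p : ℝ × ℝ) : ℝ := deriv (fun x => u (x, p.2)) p.1

/-- Partial derivative in `y`. -/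
noncomputable def pY (u : ℝ × ℝ → ℝ) (p : ℝ × ℝ) : ℝ := deriv (fun y => u (p.1, y)) p.2

/-- Second partial derivative in `x`. -/
noncomputable def pXX (u : ℝ × ℝ → ℝ) (p : ℝ × ℝ) : ℝ :=
  deriv (deriv (fun x => u (x, p.2))) p.1

/-- Second partial derivative in `y`. -/
noncomputable def pYY (u : ℝ × ℝ → ℝ) (p : ℝ × ℝ) : ℝ :=
  deriv (deriv (fun y => u (p.1, y))) p.2

/-- The Grushin Laplacian `Δ_G u = ∂_xx u + x² ∂_yy u`. -/
noncomputable def grushinLap (u : ℝ × ℝ → ℝ) (p : ℝ × ℝ) : ℝ := pXX u p + p.1 ^ 2 * pYY u p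

/-- The Grushin norm `‖(x,y)‖ = (x⁴ + 4y²)^(1/4)`. -/
noncomputable def gNorm (p : ℝ × ℝ) : ℝ := (p.1 ^ 4 + 4 * p.2 ^ 2) ^ ((1 : ℝ) / 4)

/-- The Grushin ball of radius `R` centered at `c`. -/
def gBall (c : ℝ × ℝ) (R : ℝ) : Set (ℝ × ℝ) := {p | gNorm (p - c) < R}

section
open MeasureTheory Filter Topology Set
open scoped ContDiff

namespace Gru

/-- first partial derivative in the first variable -/
noncomputable def dX (f : ℝ × ℝ → ℝ) (p : ℝ × ℝ) : ℝ := fderiv ℝ f p (1, 0)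
/-- first partial derivative in the second variable -/
noncomputable def dY (f : ℝ × ℝ → ℝ) (p : ℝ × ℝ) : ℝ := fderiv ℝ f p (0, 1)
/-- flat Laplacian -/
noncomputable def lap (f : ℝ × ℝ → ℝ) (p : ℝ × ℝ) : ℝ := dX (dX f) p + dY (dY f) p

/-- test functions -/
structure IsTest (U : Set (ℝ × ℝ)) (η : ℝ × ℝ → ℝ) : Prop where
  smooth : ContDiff ℝ ∞ η
  cpt : HasCompactSupport η
  sub : tsupport η ⊆ U

lemma contDiff_dX {f : ℝ × ℝ → ℝ} {n : WithTop ℕ∞} {m : WithTop ℕ∞} (hf : ContDiff ℝ n f)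
    (h : m + 1 ≤ n) : ContDiff ℝ m (dX f) :=
  (hf.fderiv_right h).clm_apply contDiff_const

lemma contDiff_dY {f : ℝ × ℝ → ℝ} {n : WithTop ℕ∞} {m : WithTop ℕ∞} (hf : ContDiff ℝ n f)
    (h : m + 1 ≤ n) : ContDiff ℝ m (dY f) :=
  (hf.fderiv_right h).clm_apply contDiff_const

lemma cpt_dX {f : ℝ × ℝ → ℝ} (hf : HasCompactSupport f) : HasCompactSupport (dX f) :=
  hf.fderiv_apply (𝕜 := ℝ) (1, 0)
lemma cpt_dY {f : ℝ × ℝ → ℝ} (hf : HasCompactSupport f) : HasCompactSupport (dY f) :=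
  hf.fderiv_apply (𝕜 := ℝ) (0, 1)

lemma tsupp_dX (f : ℝ × ℝ → ℝ) : tsupport (dX f) ⊆ tsupport f :=
  tsupport_fderiv_apply_subset ℝ (1, 0)
lemma tsupp_dY (f : ℝ × ℝ → ℝ) : tsupport (dY f) ⊆ tsupport f :=
  tsupport_fderiv_apply_subset ℝ (0, 1)

lemma IsTest.dX {U : Set (ℝ × ℝ)} {η : ℝ × ℝ → ℝ} (h : IsTest U η) : IsTest U (dX η) :=
  ⟨contDiff_dX h.smooth (by simp), cpt_dX h.cpt, (tsupp_dX η).trans h.sub⟩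
lemma IsTest.dY {U : Set (ℝ × ℝ)} {η : ℝ × ℝ → ℝ} (h : IsTest U η) : IsTest U (dY η) :=
  ⟨contDiff_dY h.smooth (by simp), cpt_dY h.cpt, (tsupp_dY η).trans h.sub⟩

lemma tsupport_add_sub {f g : ℝ × ℝ → ℝ} {U : Set (ℝ × ℝ)} (hf : tsupport f ⊆ U)
    (hg : tsupport g ⊆ U) : tsupport (fun p => f p + g p) ⊆ U := by
  refine (closure_mono (Function.support_add f g)).trans ?_
  rw [closure_union]; exact union_subset hf hg

lemma IsTest.add {U : Set (ℝ × ℝ)} {η ζ : ℝ × ℝ → ℝ} (h : IsTest U η) (k : IsTest U ζ) :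
    IsTest U (fun p => η p + ζ p) :=
  ⟨h.smooth.add k.smooth, h.cpt.add k.cpt, tsupport_add_sub h.sub k.sub⟩

lemma IsTest.const_mul {U : Set (ℝ × ℝ)} {η : ℝ × ℝ → ℝ} (h : IsTest U η) (c : ℝ) :
    IsTest U (fun p => c * η p) :=
  ⟨contDiff_const.mul h.smooth, h.cpt.mul_left, (tsupport_mul_subset_right).trans h.sub⟩

lemma IsTest.lap {U : Set (ℝ × ℝ)} {η : ℝ × ℝ → ℝ} (h : IsTest U η) : IsTest U (lap η) :=
  h.dX.dX.add h.dY.dY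

lemma IsTest.mono {U V : Set (ℝ × ℝ)} {η : ℝ × ℝ → ℝ} (h : IsTest U η) (k : U ⊆ V) : IsTest V η :=
  ⟨h.smooth, h.cpt, h.sub.trans k⟩

lemma IsTest.cont {U : Set (ℝ × ℝ)} {η : ℝ × ℝ → ℝ} (h : IsTest U η) : Continuous η :=
  h.smooth.continuous

lemma IsTest.int {U : Set (ℝ × ℝ)} {η : ℝ × ℝ → ℝ} (h : IsTest U η) : Integrable η :=
  h.cont.integrable_of_hasCompactSupport h.cpt

/-- multiply a test function by something smooth on the support -/
lemma IsTest.mul_on {U : Set (ℝ × ℝ)} {η f : ℝ × ℝ → ℝ} (h : IsTest U η)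
    (hf : ∀ p ∈ tsupport η, ContDiffAt ℝ ∞ f p) :
    IsTest U (fun p => f p * η p) := by
  refine ⟨contDiff_iff_contDiffAt.2 fun p => ?_, h.cpt.mul_left,
    (tsupport_mul_subset_right).trans h.sub⟩
  by_cases hp : p ∈ tsupport η
  · exact (hf p hp).mul h.smooth.contDiffAt
  · have : (fun p => f p * η p) =ᶠ[𝓝 p] fun _ => 0 := by
      filter_upwards [(isClosed_tsupport η).isOpen_compl.mem_nhds hp] with q hq
      simp [image_eq_zero_of_notMem_tsupport hq]
    exact contDiffAt_const.congr_of_eventuallyEq this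

lemma dX_mul {f g : ℝ × ℝ → ℝ} {p : ℝ × ℝ} (hf : DifferentiableAt ℝ f p)
    (hg : DifferentiableAt ℝ g p) : dX (fun q => f q * g q) p = dX f p * g p + f p * dX g p := by
  simp only [dX]; rw [fderiv_fun_mul hf hg]; simp; ring
lemma dY_mul {f g : ℝ × ℝ → ℝ} {p : ℝ × ℝ} (hf : DifferentiableAt ℝ f p)
    (hg : DifferentiableAt ℝ g p) : dY (fun q => f q * g q) p = dY f p * g p + f p * dY g p := by
  simp only [dY]; rw [fderiv_fun_mul hf hg]; simp; ring

lemma dX_add {f g : ℝ × ℝ → ℝ} {p : ℝ × ℝ} (hf : DifferentiableAt ℝ f p)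
    (hg : DifferentiableAt ℝ g p) : dX (fun q => f q + g q) p = dX f p + dX g p := by
  simp only [dX]; rw [fderiv_fun_add hf hg]; simp
lemma dY_add {f g : ℝ × ℝ → ℝ} {p : ℝ × ℝ} (hf : DifferentiableAt ℝ f p)
    (hg : DifferentiableAt ℝ g p) : dY (fun q => f q + g q) p = dY f p + dY g p := by
  simp only [dY]; rw [fderiv_fun_add hf hg]; simp

/-- integration by parts; one factor compactly supported -/
lemma ibpX {f g : ℝ × ℝ → ℝ} (hf : ContDiff ℝ 1 f) (hg : ContDiff ℝ 1 g)
    (hc : HasCompactSupport g) : ∫ p, f p * dX g p = - ∫ p, dX f p * g p := by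
  refine integral_mul_fderiv_eq_neg_fderiv_mul_of_integrable ?_ ?_ ?_ ?_ ?_
  · exact ((contDiff_dX (m := 0) hf (by simp)).continuous.mul hg.continuous).integrable_of_hasCompactSupport
      hc.mul_left
  · exact (hf.continuous.mul (contDiff_dX (m := 0) hg (by simp)).continuous).integrable_of_hasCompactSupport
      (cpt_dX hc).mul_left
  · exact (hf.continuous.mul hg.continuous).integrable_of_hasCompactSupport hc.mul_left
  · exact fun x _ => hf.differentiable (by simp) x
  · exact fun x _ => hg.differentiable (by simp) x

lemma ibpY {f g : ℝ × ℝ → ℝ} (hf : ContDiff ℝ 1 f) (hg : ContDiff ℝ 1 g)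
    (hc : HasCompactSupport g) : ∫ p, f p * dY g p = - ∫ p, dY f p * g p := by
  refine integral_mul_fderiv_eq_neg_fderiv_mul_of_integrable ?_ ?_ ?_ ?_ ?_
  · exact ((contDiff_dY (m := 0) hf (by simp)).continuous.mul hg.continuous).integrable_of_hasCompactSupport
      hc.mul_left
  · exact (hf.continuous.mul (contDiff_dY (m := 0) hg (by simp)).continuous).integrable_of_hasCompactSupport
      (cpt_dY hc).mul_left
  · exact (hf.continuous.mul hg.continuous).integrable_of_hasCompactSupport hc.mul_left
  · exact fun x _ => hf.differentiable (by simp) x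
  · exact fun x _ => hg.differentiable (by simp) x

lemma int_dX_zero {g : ℝ × ℝ → ℝ} (hg : ContDiff ℝ 1 g)
    (hc : HasCompactSupport g) : ∫ p, dX g p = 0 := by
  have := ibpX (f := fun _ => 1) contDiff_const hg hc
  simpa [dX] using this
lemma int_dY_zero {g : ℝ × ℝ → ℝ} (hg : ContDiff ℝ 1 g)
    (hc : HasCompactSupport g) : ∫ p, dY g p = 0 := by
  have := ibpY (f := fun _ => 1) contDiff_const hg hc
  simpa [dY] using this

lemma int_lap_symm {f g : ℝ × ℝ → ℝ} (hf : ContDiff ℝ 2 f) (hg : ContDiff ℝ 2 g)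
    (hc : HasCompactSupport g) : ∫ p, f p * lap g p = ∫ p, lap f p * g p := by
  have h12 : (1 : WithTop ℕ∞) + 1 ≤ 2 := by norm_num
  have hgx := contDiff_dX hg h12
  have hgy := contDiff_dY hg h12
  have hfx := contDiff_dX hf h12
  have hfy := contDiff_dY hf h12
  have h11 : (0 : WithTop ℕ∞) + 1 ≤ 1 := by norm_num
  have hf1 : ContDiff ℝ 1 f := hf.of_le (by norm_num)
  have hg1 : ContDiff ℝ 1 g := hg.of_le (by norm_num)
  have e1 : ∫ p, f p * dX (dX g) p = ∫ p, dX (dX f) p * g p := by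
    rw [ibpX hf1 hgx (cpt_dX hc), ibpX hfx hg1 hc, neg_neg]
  have e2 : ∫ p, f p * dY (dY g) p = ∫ p, dY (dY f) p * g p := by
    rw [ibpY hf1 hgy (cpt_dY hc), ibpY hfy hg1 hc, neg_neg]
  have i1 : Integrable fun p => f p * dX (dX g) p :=
    (hf.continuous.mul (contDiff_dX hgx h11).continuous).integrable_of_hasCompactSupport
      (cpt_dX (cpt_dX hc)).mul_left
  have i2 : Integrable fun p => f p * dY (dY g) p :=
    (hf.continuous.mul (contDiff_dY hgy h11).continuous).integrable_of_hasCompactSupport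
      (cpt_dY (cpt_dY hc)).mul_left
  have i3 : Integrable fun p => dX (dX f) p * g p :=
    ((contDiff_dX hfx h11).continuous.mul hg.continuous).integrable_of_hasCompactSupport hc.mul_left
  have i4 : Integrable fun p => dY (dY f) p * g p :=
    ((contDiff_dY hfy h11).continuous.mul hg.continuous).integrable_of_hasCompactSupport hc.mul_left
  simp only [lap, mul_add, add_mul]
  rw [integral_add i1 i2, integral_add i3 i4, e1, e2]

end Gru

end

section
open MeasureTheory Filter Topology Set
open scoped ContDiff

namespace Gru

noncomputable def SS (z : ℝ × ℝ) : ℝ := z.1 ^ 2 + z.2 ^ 2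
noncomputable def Nl (e : ℝ) (z : ℝ × ℝ) : ℝ := Real.log (SS z + e)
noncomputable def th : ContDiffBump (0 : ℝ × ℝ) := ⟨1/2, 1, by norm_num, by norm_num⟩
noncomputable def hh (t : ℝ) : ℝ := indicator (Icc (-1) 1) (fun t => |t| ^ (-(1/2) : ℝ)) t
noncomputable def DD (z : ℝ × ℝ) : ℝ := hh z.1 * hh z.2

lemma SS_nonneg (z : ℝ × ℝ) : 0 ≤ SS z := by unfold SS; positivity
lemma contDiff_SS : ContDiff ℝ ∞ SS := by unfold SS; fun_prop

lemma hh_nonneg (t : ℝ) : 0 ≤ hh t := by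
  unfold hh; exact indicator_nonneg (fun t _ => by positivity) t
lemma DD_nonneg (z : ℝ × ℝ) : 0 ≤ DD z := mul_nonneg (hh_nonneg _) (hh_nonneg _)

lemma hh_int : Integrable hh := by
  unfold hh
  have h1 : IntervalIntegrable (fun t : ℝ => |t| ^ (-(1/2) : ℝ)) volume 0 1 := by
    refine (intervalIntegral.intervalIntegrable_rpow' (r := -(1/2)) (by norm_num)).congr ?_
    intro t ht
    rw [uIoc_of_le (by norm_num)] at ht
    simp [abs_of_pos ht.1]
  have h2 : IntervalIntegrable (fun t : ℝ => |t| ^ (-(1/2) : ℝ)) volume (-1) 0 := by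
    have := (IntervalIntegrable.iff_comp_neg (f := fun t : ℝ => |t| ^ (-(1/2) : ℝ))).1 h1
    simpa using this.symm
  have h3 := h2.trans h1
  have := (intervalIntegrable_iff_integrableOn_Icc_of_le (by norm_num : (-1:ℝ) ≤ 1)).1 h3
  exact (integrable_indicator_iff measurableSet_Icc).2 this

lemma DD_int : Integrable DD := by
  have := Integrable.mul_prod hh_int hh_int
  exact this

lemma ae_ne : ∀ᵐ z : ℝ × ℝ, z.1 ≠ 0 ∧ z.2 ≠ 0 := by
  have h1 : ∀ᵐ x : ℝ, x ≠ 0 := by simp [ae_iff, measure_singleton]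
  have a1 : ∀ᵐ z : ℝ × ℝ, z.1 ≠ 0 := Measure.quasiMeasurePreserving_fst.ae h1
  have a2 : ∀ᵐ z : ℝ × ℝ, z.2 ≠ 0 := Measure.quasiMeasurePreserving_snd.ae h1
  filter_upwards [a1, a2] with z h1 h2 using ⟨h1, h2⟩

lemma DD_eq {z : ℝ × ℝ} (hz : ‖z‖ ≤ 1) : DD z = (|z.1| * |z.2|) ^ (-(1/2) : ℝ) := by
  have h1 : |z.1| ≤ 1 := (norm_fst_le z).trans hz
  have h2 : |z.2| ≤ 1 := (norm_snd_le z).trans hz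
  unfold DD hh
  rw [indicator_of_mem (by exact abs_le.1 h1), indicator_of_mem (by exact abs_le.1 h2),
    Real.mul_rpow (abs_nonneg _) (abs_nonneg _)]

/-- key bounds -/
lemma one_le_DD {z : ℝ × ℝ} (hz : ‖z‖ ≤ 1) (h1 : z.1 ≠ 0) (h2 : z.2 ≠ 0) : 1 ≤ DD z := by
  have k1 : |z.1| ≤ 1 := (norm_fst_le z).trans hz
  have k2 : |z.2| ≤ 1 := (norm_snd_le z).trans hz
  rw [DD_eq hz]
  exact Real.one_le_rpow_of_pos_of_le_one_of_nonpos (by positivity)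
    (mul_le_one₀ k1 (abs_nonneg _) k2) (by norm_num)

lemma Nl_sq_bound {e : ℝ} (he : 0 ≤ e) (he1 : e ≤ 1) {z : ℝ × ℝ} (hz : ‖z‖ ≤ 1) (h1 : z.1 ≠ 0)
    (h2 : z.2 ≠ 0) : (Nl e z) ^ 2 ≤ 36 * DD z := by
  have k1 : |z.1| ≤ 1 := (norm_fst_le z).trans hz
  have k2 : |z.2| ≤ 1 := (norm_snd_le z).trans hz
  rw [DD_eq hz]
  set w := |z.1| * |z.2| with hw
  have hw0 : 0 < w := by positivity
  have hw1 : w ≤ 1 := mul_le_one₀ k1 (abs_nonneg _) k2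
  have hS : w ≤ SS z + e := by
    unfold SS
    nlinarith [sq_abs z.1, sq_abs z.2, sq_nonneg (|z.1| - |z.2|), abs_nonneg z.1, abs_nonneg z.2]
  have hS3 : SS z + e ≤ 3 := by
    unfold SS
    nlinarith [sq_abs z.1, sq_abs z.2, abs_nonneg z.1, abs_nonneg z.2]
  have hS0 : 0 < SS z + e := lt_of_lt_of_le hw0 hS
  have up : Nl e z ≤ 2 := by
    have := Real.log_le_sub_one_of_pos hS0
    unfold Nl; linarith
  have lo : Real.log w ≤ Nl e z := Real.log_le_log hw0 hS
  have l2 : -Real.log w ≤ 4 * w ^ (-(1/4) : ℝ) := by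
    have := Real.log_le_rpow_div (x := w⁻¹) (by positivity) (ε := 1/4) (by norm_num)
    rw [Real.log_inv, Real.inv_rpow hw0.le, ← Real.rpow_neg hw0.le] at this
    linarith
  have l3 : 1 ≤ w ^ (-(1/4) : ℝ) :=
    Real.one_le_rpow_of_pos_of_le_one_of_nonpos hw0 hw1 (by norm_num)
  have l4 : (w ^ (-(1/4) : ℝ)) ^ 2 = w ^ (-(1/2) : ℝ) := by
    rw [← Real.rpow_natCast, ← Real.rpow_mul hw0.le]; norm_num
  rw [← l4]
  set q := w ^ (-(1/4) : ℝ)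
  nlinarith

lemma Nl_bound {e : ℝ} (he : 0 ≤ e) (he1 : e ≤ 1) {z : ℝ × ℝ} (hz : ‖z‖ ≤ 1) (h1 : z.1 ≠ 0)
    (h2 : z.2 ≠ 0) : |Nl e z| ≤ 6 * DD z := by
  have a := Nl_sq_bound he he1 hz h1 h2
  have b := one_le_DD hz h1 h2
  refine abs_le_of_sq_le_sq (by nlinarith) (by linarith)

lemma gr_bound {e : ℝ} (he : 0 ≤ e) {z : ℝ × ℝ} (hz : ‖z‖ ≤ 1) (h1 : z.1 ≠ 0)
    (h2 : z.2 ≠ 0) : |2 * z.1 / (SS z + e)| ≤ 2 * DD z ∧ |2 * z.2 / (SS z + e)| ≤ 2 * DD z := by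
  rw [DD_eq hz]
  set w := |z.1| * |z.2| with hw
  have hw0 : 0 < w := by positivity
  have hS : 0 < SS z := by unfold SS; positivity
  have hS0 : 0 < SS z + e := by linarith
  have q : w ^ (-(1/2) : ℝ) = (Real.sqrt w)⁻¹ := by
    rw [Real.rpow_neg hw0.le, Real.sqrt_eq_rpow]
  have hws : w ≤ SS z := by
    unfold SS
    nlinarith [sq_abs z.1, sq_abs z.2, sq_nonneg (|z.1| - |z.2|), abs_nonneg z.1, abs_nonneg z.2]
  have hsw : 0 < Real.sqrt w := Real.sqrt_pos.2 hw0
  have hss : Real.sqrt w ≤ Real.sqrt (SS z) := Real.sqrt_le_sqrt hws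
  have hq : Real.sqrt (SS z) * Real.sqrt (SS z) = SS z := Real.mul_self_sqrt hS.le
  have main : ∀ t : ℝ, t ^ 2 ≤ SS z → |2 * t / (SS z + e)| ≤ 2 * w ^ (-(1/2) : ℝ) := by
    intro t ht
    have ht' : |t| ≤ Real.sqrt (SS z) := Real.abs_le_sqrt ht
    rw [q, abs_div, abs_of_pos hS0, abs_mul, abs_two, mul_div_assoc]
    refine mul_le_mul_of_nonneg_left ?_ (by norm_num)
    rw [div_le_iff₀ hS0, ← div_eq_inv_mul, le_div_iff₀ hsw]
    nlinarith [abs_nonneg t]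
  exact ⟨main _ (by unfold SS; nlinarith [sq_nonneg z.2]), main _ (by unfold SS; nlinarith [sq_nonneg z.1])⟩

/-! regularised kernels -/
noncomputable def Pe (e : ℝ) (z : ℝ × ℝ) : ℝ := th z * Nl e z
noncomputable def gx (e : ℝ) (z : ℝ × ℝ) : ℝ := 2 * z.1 / (SS z + e)
noncomputable def gy (e : ℝ) (z : ℝ × ℝ) : ℝ := 2 * z.2 / (SS z + e)
noncomputable def Px (e : ℝ) (z : ℝ × ℝ) : ℝ := dX th z * Nl e z + th z * gx e z
noncomputable def Py (e : ℝ) (z : ℝ × ℝ) : ℝ := dY th z * Nl e z + th z * gy e z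
noncomputable def ke (e : ℝ) (z : ℝ × ℝ) : ℝ :=
  2 * (dX th z * gx e z + dY th z * gy e z) + lap th z * Nl e z

lemma th_smooth : ContDiff ℝ ∞ th := th.contDiff
lemma th_cpt : HasCompactSupport th := th.hasCompactSupport
lemma th_test : IsTest univ th := ⟨th_smooth, th_cpt, subset_univ _⟩
lemma th_ts : tsupport th = Metric.closedBall 0 1 := th.tsupport_eq

lemma th_zero {f : ℝ × ℝ → ℝ} (hf : tsupport f ⊆ tsupport th) {z : ℝ × ℝ} (hz : 1 < ‖z‖) : f z = 0 := by
  apply image_eq_zero_of_notMem_tsupport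
  intro h
  have := hf h
  rw [th_ts] at this
  simp at this; linarith

lemma ts_lap (f : ℝ × ℝ → ℝ) : tsupport (lap f) ⊆ tsupport f :=
  tsupport_add_sub ((tsupp_dX _).trans (tsupp_dX f)) ((tsupp_dY _).trans (tsupp_dY f))

lemma hasFDerivAt_SS (z : ℝ × ℝ) : HasFDerivAt SS ((2 * z.1) • ContinuousLinearMap.fst ℝ ℝ ℝ +
    (2 * z.2) • ContinuousLinearMap.snd ℝ ℝ ℝ) z := by
  unfold SS
  have h1 : HasFDerivAt (fun z : ℝ × ℝ => z.1) (ContinuousLinearMap.fst ℝ ℝ ℝ) z := hasFDerivAt_fst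
  have h2 : HasFDerivAt (fun z : ℝ × ℝ => z.2) (ContinuousLinearMap.snd ℝ ℝ ℝ) z := hasFDerivAt_snd
  have := (h1.pow 2).fun_add (h2.pow 2)
  simpa using this

lemma pos_SSe {e : ℝ} (he : 0 < e) (z : ℝ × ℝ) : 0 < SS z + e := by
  have := SS_nonneg z; linarith

lemma hasFDerivAt_Nl {e : ℝ} {z : ℝ × ℝ} (h : SS z + e ≠ 0) : HasFDerivAt (Nl e)
   ((gx e z) • ContinuousLinearMap.fst ℝ ℝ ℝ + (gy e z) • ContinuousLinearMap.snd ℝ ℝ ℝ) z := by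
  have := ((hasFDerivAt_SS z).add_const e).log h
  refine this.congr_fderiv ?_
  simp only [gx, gy, smul_add, smul_smul]
  ext <;> simp <;> ring

lemma dX_Nl {e : ℝ} (he : 0 < e) : dX (Nl e) = gx e := by
  funext z
  simp [dX, (hasFDerivAt_Nl (pos_SSe he z).ne').fderiv]
lemma dY_Nl {e : ℝ} (he : 0 < e) : dY (Nl e) = gy e := by
  funext z
  simp [dY, (hasFDerivAt_Nl (pos_SSe he z).ne').fderiv]

lemma smooth_Nl {e : ℝ} {z : ℝ × ℝ} (h : SS z + e ≠ 0) : ContDiffAt ℝ ∞ (Nl e) z :=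
  ContDiffAt.log (contDiff_SS.contDiffAt.add contDiffAt_const) h
lemma smooth_gx {e : ℝ} {z : ℝ × ℝ} (h : SS z + e ≠ 0) : ContDiffAt ℝ ∞ (gx e) z := by
  unfold gx
  exact ContDiffAt.div (by fun_prop) (contDiff_SS.contDiffAt.add contDiffAt_const) h
lemma smooth_gy {e : ℝ} {z : ℝ × ℝ} (h : SS z + e ≠ 0) : ContDiffAt ℝ ∞ (gy e) z := by
  unfold gy
  exact ContDiffAt.div (by fun_prop) (contDiff_SS.contDiffAt.add contDiffAt_const) h

lemma lap_Nl {e : ℝ} (he : 0 < e) (z : ℝ × ℝ) : lap (Nl e) z = 4 * e / (SS z + e) ^ 2 := by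
  have h0 := (pos_SSe he z).ne'
  have hS := (hasFDerivAt_SS z).add_const e
  have h1 : HasFDerivAt (fun z : ℝ × ℝ => 2 * z.1) ((2:ℝ) • ContinuousLinearMap.fst ℝ ℝ ℝ) z :=
    hasFDerivAt_fst.const_mul 2
  have h2 : HasFDerivAt (fun z : ℝ × ℝ => 2 * z.2) ((2:ℝ) • ContinuousLinearMap.snd ℝ ℝ ℝ) z :=
    hasFDerivAt_snd.const_mul 2
  have hI := (hasDerivAt_inv h0).comp_hasFDerivAt z hS
  have a1 := (h1.fun_mul hI).fderiv
  have a2 := (h2.fun_mul hI).fderiv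
  simp only [Function.comp_apply] at a1 a2
  unfold lap
  rw [dX_Nl he, dY_Nl he]
  unfold dX dY gx gy
  simp only [div_eq_mul_inv]
  rw [a1, a2]
  simp
  field_simp
  unfold SS; ring

end Gru

end

section
open MeasureTheory Filter Topology Set
open scoped ContDiff

namespace Gru

lemma two_le_inf : (2 : WithTop ℕ∞) ≤ ∞ := WithTop.coe_le_coe.2 (le_top : (2 : ℕ∞) ≤ ⊤)

lemma Pe_test {e : ℝ} (he : 0 < e) : IsTest univ (Pe e) := by
  have := th_test.mul_on (f := Nl e) (fun p _ => smooth_Nl (pos_SSe he p).ne')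
  have e1 : Pe e = fun p => Nl e p * th p := by funext p; exact mul_comm _ _
  rw [e1]; exact this

lemma diff_th (z) : DifferentiableAt ℝ th z := th_smooth.differentiable (by simp) z
lemma diff_Nl {e : ℝ} (he : 0 < e) (z) : DifferentiableAt ℝ (Nl e) z :=
  (smooth_Nl (pos_SSe he z).ne').differentiableAt (by simp)
lemma diff_gx {e : ℝ} (he : 0 < e) (z) : DifferentiableAt ℝ (gx e) z :=
  (smooth_gx (pos_SSe he z).ne').differentiableAt (by simp)
lemma diff_gy {e : ℝ} (he : 0 < e) (z) : DifferentiableAt ℝ (gy e) z :=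
  (smooth_gy (pos_SSe he z).ne').differentiableAt (by simp)
lemma diff_dXth (z) : DifferentiableAt ℝ (dX th) z :=
  th_test.dX.smooth.differentiable (by simp) z
lemma diff_dYth (z) : DifferentiableAt ℝ (dY th) z :=
  th_test.dY.smooth.differentiable (by simp) z

lemma dX_Pe {e : ℝ} (he : 0 < e) : dX (Pe e) = Px e := by
  funext z
  unfold Pe Px
  rw [dX_mul (diff_th z) (diff_Nl he z), dX_Nl he]
lemma dY_Pe {e : ℝ} (he : 0 < e) : dY (Pe e) = Py e := by
  funext z
  unfold Pe Py
  rw [dY_mul (diff_th z) (diff_Nl he z), dY_Nl he]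

lemma lap_Pe {e : ℝ} (he : 0 < e) (z : ℝ × ℝ) :
    lap (Pe e) z = th z * (4 * e / (SS z + e) ^ 2) + ke e z := by
  rw [← lap_Nl he]
  unfold lap
  rw [dX_Pe he, dY_Pe he]
  unfold Px Py
  rw [dX_add ((diff_dXth z).fun_mul (diff_Nl he z)) ((diff_th z).fun_mul (diff_gx he z)),
    dY_add ((diff_dYth z).fun_mul (diff_Nl he z)) ((diff_th z).fun_mul (diff_gy he z)),
    dX_mul (diff_dXth z) (diff_Nl he z), dX_mul (diff_th z) (diff_gx he z),
    dY_mul (diff_dYth z) (diff_Nl he z), dY_mul (diff_th z) (diff_gy he z), dX_Nl he, dY_Nl he]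
  unfold ke lap
  ring

lemma meas_SS : Measurable SS := contDiff_SS.continuous.measurable
lemma meas_Nl (e) : Measurable (Nl e) := Real.measurable_log.comp (meas_SS.add_const e)
lemma meas_gx (e) : Measurable (gx e) :=
  (measurable_fst.const_mul 2).div (meas_SS.add_const e)
lemma meas_gy (e) : Measurable (gy e) :=
  (measurable_snd.const_mul 2).div (meas_SS.add_const e)
lemma meas_Pe (e) : Measurable (Pe e) := th_smooth.continuous.measurable.mul (meas_Nl e)
lemma meas_Px (e) : Measurable (Px e) :=
  (th_test.dX.cont.measurable.mul (meas_Nl e)).add (th_smooth.continuous.measurable.mul (meas_gx e))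
lemma meas_Py (e) : Measurable (Py e) :=
  (th_test.dY.cont.measurable.mul (meas_Nl e)).add (th_smooth.continuous.measurable.mul (meas_gy e))
lemma meas_ke (e) : Measurable (ke e) :=
  (((th_test.dX.cont.measurable.mul (meas_gx e)).add
    (th_test.dY.cont.measurable.mul (meas_gy e))).const_mul 2).add
    (th_test.lap.cont.measurable.mul (meas_Nl e))

/-- bound for compactly supported continuous functions -/
lemma IsTest.bdd {U} {f : ℝ × ℝ → ℝ} (h : IsTest U f) : ∃ C, 0 ≤ C ∧ ∀ z, |f z| ≤ C := by
  obtain ⟨C, hC⟩ := h.cpt.exists_bound_of_continuous h.cont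
  exact ⟨C, (norm_nonneg _).trans (hC 0), hC⟩

lemma ker_bounds : ∃ C, 0 ≤ C ∧ ∀ e : ℝ, 0 ≤ e → e ≤ 1 → ∀ z : ℝ × ℝ, z.1 ≠ 0 → z.2 ≠ 0 →
    |Pe e z| ≤ C * DD z ∧ |Px e z| ≤ C * DD z ∧ |Py e z| ≤ C * DD z ∧ |ke e z| ≤ C * DD z ∧
    (Pe e z) ^ 2 ≤ C * DD z := by
  obtain ⟨C0, hC0, h0⟩ := th_test.bdd
  obtain ⟨C1, hC1, h1⟩ := th_test.dX.bdd
  obtain ⟨C2, hC2, h2⟩ := th_test.dY.bdd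
  obtain ⟨C3, hC3, h3⟩ := th_test.lap.bdd
  refine ⟨36 * (C0 + C1 + C2 + C3 + C0 ^ 2), by positivity, fun e he he1 z z1 z2 => ?_⟩
  by_cases hz : ‖z‖ ≤ 1
  · have hN := Nl_bound he he1 hz z1 z2
    have hN2 := Nl_sq_bound he he1 hz z1 z2
    obtain ⟨hx, hy⟩ := gr_bound he hz z1 z2
    change |gx e z| ≤ _ at hx
    change |gy e z| ≤ _ at hy
    have hD := DD_nonneg z
    have m : ∀ a b c d : ℝ, |a| ≤ c → |b| ≤ d → 0 ≤ c → |a * b| ≤ c * d := by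
      intro a b c d h k hc
      rw [abs_mul]; exact mul_le_mul h k (abs_nonneg _) hc
    have e0 := m _ _ _ _ (h0 z) hN hC0
    have e1 := m _ _ _ _ (h1 z) hN hC1
    have e2 := m _ _ _ _ (h2 z) hN hC2
    have e3 := m _ _ _ _ (h3 z) hN hC3
    have e4 := m _ _ _ _ (h0 z) hx hC0
    have e5 := m _ _ _ _ (h0 z) hy hC0
    have e6 := m _ _ _ _ (h1 z) hx hC1
    have e7 := m _ _ _ _ (h2 z) hy hC2
    have p0 := mul_nonneg hC0 hD
    have p1 := mul_nonneg hC1 hD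
    have p2 := mul_nonneg hC2 hD
    have p3 := mul_nonneg hC3 hD
    have p4 := mul_nonneg (sq_nonneg C0) hD
    refine ⟨?_, ?_, ?_, ?_, ?_⟩
    · unfold Pe; linarith
    · unfold Px; refine (abs_add_le _ _).trans ?_; linarith
    · unfold Py; refine (abs_add_le _ _).trans ?_; linarith
    · unfold ke; refine (abs_add_le _ _).trans ?_
      have := abs_add_le (dX th z * gx e z) (dY th z * gy e z)
      rw [abs_mul 2, abs_two]
      linarith
    · unfold Pe
      have : (th z * Nl e z) ^ 2 ≤ C0 ^ 2 * (36 * DD z) := by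
        rw [mul_pow]
        refine mul_le_mul ?_ hN2 (sq_nonneg _) (sq_nonneg _)
        exact sq_le_sq' (abs_le.1 (h0 z)).1 (abs_le.1 (h0 z)).2
      linarith
  · push Not at hz
    have a0 : th z = 0 := th_zero subset_rfl hz
    have a1 : dX th z = 0 := th_zero (tsupp_dX _) hz
    have a2 : dY th z = 0 := th_zero (tsupp_dY _) hz
    have a3 : lap th z = 0 := th_zero (ts_lap _) hz
    have := DD_nonneg z
    have : 0 ≤ 36 * (C0 + C1 + C2 + C3 + C0 ^ 2) * DD z := by positivity
    simp only [Pe, Px, Py, ke, a0, a1, a2, a3]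
    simp [this]

/-- outside of the unit ball the kernels vanish -/
lemma ker_zero (e : ℝ) {z : ℝ × ℝ} (hz : 1 < ‖z‖) : Pe e z = 0 ∧ Px e z = 0 ∧ Py e z = 0 ∧ ke e z = 0 := by
    have a0 : th z = 0 := th_zero subset_rfl hz
    have a1 : dX th z = 0 := th_zero (tsupp_dX _) hz
    have a2 : dY th z = 0 := th_zero (tsupp_dY _) hz
    have a3 : lap th z = 0 := th_zero (ts_lap _) hz
    simp [Pe, Px, Py, ke, a0, a1, a2, a3]

lemma SS_pos {z : ℝ × ℝ} (h : z.1 ≠ 0) : 0 < SS z := by unfold SS; positivity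

lemma ker_tendsto {z : ℝ × ℝ} (h : z.1 ≠ 0) :
   Tendsto (fun e => Pe e z) (𝓝[>] 0) (𝓝 (Pe 0 z)) ∧ Tendsto (fun e => Px e z) (𝓝[>] 0) (𝓝 (Px 0 z)) ∧
   Tendsto (fun e => Py e z) (𝓝[>] 0) (𝓝 (Py 0 z)) ∧ Tendsto (fun e => ke e z) (𝓝[>] 0) (𝓝 (ke 0 z)) := by
  have hS := SS_pos h
  have a : Tendsto (fun e => SS z + e) (𝓝[>] 0) (𝓝 (SS z + 0)) :=
    (Continuous.tendsto (by fun_prop) 0).mono_left nhdsWithin_le_nhds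
  have hne : SS z + 0 ≠ 0 := by linarith
  have n : Tendsto (fun e => Nl e z) (𝓝[>] 0) (𝓝 (Nl 0 z)) := a.log hne
  have x : Tendsto (fun e => gx e z) (𝓝[>] 0) (𝓝 (gx 0 z)) := tendsto_const_nhds.div a hne
  have y : Tendsto (fun e => gy e z) (𝓝[>] 0) (𝓝 (gy 0 z)) := tendsto_const_nhds.div a hne
  exact ⟨n.const_mul _, (n.const_mul _).add (x.const_mul _), (n.const_mul _).add (y.const_mul _),
    (((x.const_mul _).add (y.const_mul _)).const_mul _).add (n.const_mul _)⟩

lemma ev01 : ∀ᶠ e : ℝ in 𝓝[>] 0, 0 < e ∧ e ≤ 1 := by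
  have := Ioc_mem_nhdsGT (show (0:ℝ) < 1 by norm_num)
  filter_upwards [this] with e he using he

lemma int_of_bound {k : ℝ × ℝ → ℝ} (hk : Measurable k) {C : ℝ}
    (h : ∀ z : ℝ × ℝ, z.1 ≠ 0 → z.2 ≠ 0 → |k z| ≤ C * DD z) : Integrable k := by
  refine (DD_int.const_mul C).mono' hk.aestronglyMeasurable ?_
  filter_upwards [ae_ne] with z hz using h z hz.1 hz.2

lemma conv_L1 {k : ℝ → ℝ × ℝ → ℝ} (hk : ∀ e, Measurable (k e)) {C : ℝ}
    (h : ∀ e : ℝ, 0 ≤ e → e ≤ 1 → ∀ z : ℝ × ℝ, z.1 ≠ 0 → z.2 ≠ 0 → |k e z| ≤ C * DD z)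
    (ht : ∀ z : ℝ × ℝ, z.1 ≠ 0 → Tendsto (fun e => k e z) (𝓝[>] 0) (𝓝 (k 0 z))) :
    Tendsto (fun e => ∫ z, |k e z - k 0 z|) (𝓝[>] 0) (𝓝 0) := by
  have : Tendsto (fun e => ∫ z, |k e z - k 0 z|) (𝓝[>] 0) (𝓝 (∫ z : ℝ × ℝ, (0:ℝ))) := by
    refine tendsto_integral_filter_of_dominated_convergence (fun z => 2 * C * DD z) ?_ ?_ ?_ ?_
    · exact Eventually.of_forall fun e =>
        (((hk e).sub (hk 0)).abs).aestronglyMeasurable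
    · filter_upwards [ev01] with e he
      filter_upwards [ae_ne] with z hz
      rw [Real.norm_eq_abs, abs_abs]
      have a := h e he.1.le he.2 z hz.1 hz.2
      have b := h 0 le_rfl (by norm_num) z hz.1 hz.2
      have := abs_sub (k e z) (k 0 z)
      linarith
    · exact DD_int.const_mul _
    · filter_upwards [ae_ne] with z hz
      have := ((ht z hz.1).sub_const (k 0 z)).abs
      simpa using this
  simpa using this

lemma conv_L2 {k : ℝ → ℝ × ℝ → ℝ} (hk : ∀ e, Measurable (k e)) {C : ℝ}
    (h : ∀ e : ℝ, 0 ≤ e → e ≤ 1 → ∀ z : ℝ × ℝ, z.1 ≠ 0 → z.2 ≠ 0 → (k e z) ^ 2 ≤ C * DD z)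
    (ht : ∀ z : ℝ × ℝ, z.1 ≠ 0 → Tendsto (fun e => k e z) (𝓝[>] 0) (𝓝 (k 0 z))) :
    Tendsto (fun e => ∫ z, (k e z - k 0 z) ^ 2) (𝓝[>] 0) (𝓝 0) := by
  have : Tendsto (fun e => ∫ z, (k e z - k 0 z) ^ 2) (𝓝[>] 0) (𝓝 (∫ z : ℝ × ℝ, (0:ℝ))) := by
    refine tendsto_integral_filter_of_dominated_convergence (fun z => 4 * C * DD z) ?_ ?_ ?_ ?_
    · exact Eventually.of_forall fun e =>
        (((hk e).sub (hk 0)).pow_const 2).aestronglyMeasurable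
    · filter_upwards [ev01] with e he
      filter_upwards [ae_ne] with z hz
      rw [Real.norm_eq_abs, abs_of_nonneg (sq_nonneg _)]
      have a := h e he.1.le he.2 z hz.1 hz.2
      have b := h 0 le_rfl (by norm_num) z hz.1 hz.2
      nlinarith [sq_nonneg (k e z + k 0 z)]
    · exact DD_int.const_mul _
    · filter_upwards [ae_ne] with z hz
      have := ((ht z hz.1).sub_const (k 0 z)).pow 2
      simpa using this
  simpa using this

noncomputable def AA : ℝ := ∫ w : ℝ × ℝ, 4 / (SS w + 1) ^ 2

lemma AA_intble : Integrable (fun w : ℝ × ℝ => 4 / (SS w + 1) ^ 2) := by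
  have h := (Integrable.mul_prod integrable_inv_one_add_sq integrable_inv_one_add_sq
     (μ := (volume : Measure ℝ)) (ν := (volume : Measure ℝ))).const_mul 4
  refine h.mono' ?_ ?_
  · exact (measurable_const.div ((meas_SS.add_const 1).pow_const 2)).aestronglyMeasurable
  · refine Eventually.of_forall fun w => ?_
    rw [Real.norm_eq_abs, abs_of_nonneg (by positivity), div_eq_mul_inv, ← mul_inv]
    refine mul_le_mul_of_nonneg_left ?_ (by norm_num)
    refine inv_anti₀ (by positivity) ?_
    unfold SS
    nlinarith [sq_nonneg (w.1), sq_nonneg w.2, sq_nonneg (w.1 * w.2), sq_nonneg (w.1^2), sq_nonneg (w.2^2)]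

lemma AA_pos : 0 < AA := by
  unfold AA
  have hp : ∀ w : ℝ × ℝ, 0 < 4 / (SS w + 1) ^ 2 := fun w => by
    have := SS_nonneg w; positivity
  rw [integral_pos_iff_support_of_nonneg (fun w => (hp w).le) AA_intble]
  have : Function.support (fun w : ℝ × ℝ => 4 / (SS w + 1) ^ 2) = univ := by
    ext w; simp only [Function.mem_support, mem_univ, iff_true]; exact (hp w).ne'
  rw [this]; simp

/-- the approximate delta -/
lemma delta_tendsto {f : ℝ × ℝ → ℝ} (hf : Continuous f) (hc : HasCompactSupport f) :
    Tendsto (fun e => ∫ z, f z * (4 * e / (SS z + e) ^ 2)) (𝓝[>] 0) (𝓝 (f 0 * AA)) := by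
  obtain ⟨C, hC⟩ := hc.exists_bound_of_continuous hf
  have key : ∀ e : ℝ, 0 < e → ∫ z, f z * (4 * e / (SS z + e) ^ 2) =
      ∫ w : ℝ × ℝ, f (Real.sqrt e • w) * (4 / (SS w + 1) ^ 2) := by
    intro e he
    have hs : 0 < Real.sqrt e := Real.sqrt_pos.2 he
    have hq : Real.sqrt e ^ 2 = e := Real.sq_sqrt he.le
    have := Measure.integral_comp_smul (volume : Measure (ℝ × ℝ))
      (fun z => f z * (4 * e / (SS z + e) ^ 2)) (Real.sqrt e)
    rw [Module.finrank_prod, Module.finrank_self, show (1 + 1 : ℕ) = 2 from rfl, hq,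
      abs_of_pos (by positivity), smul_eq_mul] at this
    have h2 : ∫ z, f z * (4 * e / (SS z + e) ^ 2) =
      e * ∫ w : ℝ × ℝ, f (Real.sqrt e • w) * (4 * e / (SS (Real.sqrt e • w) + e) ^ 2) := by
      rw [this, ← mul_assoc, mul_inv_cancel₀ he.ne', one_mul]
    rw [h2, ← integral_const_mul]
    congr 1; funext w
    have : SS (Real.sqrt e • w) = e * SS w := by
      simp only [SS, Prod.smul_fst, Prod.smul_snd, smul_eq_mul, mul_pow, hq]; ring
    rw [this]
    have := SS_nonneg w
    have : SS w + 1 ≠ 0 := by positivity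
    field_simp
  have lim : Tendsto (fun e => ∫ w : ℝ × ℝ, f (Real.sqrt e • w) * (4 / (SS w + 1) ^ 2)) (𝓝[>] 0)
      (𝓝 (∫ w : ℝ × ℝ, f 0 * (4 / (SS w + 1) ^ 2))) := by
    refine tendsto_integral_filter_of_dominated_convergence
      (fun w => C * (4 / (SS w + 1) ^ 2)) ?_ ?_ ?_ ?_
    · refine Eventually.of_forall fun e => ?_
      exact ((hf.comp (continuous_const_smul _)).measurable.mul
        (measurable_const.div ((meas_SS.add_const 1).pow_const 2))).aestronglyMeasurable
    · refine Eventually.of_forall fun e => Eventually.of_forall fun w => ?_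
      rw [norm_mul, Real.norm_of_nonneg (by positivity : 0 ≤ 4 / (SS w + 1) ^ 2)]
      exact mul_le_mul_of_nonneg_right (hC _) (by positivity)
    · exact AA_intble.const_mul _
    · refine Eventually.of_forall fun w => ?_
      refine Tendsto.mul_const _ ?_
      have : Tendsto (fun e : ℝ => f (Real.sqrt e • w)) (𝓝 0) (𝓝 (f (Real.sqrt 0 • w))) :=
        Continuous.tendsto (hf.comp (Real.continuous_sqrt.smul continuous_const)) 0
      simp at this
      exact this.mono_left nhdsWithin_le_nhds
  rw [integral_const_mul] at lim
  refine lim.congr' ?_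
  filter_upwards [self_mem_nhdsWithin] with e he
  exact (key e he).symm

lemma int_mul_tendsto {k : ℝ → ℝ × ℝ → ℝ} (hk : ∀ e, Measurable (k e)) {C : ℝ}
    (h : ∀ e : ℝ, 0 ≤ e → e ≤ 1 → ∀ z : ℝ × ℝ, z.1 ≠ 0 → z.2 ≠ 0 → |k e z| ≤ C * DD z)
    (ht : ∀ z : ℝ × ℝ, z.1 ≠ 0 → Tendsto (fun e => k e z) (𝓝[>] 0) (𝓝 (k 0 z)))
    {f : ℝ × ℝ → ℝ} (hf : Continuous f) (hc : HasCompactSupport f) :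
    Tendsto (fun e => ∫ z, k e z * f z) (𝓝[>] 0) (𝓝 (∫ z, k 0 z * f z)) := by
  obtain ⟨M, hM⟩ := hc.exists_bound_of_continuous hf
  refine tendsto_integral_filter_of_dominated_convergence (fun z => C * DD z * M) ?_ ?_ ?_ ?_
  · exact Eventually.of_forall fun e => ((hk e).mul hf.measurable).aestronglyMeasurable
  · filter_upwards [ev01] with e he
    filter_upwards [ae_ne] with z hz
    rw [norm_mul]
    have a := h e he.1.le he.2 z hz.1 hz.2
    exact mul_le_mul a (hM z) (norm_nonneg _) ((abs_nonneg _).trans a)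
  · exact (DD_int.const_mul _).mul_const _
  · filter_upwards [ae_ne] with z hz
    exact (ht z hz.1).mul_const _

/-- fundamental identity -/
lemma fund_id {f : ℝ × ℝ → ℝ} (hf : ContDiff ℝ ∞ f) (hc : HasCompactSupport f) :
    ∫ z, Pe 0 z * lap f z = AA * f 0 + ∫ z, ke 0 z * f z := by
  obtain ⟨C, hC, hb⟩ := ker_bounds
  have hft : IsTest univ f := ⟨hf, hc, subset_univ _⟩
  have l1 := int_mul_tendsto meas_Pe (fun e h h' z z1 z2 => (hb e h h' z z1 z2).1)
    (fun z hz => (ker_tendsto hz).1) hft.lap.cont hft.lap.cpt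
  have l2 := int_mul_tendsto meas_ke (fun e h h' z z1 z2 => (hb e h h' z z1 z2).2.2.2.1)
    (fun z hz => (ker_tendsto hz).2.2.2) hf.continuous hc
  have l3 := delta_tendsto (th_smooth.continuous.mul hf.continuous) (hc.mul_left (f := th))
  have t0 : th 0 = 1 := th.one_of_mem_closedBall (by simp [th.rIn_pos.le])
  refine tendsto_nhds_unique l1 ?_
  have := l3.add l2
  simp only [Pi.mul_apply, t0, one_mul, mul_comm (f 0)] at this
  refine this.congr' ?_
  filter_upwards [ev01] with e he
  have hs := int_lap_symm (f := Pe e) (g := f) ((Pe_test he.1).smooth.of_le two_le_inf)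
    (hf.of_le two_le_inf) hc
  rw [hs, ← integral_add]
  · congr 1; funext z
    rw [lap_Pe he.1]; ring
  · refine Continuous.integrable_of_hasCompactSupport ?_ ?_
    · refine (th_smooth.continuous.mul hf.continuous).mul ?_
      exact continuous_const.div ((contDiff_SS.continuous.add continuous_const).pow 2)
        (fun z => by have := pos_SSe he.1 z; positivity)
    · exact (hc.mul_left (f := th)).mul_right
  · have : Integrable (ke e) := int_of_bound (meas_ke e)
      (fun z z1 z2 => (hb e he.1.le he.2 z z1 z2).2.2.2.1)
    obtain ⟨M, _, hM⟩ := hft.bdd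
    exact this.mul_bdd (c := M) hf.continuous.aestronglyMeasurable (Eventually.of_forall hM)

end Gru

end

section
open MeasureTheory Filter Topology Set
open scoped ContDiff

namespace Gru

/-- convolution -/
noncomputable def cv (k f : ℝ × ℝ → ℝ) (p : ℝ × ℝ) : ℝ := ∫ z, k z * f (p - z)

lemma cv_conv (k f : ℝ × ℝ → ℝ) : cv k f = convolution k f (ContinuousLinearMap.mul ℝ ℝ) volume := rfl

lemma cv_comm (k f : ℝ × ℝ → ℝ) : cv k f = cv f k := by
  funext p
  unfold cv
  rw [← integral_sub_left_eq_self (fun z => k z * f (p - z)) volume p]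
  congr 1; funext z; simp [mul_comm]

noncomputable def mk (a b : ℝ) : ℝ × ℝ →L[ℝ] ℝ :=
  a • ContinuousLinearMap.fst ℝ ℝ ℝ + b • ContinuousLinearMap.snd ℝ ℝ ℝ

lemma clm_eq_mk (L : ℝ × ℝ →L[ℝ] ℝ) : L = mk (L (1,0)) (L (0,1)) := by
  ext <;> simp [mk]

lemma mk_contDiff {n : WithTop ℕ∞} {a b : ℝ × ℝ → ℝ} (ha : ContDiff ℝ n a) (hb : ContDiff ℝ n b) :
    ContDiff ℝ n (fun p => mk (a p) (b p)) := by
  unfold mk; fun_prop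

lemma cv_hasFDerivAt {k g : ℝ × ℝ → ℝ} (hk : LocallyIntegrable k) (hg : ContDiff ℝ 1 g)
    (hc : HasCompactSupport g) (p : ℝ × ℝ) :
    HasFDerivAt (cv k g) (mk (cv k (dX g) p) (cv k (dY g) p)) p := by
  have h := HasCompactSupport.hasFDerivAt_convolution_right (ContinuousLinearMap.mul ℝ ℝ) hc hk hg p
  rw [cv_conv]
  refine h.congr_fderiv ?_
  rw [clm_eq_mk (convolution _ _ _ _ _)]
  rw [convolution_precompR_apply _ hk (hc.fderiv (𝕜 := ℝ)) (hg.continuous_fderiv (by simp)),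
    convolution_precompR_apply _ hk (hc.fderiv (𝕜 := ℝ)) (hg.continuous_fderiv (by simp))]
  rfl

lemma mk_apply (a b : ℝ) (v : ℝ × ℝ) : mk a b v = a * v.1 + b * v.2 := by simp [mk]

lemma dX_cv {k g : ℝ × ℝ → ℝ} (hk : LocallyIntegrable k) (hg : ContDiff ℝ 1 g)
    (hc : HasCompactSupport g) : dX (cv k g) = cv k (dX g) := by
  funext p; simp [dX, (cv_hasFDerivAt hk hg hc p).fderiv, mk_apply]
lemma dY_cv {k g : ℝ × ℝ → ℝ} (hk : LocallyIntegrable k) (hg : ContDiff ℝ 1 g)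
    (hc : HasCompactSupport g) : dY (cv k g) = cv k (dY g) := by
  funext p; simp [dY, (cv_hasFDerivAt hk hg hc p).fderiv, mk_apply]

lemma cv_smooth {k g : ℝ × ℝ → ℝ} (hk : LocallyIntegrable k) (hg : ContDiff ℝ ∞ g)
    (hc : HasCompactSupport g) : ContDiff ℝ ∞ (cv k g) :=
  HasCompactSupport.contDiff_convolution_right (ContinuousLinearMap.mul ℝ ℝ) hc hk hg

lemma cv_cont {k g : ℝ × ℝ → ℝ} (hk : LocallyIntegrable k) (hg : Continuous g)
    (hc : HasCompactSupport g) : Continuous (cv k g) :=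
  HasCompactSupport.continuous_convolution_right (ContinuousLinearMap.mul ℝ ℝ) hc hk hg

/-- Cauchy-Schwarz -/
lemma CS {α : Type*} [MeasurableSpace α] {μ : Measure α} {f g : α → ℝ} (hf : MemLp f 2 μ) (hg : MemLp g 2 μ) :
    |∫ z, f z * g z ∂μ| ≤ Real.sqrt (∫ z, f z ^ 2 ∂μ) * Real.sqrt (∫ z, g z ^ 2 ∂μ) := by
  have h := integral_mul_norm_le_Lp_mul_Lq (μ := μ) (f := f) (g := g) (p := 2) (q := 2)
    (Real.HolderConjugate.two_two) (by simpa using hf) (by simpa using hg)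
  simp only [Real.norm_eq_abs, Real.rpow_two, sq_abs, ← Real.sqrt_eq_rpow] at h
  refine le_trans ?_ h
  refine (abs_integral_le_integral_abs).trans (le_of_eq ?_)
  simp [abs_mul]

lemma memLp_shift {f : ℝ × ℝ → ℝ} (hf : MemLp f 2 volume) (p : ℝ × ℝ) :
    MemLp (fun z => f (p - z)) 2 volume :=
  hf.comp_measurePreserving (Measure.measurePreserving_sub_left volume p)

lemma cv_CS {k f : ℝ × ℝ → ℝ} (hk : MemLp k 2 volume) (hf : MemLp f 2 volume) (p : ℝ × ℝ) :
    |cv k f p| ≤ Real.sqrt (∫ z, k z ^ 2) * Real.sqrt (∫ z, f z ^ 2) := by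
  have := CS hk (memLp_shift hf p)
  rwa [integral_sub_left_eq_self (fun z => f z ^ 2) volume p] at this

lemma cv_exists {k f : ℝ × ℝ → ℝ} (hk : MemLp k 2 volume) (hf : MemLp f 2 volume) (p : ℝ × ℝ) :
    Integrable (fun z => k z * f (p - z)) :=
  hk.integrable_mul (memLp_shift hf p)

lemma memLp_of_sq {f : ℝ × ℝ → ℝ} (hf : AEStronglyMeasurable f volume) (h : Integrable (fun z => f z ^ 2)) :
    MemLp f 2 volume := (memLp_two_iff_integrable_sq hf).2 h

lemma P_memLp {e : ℝ} (he : 0 ≤ e) (he1 : e ≤ 1) : MemLp (Pe e) 2 volume := by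
  obtain ⟨C, hC, hb⟩ := ker_bounds
  refine memLp_of_sq (meas_Pe e).aestronglyMeasurable (int_of_bound ((meas_Pe e).pow_const 2) (C := C) ?_)
  intro z z1 z2
  rw [abs_of_nonneg (sq_nonneg _)]
  exact (hb e he he1 z z1 z2).2.2.2.2

lemma ker_int : ∀ e : ℝ, 0 ≤ e → e ≤ 1 → Integrable (Pe e) ∧ Integrable (Px e) ∧ Integrable (Py e) := by
  obtain ⟨C, hC, hb⟩ := ker_bounds
  intro e h h'
  exact ⟨int_of_bound (meas_Pe e) fun z z1 z2 => (hb e h h' z z1 z2).1,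
    int_of_bound (meas_Px e) fun z z1 z2 => (hb e h h' z z1 z2).2.1,
    int_of_bound (meas_Py e) fun z z1 z2 => (hb e h h' z z1 z2).2.2.1⟩

lemma memLp_locInt {f : ℝ × ℝ → ℝ} (hf : MemLp f 2 volume) : LocallyIntegrable f :=
  hf.locallyIntegrable (by norm_num)

/-- potential of an L² function is continuous -/
lemma cvP_cont {F : ℝ × ℝ → ℝ} (hF : MemLp F 2 volume) : Continuous (cv (Pe 0) F) := by
  obtain ⟨C, hC, hb⟩ := ker_bounds
  have hl := conv_L2 meas_Pe (fun e h h' z z1 z2 => (hb e h h' z z1 z2).2.2.2.2)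
    (fun z hz => (ker_tendsto hz).1)
  have hu : TendstoUniformly (fun e => cv (Pe e) F) (cv (Pe 0) F) (𝓝[>] 0) := by
    rw [Metric.tendstoUniformly_iff]
    intro ε hε
    have h1 : Tendsto (fun e => Real.sqrt (∫ z, (Pe e z - Pe 0 z) ^ 2) * Real.sqrt (∫ z, F z ^ 2)) (𝓝[>] 0)
        (𝓝 0) := by
      have := (hl.sqrt).mul_const (Real.sqrt (∫ z, F z ^ 2))
      simpa using this
    filter_upwards [h1.eventually (gt_mem_nhds hε), ev01] with e he h01 p
    refine lt_of_le_of_lt ?_ he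
    have hd : MemLp (fun z => Pe e z - Pe 0 z) 2 volume :=
      (P_memLp h01.1.le h01.2).sub (P_memLp le_rfl (by norm_num))
    have := cv_CS hd hF p
    refine le_trans (le_of_eq ?_) this
    rw [dist_comm, Real.dist_eq]
    congr 1
    unfold cv
    rw [← integral_sub (cv_exists (P_memLp h01.1.le h01.2) hF p)
      (cv_exists (P_memLp le_rfl (by norm_num)) hF p)]
    congr 1; funext z; ring
  refine hu.continuous ?_
  refine Eventually.frequently ?_
  filter_upwards [ev01] with e he
  rw [cv_comm]
  exact cv_cont (memLp_locInt hF) (Pe_test he.1).cont (Pe_test he.1).cpt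

lemma cv_unif {k : ℝ → ℝ × ℝ → ℝ} (hki : ∀ e : ℝ, 0 ≤ e → e ≤ 1 → Integrable (k e))
    (hl : Tendsto (fun e => ∫ z, |k e z - k 0 z|) (𝓝[>] 0) (𝓝 0))
    {f : ℝ × ℝ → ℝ} (hf : Continuous f) (hc : HasCompactSupport f) :
    TendstoUniformly (fun e => cv (k e) f) (cv (k 0) f) (𝓝[>] 0) := by
  obtain ⟨M, hM⟩ := hc.exists_bound_of_continuous hf
  rw [Metric.tendstoUniformly_iff]
  intro ε hε
  have h1 : Tendsto (fun e => (∫ z, |k e z - k 0 z|) * M) (𝓝[>] 0) (𝓝 0) := by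
    simpa using hl.mul_const M
  have ex : ∀ e : ℝ, 0 ≤ e → e ≤ 1 → ∀ p, Integrable (fun z => k e z * f (p - z)) := by
    intro e h h' p
    refine (hki e h h').mul_bdd (c := M) ?_ (Eventually.of_forall fun z => hM _)
    exact (hf.comp (by fun_prop)).aestronglyMeasurable
  filter_upwards [h1.eventually (gt_mem_nhds hε), ev01] with e he h01 p
  refine lt_of_le_of_lt ?_ he
  rw [dist_comm, Real.dist_eq]
  unfold cv
  rw [← integral_sub (ex e h01.1.le h01.2 p) (ex 0 le_rfl (by norm_num) p), ← integral_mul_const]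
  refine (abs_integral_le_integral_abs).trans ?_
  refine integral_mono ?_ ?_ ?_
  · exact ((ex e h01.1.le h01.2 p).sub (ex 0 le_rfl (by norm_num) p)).abs
  · exact (((hki e h01.1.le h01.2).sub (hki 0 le_rfl (by norm_num))).abs).mul_const M
  · intro z
    simp only [← sub_mul, abs_mul]
    exact mul_le_mul_of_nonneg_left (hM _) (abs_nonneg _)

lemma en_pos (n : ℕ) : (0:ℝ) < 1 / ((n:ℝ) + 1) ∧ 1 / ((n:ℝ) + 1) ≤ 1 := by
  refine ⟨by positivity, ?_⟩
  rw [div_le_one (by positivity)]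
  have : (0:ℝ) ≤ n := by positivity
  linarith
lemma en_tendsto : Tendsto (fun n : ℕ => 1 / ((n:ℝ) + 1)) atTop (𝓝[>] 0) := by
  rw [tendsto_nhdsWithin_iff]
  exact ⟨tendsto_one_div_add_atTop_nhds_zero_nat, Eventually.of_forall fun n => (en_pos n).1⟩

lemma mk_unif {ι : Type*} {l : Filter ι} {A B : ι → ℝ × ℝ → ℝ} {a b : ℝ × ℝ → ℝ} (hA : TendstoUniformly A a l)
   (hB : TendstoUniformly B b l) : TendstoUniformly (fun i p => mk (A i p) (B i p)) (fun p => mk (a p) (b p)) l := by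
  have hm : UniformContinuous (fun q : ℝ × ℝ => mk q.1 q.2) := by
    have : (fun q : ℝ × ℝ => mk q.1 q.2) =
      ((ContinuousLinearMap.fst ℝ ℝ ℝ).smulRight (ContinuousLinearMap.fst ℝ ℝ ℝ) +
      (ContinuousLinearMap.snd ℝ ℝ ℝ).smulRight (ContinuousLinearMap.snd ℝ ℝ ℝ) : ℝ × ℝ →L[ℝ] (ℝ × ℝ →L[ℝ] ℝ)) := by
      funext q; simp [mk]
    rw [this]; exact ContinuousLinearMap.uniformContinuous _
  have := hm.comp_tendstoUniformly (hA.prodMk hB)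
  intro v hv
  exact (tendsto_id.prodMk tendsto_id).eventually (this v hv)

/-- potential of a continuous compactly supported function is C¹ -/
lemma cvP_C1 {f : ℝ × ℝ → ℝ} (hf : Continuous f) (hc : HasCompactSupport f) :
    ContDiff ℝ 1 (cv (Pe 0) f) := by
  obtain ⟨C, hC, hb⟩ := ker_bounds
  have l0 := conv_L1 meas_Pe (fun e h h' z z1 z2 => (hb e h h' z z1 z2).1) (fun z hz => (ker_tendsto hz).1)
  have l1 := conv_L1 meas_Px (fun e h h' z z1 z2 => (hb e h h' z z1 z2).2.1) (fun z hz => (ker_tendsto hz).2.1)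
  have l2 := conv_L1 meas_Py (fun e h h' z z1 z2 => (hb e h h' z z1 z2).2.2.1)
    (fun z hz => (ker_tendsto hz).2.2.1)
  have u0 := cv_unif (fun e h h' => (ker_int e h h').1) l0 hf hc
  have u1 := cv_unif (fun e h h' => (ker_int e h h').2.1) l1 hf hc
  have u2 := cv_unif (fun e h h' => (ker_int e h h').2.2) l2 hf hc
  have hfl : LocallyIntegrable f := hf.locallyIntegrable
  rw [contDiff_one_iff_hasFDerivAt]
  refine ⟨fun p => mk (cv (Px 0) f p) (cv (Py 0) f p), ?_, ?_⟩
  · have k1 : ∀ᶠ e in 𝓝[>] (0:ℝ), Continuous (cv (Px e) f) := by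
      filter_upwards [ev01] with e he
      rw [cv_comm, ← dX_Pe he.1]
      exact cv_cont hfl (Pe_test he.1).dX.cont (Pe_test he.1).dX.cpt
    have k2 : ∀ᶠ e in 𝓝[>] (0:ℝ), Continuous (cv (Py e) f) := by
      filter_upwards [ev01] with e he
      rw [cv_comm, ← dY_Pe he.1]
      exact cv_cont hfl (Pe_test he.1).dY.cont (Pe_test he.1).dY.cpt
    exact contDiff_zero.1 (mk_contDiff (contDiff_zero.2 (u1.continuous k1.frequently))
      (contDiff_zero.2 (u2.continuous k2.frequently)))
  · intro p
    have hU : TendstoUniformly (fun (n : ℕ) p => mk (cv (Px (1 / ((n:ℝ) + 1))) f p) (cv (Py (1 / ((n:ℝ) + 1))) f p))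
        (fun p => mk (cv (Px 0) f p) (cv (Py 0) f p)) atTop := by
      have := mk_unif u1 u2
      intro v hv
      exact en_tendsto.eventually (this v hv)
    refine hasFDerivAt_of_tendstoUniformly (f := fun (n:ℕ) => cv (Pe (1 / ((n:ℝ) + 1))) f) hU ?_ ?_ p
    · intro n q
      have h := (en_pos n).1
      have := cv_hasFDerivAt hfl ((Pe_test h).smooth.of_le (by simp)) (Pe_test h).cpt q
      rw [dX_Pe h, dY_Pe h] at this
      rw [cv_comm (Pe _), cv_comm (Px _), cv_comm (Py _)]
      exact this
    · intro q
      exact (u0.tendsto_at q).comp en_tendsto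

lemma P0_locInt : LocallyIntegrable (Pe 0) := (ker_int 0 le_rfl (by norm_num)).1.locallyIntegrable

lemma cvP_C2 {f : ℝ × ℝ → ℝ} (hf : ContDiff ℝ 1 f) (hc : HasCompactSupport f) :
    ContDiff ℝ 2 (cv (Pe 0) f) := by
  have : ContDiff ℝ ((1:ℕ) + 1) (cv (Pe 0) f) := by
    rw [contDiff_succ_iff_hasFDerivAt]
    refine ⟨fun p => mk (cv (Pe 0) (dX f) p) (cv (Pe 0) (dY f) p), ?_, fun p => cv_hasFDerivAt P0_locInt hf hc p⟩
    exact mk_contDiff (cvP_C1 (contDiff_dX (m := 0) hf (by simp)).continuous (cpt_dX hc))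
      (cvP_C1 (contDiff_dY (m := 0) hf (by simp)).continuous (cpt_dY hc))
  convert this using 1
  norm_num

end Gru

end

section
open MeasureTheory Filter Topology Set
open scoped ContDiff

namespace Gru

lemma th_ev : (th : ℝ × ℝ → ℝ) =ᶠ[𝓝 0] fun _ => 1 := th.eventuallyEq_one

lemma dX_ev {f g : ℝ × ℝ → ℝ} {p} (h : f =ᶠ[𝓝 p] g) : dX f =ᶠ[𝓝 p] dX g := by
  filter_upwards [h.fderiv (𝕜 := ℝ)] with q hq
  simp [dX, hq]
lemma dY_ev {f g : ℝ × ℝ → ℝ} {p} (h : f =ᶠ[𝓝 p] g) : dY f =ᶠ[𝓝 p] dY g := by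
  filter_upwards [h.fderiv (𝕜 := ℝ)] with q hq
  simp [dY, hq]
lemma dX_const (c : ℝ) : dX (fun _ => c) = fun _ => 0 := by funext p; simp [dX]
lemma dY_const (c : ℝ) : dY (fun _ => c) = fun _ => 0 := by funext p; simp [dY]

lemma ke_smooth : ContDiff ℝ ∞ (ke 0) := by
  rw [contDiff_iff_contDiffAt]
  intro z
  by_cases hz : z = 0
  · subst hz
    have h1 : dX th =ᶠ[𝓝 0] fun _ => 0 := by simpa only [dX_const] using dX_ev th_ev
    have h2 : dY th =ᶠ[𝓝 0] fun _ => 0 := by simpa only [dY_const] using dY_ev th_ev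
    have h3 : dX (dX th) =ᶠ[𝓝 0] fun _ => 0 := by simpa only [dX_const] using dX_ev h1
    have h4 : dY (dY th) =ᶠ[𝓝 0] fun _ => 0 := by simpa only [dY_const] using dY_ev h2
    have : ke 0 =ᶠ[𝓝 0] fun _ => 0 := by
      filter_upwards [h1, h2, h3, h4] with q a b c d
      simp [ke, lap, a, b, c, d]
    exact contDiffAt_const.congr_of_eventuallyEq this
  · have hS : SS z + 0 ≠ 0 := by
      rw [add_zero]
      intro h
      apply hz
      unfold SS at h
      have a : z.1 = 0 := by nlinarith [sq_nonneg z.1, sq_nonneg z.2]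
      have b : z.2 = 0 := by nlinarith [sq_nonneg z.1, sq_nonneg z.2]
      exact Prod.ext a b
    unfold ke
    exact (contDiffAt_const.mul ((th_test.dX.smooth.contDiffAt.mul (smooth_gx hS)).add
      (th_test.dY.smooth.contDiffAt.mul (smooth_gy hS)))).add
      (th_test.lap.smooth.contDiffAt.mul (smooth_Nl hS))

noncomputable def Pr (r : ℝ) (z : ℝ × ℝ) : ℝ := Pe 0 (r⁻¹ • z)
noncomputable def Kr (r : ℝ) (z : ℝ × ℝ) : ℝ := (r ^ 2)⁻¹ * ke 0 (r⁻¹ • z)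

lemma scale_norm {r : ℝ} (hr : 0 < r) {z : ℝ × ℝ} (hz : r < ‖z‖) : 1 < ‖r⁻¹ • z‖ := by
  rw [norm_smul, norm_inv, Real.norm_of_nonneg hr.le, ← div_eq_inv_mul, lt_div_iff₀ hr]; linarith

lemma Pr_zero {r : ℝ} (hr : 0 < r) {z : ℝ × ℝ} (hz : r < ‖z‖) : Pr r z = 0 :=
  (ker_zero 0 (scale_norm hr hz)).1
lemma Kr_zero {r : ℝ} (hr : 0 < r) {z : ℝ × ℝ} (hz : r < ‖z‖) : Kr r z = 0 := by
  simp [Kr, (ker_zero 0 (scale_norm hr hz)).2.2.2]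

lemma Pr_even (r : ℝ) (z : ℝ × ℝ) : Pr r (-z) = Pr r z := by
  simp only [Pr, Pe, smul_neg, Nl, SS, ContDiffBump.neg]; simp

lemma cpt_of_zero {f : ℝ × ℝ → ℝ} {r : ℝ} (h : ∀ z, r < ‖z‖ → f z = 0) : HasCompactSupport f :=
  HasCompactSupport.intro (isCompact_closedBall (0 : ℝ × ℝ) r) (fun z hz => h z (by simpa using hz))

lemma Kr_smooth (r : ℝ) : ContDiff ℝ ∞ (Kr r) := by
  unfold Kr
  exact contDiff_const.mul (ke_smooth.comp (contDiff_const_smul _))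

lemma Kr_test {r : ℝ} (hr : 0 < r) : IsTest univ (Kr r) :=
  ⟨Kr_smooth r, cpt_of_zero (fun _ h => Kr_zero hr h), subset_univ _⟩

lemma scale_int {r : ℝ} (hr : 0 < r) (g : ℝ × ℝ → ℝ) :
    ∫ z, g z = r ^ 2 * ∫ w : ℝ × ℝ, g (r • w) := by
  have := Measure.integral_comp_smul (volume : Measure (ℝ × ℝ)) g r
  rw [Module.finrank_prod, Module.finrank_self, show (1 + 1 : ℕ) = 2 from rfl, 
      abs_of_pos (by positivity), smul_eq_mul] at this
  rw [this, ← mul_assoc, mul_inv_cancel₀ (by positivity), one_mul]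

lemma inv_smul_smul' {r : ℝ} (hr : 0 < r) (w : ℝ × ℝ) : r⁻¹ • r • w = w := inv_smul_smul₀ hr.ne' w

lemma meas_Pr (r) : Measurable (Pr r) := (meas_Pe 0).comp (measurable_const_smul _)

lemma Pr_memLp {r : ℝ} (hr : 0 < r) : MemLp (Pr r) 2 volume := by
  refine memLp_of_sq (meas_Pr r).aestronglyMeasurable ?_
  have := (P_memLp (e := 0) le_rfl (by norm_num)).integrable_sq
  exact (integrable_comp_smul_iff volume (fun z => Pe 0 z ^ 2) (inv_ne_zero hr.ne')).2 this

lemma Pr_sq {r : ℝ} (hr : 0 < r) : ∫ z, Pr r z ^ 2 = r ^ 2 * ∫ z, Pe 0 z ^ 2 := by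
  rw [scale_int hr]; simp only [Pr, inv_smul_smul' hr]

lemma Kr_memLp {r : ℝ} (hr : 0 < r) : MemLp (Kr r) 2 volume :=
  (Kr_test hr).cont.memLp_of_hasCompactSupport (Kr_test hr).cpt

lemma Kr_sq {r : ℝ} (hr : 0 < r) : ∫ z, Kr r z ^ 2 = (r ^ 2)⁻¹ * ∫ z, ke 0 z ^ 2 := by
  rw [scale_int hr]; simp only [Kr, inv_smul_smul' hr, mul_pow]
  rw [integral_const_mul]
  field_simp

lemma Pr_int {r : ℝ} (hr : 0 < r) : Integrable (Pr r) :=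
  (integrable_comp_smul_iff volume (Pe 0) (inv_ne_zero hr.ne')).2 (ker_int 0 le_rfl (by norm_num)).1

lemma dX_aff {f : ℝ × ℝ → ℝ} (hf : Differentiable ℝ f) (c : ℝ × ℝ) (s : ℝ) :
    dX (fun z => f (c + s • z)) = fun z => s * dX f (c + s • z) := by
  funext z
  have h : HasFDerivAt (fun z : ℝ × ℝ => c + s • z) (s • ContinuousLinearMap.id ℝ (ℝ × ℝ)) z :=
    ((hasFDerivAt_id z).const_smul s).const_add c
  have := ((hf (c + s • z)).hasFDerivAt.comp z h).fderiv
  unfold dX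
  rw [show (fun z => f (c + s • z)) = f ∘ (fun z => c + s • z) from rfl, this]
  simp [-Prod.smul_mk]
lemma dY_aff {f : ℝ × ℝ → ℝ} (hf : Differentiable ℝ f) (c : ℝ × ℝ) (s : ℝ) :
    dY (fun z => f (c + s • z)) = fun z => s * dY f (c + s • z) := by
  funext z
  have h : HasFDerivAt (fun z : ℝ × ℝ => c + s • z) (s • ContinuousLinearMap.id ℝ (ℝ × ℝ)) z :=
    ((hasFDerivAt_id z).const_smul s).const_add c
  have := ((hf (c + s • z)).hasFDerivAt.comp z h).fderiv
  unfold dY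
  rw [show (fun z => f (c + s • z)) = f ∘ (fun z => c + s • z) from rfl, this]
  simp [-Prod.smul_mk]

lemma dX_cmul {f : ℝ × ℝ → ℝ} (c : ℝ) {p} (hf : DifferentiableAt ℝ f p) :
    dX (fun z => c * f z) p = c * dX f p := by
  unfold dX; rw [fderiv_const_mul hf]; simp
lemma dY_cmul {f : ℝ × ℝ → ℝ} (c : ℝ) {p} (hf : DifferentiableAt ℝ f p) :
    dY (fun z => c * f z) p = c * dY f p := by
  unfold dY; rw [fderiv_const_mul hf]; simp

lemma lap_aff {f : ℝ × ℝ → ℝ} (hf : ContDiff ℝ ∞ f) (c : ℝ × ℝ) (s : ℝ) (z : ℝ × ℝ) :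
    lap (fun z => f (c + s • z)) z = s ^ 2 * lap f (c + s • z) := by
  have hx : ContDiff ℝ ∞ (dX f) := contDiff_dX hf (by simp)
  have hy : ContDiff ℝ ∞ (dY f) := contDiff_dY hf (by simp)
  have h2 : Differentiable ℝ (fun z : ℝ × ℝ => c + s • z) := by fun_prop
  have hdx : Differentiable ℝ (dX f) := hx.differentiable (by simp)
  have hdy : Differentiable ℝ (dY f) := hy.differentiable (by simp)
  unfold lap
  rw [dX_aff (hf.differentiable (by simp)), dY_aff (hf.differentiable (by simp)),
    dX_cmul (f := fun z => dX f (c + s • z)) _ ((hdx.comp h2) z),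
    dY_cmul (f := fun z => dY f (c + s • z)) _ ((hdy.comp h2) z)]
  have e1 := congrFun (dX_aff hdx c s) z
  have e2 := congrFun (dY_aff hdy c s) z
  rw [e1, e2]
  ring

lemma cvPr_lap {r : ℝ} (hr : 0 < r) {η : ℝ × ℝ → ℝ} (h : ContDiff ℝ ∞ η) (hc : HasCompactSupport η)
    (p : ℝ × ℝ) : cv (Pr r) (lap η) p = AA * η p + cv (Kr r) η p := by
  unfold cv
  rw [scale_int hr, scale_int hr (fun z => Kr r z * η (p - z))]
  simp only [Pr, Kr, inv_smul_smul' hr]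
  have hf : ContDiff ℝ ∞ (fun z : ℝ × ℝ => η (p + (-r) • z)) := h.comp (by fun_prop)
  have hcc : HasCompactSupport (fun z : ℝ × ℝ => η (p + (-r) • z)) := by
    refine HasCompactSupport.comp_isClosedEmbedding hc (g := fun z : ℝ × ℝ => p + (-r) • z) ?_
    exact ((Homeomorph.smulOfNeZero (-r) (by linarith [hr] : (-r) ≠ 0)).trans (Homeomorph.addLeft p)).isClosedEmbedding
  have := fund_id hf hcc
  simp only [lap_aff h] at this
  simp only [smul_zero, add_zero, neg_smul, ← sub_eq_add_neg, neg_sq] at this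
  rw [← integral_const_mul, ← integral_const_mul]
  rw [show (fun a => r ^ 2 * (Pe 0 a * lap η (p - r • a))) = fun z => Pe 0 z * (r ^ 2 * lap η (p - r • z)) by
    funext z; ring, this]
  congr 2; funext z; field_simp

lemma cvPr_scale {r : ℝ} (hr : 0 < r) (f : ℝ × ℝ → ℝ) (p : ℝ × ℝ) :
    cv (Pr r) f p = r ^ 2 * cv (Pe 0) (fun w => f (r • w)) (r⁻¹ • p) := by
  unfold cv
  rw [scale_int hr]
  simp only [Pr, inv_smul_smul' hr, smul_sub, smul_inv_smul₀ hr.ne']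

lemma cpt_scale {r : ℝ} (hr : 0 < r) {f : ℝ × ℝ → ℝ} (hc : HasCompactSupport f) :
    HasCompactSupport (fun w => f (r • w)) :=
  HasCompactSupport.comp_isClosedEmbedding hc (g := fun z : ℝ × ℝ => r • z)
   (Homeomorph.smulOfNeZero r hr.ne').isClosedEmbedding

lemma cvPr_cont {r : ℝ} (hr : 0 < r) {F : ℝ × ℝ → ℝ} (hF : MemLp F 2 volume) : Continuous (cv (Pr r) F) := by
  have h : MemLp (fun w => F (r • w)) 2 volume := by
    have hq : Measure.QuasiMeasurePreserving (fun z : ℝ × ℝ => r • z) volume volume := 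
      by
        refine ⟨measurable_const_smul _, ?_⟩
        rw [Measure.map_addHaar_smul volume hr.ne']
        exact Measure.smul_absolutelyContinuous
    refine memLp_of_sq (hF.aestronglyMeasurable.comp_quasiMeasurePreserving hq) ?_
    exact (integrable_comp_smul_iff volume (fun z => F z ^ 2) hr.ne').2 hF.integrable_sq
  have := (cvP_cont h).comp (continuous_const_smul r⁻¹)
  rw [show cv (Pr r) F = _ from funext (cvPr_scale hr F)]
  exact continuous_const.mul this

lemma cvPr_C1 {r : ℝ} (hr : 0 < r) {f : ℝ × ℝ → ℝ} (hf : Continuous f) (hc : HasCompactSupport f) :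
    ContDiff ℝ 1 (cv (Pr r) f) := by
  rw [show cv (Pr r) f = _ from funext (cvPr_scale hr f)]
  exact contDiff_const.mul ((cvP_C1 (hf.comp (continuous_const_smul r)) (cpt_scale hr hc)).comp
    (contDiff_const_smul r⁻¹))

lemma cvPr_C2 {r : ℝ} (hr : 0 < r) {f : ℝ × ℝ → ℝ} (hf : ContDiff ℝ 1 f) (hc : HasCompactSupport f) :
    ContDiff ℝ 2 (cv (Pr r) f) := by
  rw [show cv (Pr r) f = _ from funext (cvPr_scale hr f)]
  exact contDiff_const.mul ((cvP_C2 (hf.comp (contDiff_const_smul r)) (cpt_scale hr hc)).comp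
    (contDiff_const_smul r⁻¹))

end Gru

end

section
open MeasureTheory Filter Topology Set
open scoped ContDiff

namespace Gru

/-- Fubini for convolution pairing -/
lemma cv_pair {k v η : ℝ × ℝ → ℝ} (hkm : Measurable k) (hk : MemLp k 2 volume) (hv : MemLp v 2 volume)
    (hη : Continuous η) (hc : HasCompactSupport η) :
    ∫ p, v p * cv k η p = ∫ q, η q * cv (fun z => k (-z)) v q := by
  have hshift : ∀ q : ℝ × ℝ, MemLp (fun p => k (p - q)) 2 volume := fun q =>
    hk.comp_measurePreserving (measurePreserving_sub_right volume q)
  have e1 : ∀ p, v p * cv k η p = ∫ q, v p * k (p - q) * η q := by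
    intro p
    rw [cv_comm]; unfold cv
    rw [← integral_const_mul]; congr 1; funext q; ring
  have e2 : ∀ q, η q * cv (fun z => k (-z)) v q = ∫ p, v p * k (p - q) * η q := by
    intro q
    rw [cv_comm]; unfold cv
    rw [← integral_const_mul]; congr 1; funext p; simp; ring
  simp_rw [e1, e2]
  have hm : AEStronglyMeasurable (fun x : (ℝ × ℝ) × (ℝ × ℝ) => v x.1 * k (x.1 - x.2) * η x.2)
      ((volume : Measure (ℝ × ℝ)).prod (volume : Measure (ℝ × ℝ))) := by
    refine (hv.aestronglyMeasurable.comp_fst.mul ?_).mul ?_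
    · exact (hkm.comp (measurable_fst.sub measurable_snd)).aestronglyMeasurable
    · exact (hη.comp continuous_snd).aestronglyMeasurable
  refine integral_integral_swap (f := fun p q => v p * k (p - q) * η q) ?_
  refine (integrable_prod_iff' hm).2 ⟨?_, ?_⟩
  · refine Eventually.of_forall fun q => ?_
    exact (hv.integrable_mul (hshift q)).mul_const (η q)
  · refine Integrable.mono' (g := fun q => Real.sqrt (∫ z, v z ^ 2) * Real.sqrt (∫ z, k z ^ 2) * |η q|)
      ((hη.integrable_of_hasCompactSupport hc).abs.const_mul _) ?_ ?_
    · exact hm.norm.prod_swap.integral_prod_right'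
    · refine Eventually.of_forall fun q => ?_
      rw [Real.norm_of_nonneg (integral_nonneg fun p => norm_nonneg _)]
      simp only [norm_mul, Real.norm_eq_abs]
      rw [integral_mul_const]
      refine mul_le_mul_of_nonneg_right ?_ (abs_nonneg _)
      have := CS hv.norm (hshift q).norm
      simp only [Real.norm_eq_abs, sq_abs] at this
      rw [integral_sub_right_eq_self (fun z => k z ^ 2)] at this
      exact (le_abs_self _).trans this

lemma cv_cpt {k f : ℝ × ℝ → ℝ} (hk : HasCompactSupport k) (hf : HasCompactSupport f) :
    HasCompactSupport (cv k f) := by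
  rw [cv_conv]
  exact HasCompactSupport.convolution (ContinuousLinearMap.mul ℝ ℝ) (μ := volume) hk hf

noncomputable def VV (v F : ℝ × ℝ → ℝ) (r : ℝ) (p : ℝ × ℝ) : ℝ :=
  -(cv (fun z => Kr r (-z)) v p + cv (Pr r) F p) / AA

lemma Kn_test {r : ℝ} (hr : 0 < r) : IsTest univ (fun z => Kr r (-z)) :=
  ⟨(Kr_smooth r).comp contDiff_neg, cpt_of_zero (fun z h => Kr_zero hr (by simpa using h)), subset_univ _⟩

lemma cvK_smooth {r : ℝ} (hr : 0 < r) {v : ℝ × ℝ → ℝ} (hv : MemLp v 2 volume) :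
    ContDiff ℝ ∞ (cv (fun z => Kr r (-z)) v) := by
  rw [cv_comm]
  exact cv_smooth (memLp_locInt hv) (Kn_test hr).smooth (Kn_test hr).cpt

lemma VV_cont {r : ℝ} (hr : 0 < r) {v F : ℝ × ℝ → ℝ} (hv : MemLp v 2 volume) (hF : MemLp F 2 volume) :
    Continuous (VV v F r) :=
  (((cvK_smooth hr hv).continuous.add (cvPr_cont hr hF)).neg).div_const _

lemma cv_test {r : ℝ} (hr : 0 < r) {U : Set (ℝ × ℝ)} {η : ℝ × ℝ → ℝ}
    (h : IsTest {p | r < Metric.infDist p Uᶜ} η) : IsTest U (cv (Pr r) η) := by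
  have hts : ∀ p, p ∉ Metric.cthickening r (tsupport η) → cv (Pr r) η p = 0 := by
    intro p hp
    unfold cv
    have : ∀ z, Pr r z * η (p - z) = 0 := by
      intro z
      by_cases hz : r < ‖z‖
      · rw [Pr_zero hr hz, zero_mul]
      · rw [image_eq_zero_of_notMem_tsupport (f := η) (x := p - z), mul_zero]
        intro hq
        apply hp
        refine Metric.mem_cthickening_of_dist_le p (p - z) r _ hq ?_
        simp; linarith
    simp [this]
  have hcomp : IsCompact (Metric.cthickening r (tsupport η)) :=
    IsCompact.cthickening h.cpt
  refine ⟨cv_smooth (Pr_int hr).locallyIntegrable h.smooth h.cpt, HasCompactSupport.intro hcomp hts, ?_⟩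
  have h1 : tsupport (cv (Pr r) η) ⊆ Metric.cthickening r (tsupport η) := by
    refine closure_minimal ?_ Metric.isClosed_cthickening
    intro p hp
    by_contra hq
    exact hp (hts p hq)
  refine h1.trans ?_
  intro p hp
  rw [IsCompact.cthickening_eq_biUnion_closedBall h.cpt hr.le] at hp
  simp only [mem_iUnion] at hp
  obtain ⟨q, hq, hpq⟩ := hp
  by_contra hpU
  have := h.sub hq
  simp only [mem_ofPred_eq] at this
  have h3 := Metric.infDist_le_dist_of_mem (x := q) (show p ∈ Uᶜ from hpU)
  rw [dist_comm] at h3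
  simp at hpq
  linarith

lemma weak_rep {U : Set (ℝ × ℝ)} {v F : ℝ × ℝ → ℝ} (hv : MemLp v 2 volume) (hF : MemLp F 2 volume)
    (hw : ∀ η, IsTest U η → ∫ p, v p * lap η p = - ∫ p, F p * η p) {r : ℝ} (hr : 0 < r) :
    ∀ᵐ p, p ∈ {p | r < Metric.infDist p Uᶜ} → VV v F r p = v p := by
  have hop : IsOpen {p : ℝ × ℝ | r < Metric.infDist p Uᶜ} :=
    isOpen_lt continuous_const (Metric.continuous_infDist_pt _)
  have hVc := VV_cont hr hv hF
  have hli : LocallyIntegrable (fun p => VV v F r p - v p) := hVc.locallyIntegrable.sub (memLp_locInt hv)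
  have := hop.ae_eq_zero_of_integral_contDiff_smul_eq_zero (μ := volume) (hli.locallyIntegrableOn _) ?_
  · filter_upwards [this] with p hp h
    linarith [hp h]
  intro η hη hc hs
  have hT : IsTest {p | r < Metric.infDist p Uᶜ} η := ⟨hη, hc, hs⟩
  have hξ := cv_test hr hT
  have h1 := hw _ hξ
  have hlap : lap (cv (Pr r) η) = fun p => AA * η p + cv (Kr r) η p := by
    have hl := (Pr_int hr).locallyIntegrable
    funext p
    rw [← cvPr_lap hr hη hc]
    have h1 : (1 : WithTop ℕ∞) ≤ ∞ := by simp
    unfold lap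
    rw [dX_cv hl (hη.of_le h1) hc, dY_cv hl (hη.of_le h1) hc, dX_cv hl (hT.dX.smooth.of_le h1) hT.dX.cpt,
      dY_cv hl (hT.dY.smooth.of_le h1) hT.dY.cpt]
    unfold cv
    rw [← integral_add]
    · congr 1; funext z; ring
    · exact (hT.dX.dX.cpt.convolutionExists_right (ContinuousLinearMap.mul ℝ ℝ) hl hT.dX.dX.cont p)
    · exact (hT.dY.dY.cpt.convolutionExists_right (ContinuousLinearMap.mul ℝ ℝ) hl hT.dY.dY.cont p)
  have hη2 : MemLp η 2 volume := hη.continuous.memLp_of_hasCompactSupport hc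
  have hKη : Integrable (fun p => v p * cv (Kr r) η p) := by
    have : MemLp (cv (Kr r) η) 2 volume := by
      refine (cv_cont (Kr_smooth r).continuous.locallyIntegrable hη.continuous hc).memLp_of_hasCompactSupport ?_
      exact cv_cpt (Kr_test hr).cpt hc
    exact hv.integrable_mul this
  have i3 : Integrable (fun q => v q * (AA * η q)) := hv.integrable_mul (hη2.const_mul AA)
  rw [hlap] at h1
  simp only [mul_add] at h1
  rw [integral_add i3 hKη,
    cv_pair (Kr_smooth r).continuous.measurable (Kr_memLp hr) hv hη.continuous hc,
    cv_pair (meas_Pr r) (Pr_memLp hr) hF hη.continuous hc] at h1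
  simp only [Pr_even] at h1
  have hA := AA_pos
  have i1 : Integrable (fun q => η q * cv (fun z => Kr r (-z)) v q) :=
    (hη.continuous.mul (cvK_smooth hr hv).continuous).integrable_of_hasCompactSupport hc.mul_right
  have i2 : Integrable (fun q => η q * cv (Pr r) F q) :=
    (hη.continuous.mul (cvPr_cont hr hF)).integrable_of_hasCompactSupport hc.mul_right
  have : ∀ p, η p • (VV v F r p - v p) = -(AA)⁻¹ * (v p * (AA * η p) + (η p * cv (fun z => Kr r (-z)) v p
      + η p * cv (Pr r) F p)) := by
    intro p; simp only [VV, smul_eq_mul]; field_simp; ring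
  simp_rw [this]
  change ∫ p, -(AA)⁻¹ * (v p * (AA * η p) + (η p * cv (fun z => Kr r (-z)) v p
      + η p * cv (Pr r) F p)) = 0
  have i4 : Integrable (fun q => η q * cv (fun z => Kr r (-z)) v q + η q * cv (Pr r) F q) := i1.add i2
  rw [integral_const_mul, integral_add i3 i4, integral_add i1 i2]
  rw [mul_eq_zero]; right
  linarith

end Gru

end

section
open MeasureTheory Filter Topology Set
open scoped ContDiff

namespace Gru

/-- cutoff times locally regular function -/
lemma cut_contDiff {n : WithTop ℕ∞} {U : Set (ℝ × ℝ)} (hU : IsOpen U) {χ g : ℝ × ℝ → ℝ} (hχ : ContDiff ℝ n χ)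
    (hs : tsupport χ ⊆ U) (hg : ContDiffOn ℝ n g U) : ContDiff ℝ n (fun p => χ p * g p) := by
  rw [contDiff_iff_contDiffAt]
  intro p
  by_cases hp : p ∈ tsupport χ
  · exact hχ.contDiffAt.mul (hg.contDiffAt (hU.mem_nhds (hs hp)))
  · have : (fun p => χ p * g p) =ᶠ[𝓝 p] fun _ => 0 := by
      filter_upwards [notMem_tsupport_iff_eventuallyEq.1 hp] with q hq
      simp [hq]
    exact contDiffAt_const.congr_of_eventuallyEq this

lemma VV_eq {U : Set (ℝ × ℝ)} {v F : ℝ × ℝ → ℝ} (hv : MemLp v 2 volume) (hF : MemLp F 2 volume)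
    (hw : ∀ η, IsTest U η → ∫ p, v p * lap η p = - ∫ p, F p * η p) {r r' : ℝ} (hr : 0 < r) (hr' : 0 < r')
    {p : ℝ × ℝ} (h : r < Metric.infDist p Uᶜ) (h' : r' < Metric.infDist p Uᶜ) : VV v F r p = VV v F r' p := by
  have hop : IsOpen {p : ℝ × ℝ | max r r' < Metric.infDist p Uᶜ} :=
    isOpen_lt continuous_const (Metric.continuous_infDist_pt _)
  have hae : VV v F r =ᵐ[volume.restrict {p : ℝ × ℝ | max r r' < Metric.infDist p Uᶜ}] VV v F r' := by
    refine (ae_restrict_iff' hop.measurableSet).2 ?_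
    filter_upwards [weak_rep hv hF hw hr, weak_rep hv hF hw hr'] with q h1 h2 hq
    simp only [mem_ofPred_eq, max_lt_iff] at hq h1 h2
    rw [h1 hq.1, h2 hq.2]
  exact MeasureTheory.Measure.eqOn_open_of_ae_eq hae hop (VV_cont hr hv hF).continuousOn
    (VV_cont hr' hv hF).continuousOn (by simp only [mem_ofPred_eq, max_lt_iff]; exact ⟨h, h'⟩)

noncomputable def vbar (U : Set (ℝ × ℝ)) (v F : ℝ × ℝ → ℝ) (p : ℝ × ℝ) : ℝ :=
  VV v F (Metric.infDist p Uᶜ / 2) p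

section reg
variable {U : Set (ℝ × ℝ)} {v F Q : ℝ × ℝ → ℝ}

lemma infDist_pos (hU : IsOpen U) (hne : (Uᶜ).Nonempty) {p : ℝ × ℝ} (hp : p ∈ U) : 0 < Metric.infDist p Uᶜ :=
  (hU.isClosed_compl.notMem_iff_infDist_pos hne).1 (by simpa using hp)

lemma infDist_pos_mem {p : ℝ × ℝ} (h : 0 < Metric.infDist p Uᶜ) : p ∈ U := by
  by_contra hp
  rw [Metric.infDist_zero_of_mem (show p ∈ Uᶜ from hp)] at h
  exact lt_irrefl _ h

lemma vbar_ae (hU : IsOpen U) (hne : (Uᶜ).Nonempty) (hv : MemLp v 2 volume) (hF : MemLp F 2 volume)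
    (hw : ∀ η, IsTest U η → ∫ p, v p * lap η p = - ∫ p, F p * η p) :
    ∀ᵐ p, p ∈ U → vbar U v F p = v p := by
  have h : ∀ᵐ p, ∀ n : ℕ, p ∈ {p | 1 / ((n:ℝ) + 1) < Metric.infDist p Uᶜ} →
      VV v F (1 / ((n:ℝ) + 1)) p = v p :=
    ae_all_iff.2 fun n => weak_rep hv hF hw (en_pos n).1
  filter_upwards [h] with p hp hpU
  have hd := infDist_pos hU hne hpU
  obtain ⟨n, hn⟩ := exists_nat_one_div_lt hd
  rw [← hp n hn]
  exact VV_eq hv hF hw (by linarith) (en_pos n).1 (by linarith) hn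

lemma vbar_loc (hU : IsOpen U) (hne : (Uᶜ).Nonempty) (hv : MemLp v 2 volume) (hF : MemLp F 2 volume)
    (hw : ∀ η, IsTest U η → ∫ p, v p * lap η p = - ∫ p, F p * η p) {p₀ : ℝ × ℝ} {r : ℝ} (hr : 0 < r)
    (h4 : 4 * r = Metric.infDist p₀ Uᶜ) {q : ℝ × ℝ} (hq : dist q p₀ < r) : vbar U v F q = VV v F r q := by
  have h1 := Metric.infDist_le_infDist_add_dist (s := Uᶜ) (x := p₀) (y := q)
  rw [dist_comm] at h1
  exact VV_eq hv hF hw (by linarith) hr (by linarith) (by linarith)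

lemma cutoff (hU : IsOpen U) (hne : (Uᶜ).Nonempty) {p₀ : ℝ × ℝ} (hp : p₀ ∈ U) :
    ∃ r : ℝ, 0 < r ∧ 4 * r = Metric.infDist p₀ Uᶜ ∧ ∃ χ : ℝ × ℝ → ℝ, IsTest U χ ∧
      ∀ q, dist q p₀ < 2 * r → χ q = 1 := by
  have hd := infDist_pos hU hne hp
  set r := Metric.infDist p₀ Uᶜ / 4 with hrdef
  have hr : 0 < r := by positivity
  let χ : ContDiffBump p₀ := ⟨2 * r, 3 * r, by linarith, by linarith⟩
  refine ⟨r, hr, by rw [hrdef]; ring, χ, ⟨χ.contDiff, χ.hasCompactSupport, ?_⟩, ?_⟩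
  · rw [χ.tsupport_eq]
    intro q hq
    simp only [Metric.mem_closedBall] at hq
    change dist q p₀ ≤ 3 * r at hq
    apply infDist_pos_mem
    have h1 := Metric.infDist_le_infDist_add_dist (s := Uᶜ) (x := p₀) (y := q)
    rw [dist_comm] at h1
    linarith
  · intro q hq
    exact χ.one_of_mem_closedBall (by simp only [Metric.mem_closedBall]; exact hq.le)

lemma vbar_step (hU : IsOpen U) (hne : (Uᶜ).Nonempty) (hv : MemLp v 2 volume) (hF : MemLp F 2 volume)
    (hQ : ContDiffOn ℝ ∞ Q U) (hFQ : ∀ p ∈ U, F p = Q p * v p)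
    (hw : ∀ η, IsTest U η → ∫ p, v p * lap η p = - ∫ p, F p * η p) {n m : WithTop ℕ∞} (hn : n ≤ ∞) (hm : m ≤ ∞)
    (hstep : ∀ r : ℝ, 0 < r → ∀ f : ℝ × ℝ → ℝ, ContDiff ℝ n f → HasCompactSupport f → ContDiff ℝ m (cv (Pr r) f))
    (hb : ContDiffOn ℝ n (vbar U v F) U) : ContDiffOn ℝ m (vbar U v F) U := by
  intro p₀ hp₀
  obtain ⟨r, hr, h4, χ, hχ, hχ1⟩ := cutoff hU hne hp₀
  have hf : ContDiff ℝ n (fun p => χ p * (Q p * vbar U v F p)) :=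
    cut_contDiff hU (hχ.smooth.of_le hn) hχ.sub ((hQ.of_le hn).mul hb)
  have hfc : HasCompactSupport (fun p => χ p * (Q p * vbar U v F p)) := hχ.cpt.mul_right
  have hS := hstep r hr _ hf hfc
  have hG : ContDiff ℝ m (fun p => -(cv (fun z => Kr r (-z)) v p
      + cv (Pr r) (fun p => χ p * (Q p * vbar U v F p)) p) / AA) :=
    ((((cvK_smooth hr hv).of_le hm).add hS).neg).div_const _
  refine ContDiffAt.contDiffWithinAt ?_
  refine hG.contDiffAt.congr_of_eventuallyEq ?_
  filter_upwards [Metric.ball_mem_nhds p₀ hr] with q hq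
  simp only [Metric.mem_ball] at hq
  rw [vbar_loc hU hne hv hF hw hr h4 hq]
  unfold VV
  congr 3
  unfold cv
  refine integral_congr_ae ?_
  have hae := (Measure.measurePreserving_sub_left volume q).quasiMeasurePreserving.ae (vbar_ae hU hne hv hF hw)
  filter_upwards [hae] with z hz
  by_cases hzr : r < ‖z‖
  · simp [Pr_zero hr hzr]
  · have hd : dist (q - z) p₀ < 2 * r := by
      have := dist_triangle (q - z) q p₀
      have h2 : dist (q - z) q = ‖z‖ := by simp [dist_eq_norm]
      linarith
    have hqU : q - z ∈ U := by
      apply infDist_pos_mem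
      have h1 := Metric.infDist_le_infDist_add_dist (s := Uᶜ) (x := p₀) (y := q - z)
      rw [dist_comm] at h1
      linarith
    simp only [hχ1 _ hd, hFQ _ hqU, hz hqU, one_mul]

lemma vbar_C2 (hU : IsOpen U) (hne : (Uᶜ).Nonempty) (hv : MemLp v 2 volume) (hF : MemLp F 2 volume)
    (hQ : ContDiffOn ℝ ∞ Q U) (hFQ : ∀ p ∈ U, F p = Q p * v p)
    (hw : ∀ η, IsTest U η → ∫ p, v p * lap η p = - ∫ p, F p * η p) : ContDiffOn ℝ 2 (vbar U v F) U := by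
  have h0 : ContDiffOn ℝ 0 (vbar U v F) U := by
    rw [contDiffOn_zero]
    intro p₀ hp₀
    obtain ⟨r, hr, h4, -⟩ := cutoff hU hne hp₀
    refine ContinuousAt.continuousWithinAt ?_
    refine (VV_cont hr hv hF).continuousAt.congr ?_
    filter_upwards [Metric.ball_mem_nhds p₀ hr] with q hq
    exact (vbar_loc hU hne hv hF hw hr h4 hq).symm
  have h1 : ContDiffOn ℝ 1 (vbar U v F) U :=
    vbar_step hU hne hv hF hQ hFQ hw (n := 0) (by simp) (by simp)
      (fun r hr f hf hc => cvPr_C1 hr hf.continuous hc) h0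
  exact vbar_step hU hne hv hF hQ hFQ hw (n := 1) (by simp) two_le_inf
      (fun r hr f hf hc => cvPr_C2 hr hf hc) h1

lemma vbar_pde (hU : IsOpen U) (hne : (Uᶜ).Nonempty) (hv : MemLp v 2 volume) (hF : MemLp F 2 volume)
    (hQ : ContDiffOn ℝ ∞ Q U) (hFQ : ∀ p ∈ U, F p = Q p * v p)
    (hw : ∀ η, IsTest U η → ∫ p, v p * lap η p = - ∫ p, F p * η p) {p₀ : ℝ × ℝ} (hp₀ : p₀ ∈ U) :
    lap (vbar U v F) p₀ = - (Q p₀ * vbar U v F p₀) := by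
  obtain ⟨r, hr, h4, χ, hχ, hχ1⟩ := cutoff hU hne hp₀
  have hC2 := vbar_C2 hU hne hv hF hQ hFQ hw
  set w := vbar U v F with hwdef
  have hf : ContDiff ℝ 2 (fun p => χ p * w p) := cut_contDiff hU (hχ.smooth.of_le two_le_inf) hχ.sub hC2
  have hg : ContDiff ℝ 2 (fun p => χ p * (Q p * w p)) := cut_contDiff hU (hχ.smooth.of_le two_le_inf) hχ.sub
    ((hQ.of_le two_le_inf).mul hC2)
  have hlapc : Continuous (lap (fun p => χ p * w p)) := by
    have h1 : ContDiff ℝ 1 (dX (fun p => χ p * w p)) := contDiff_dX hf (by norm_num)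
    have h2 : ContDiff ℝ 1 (dY (fun p => χ p * w p)) := contDiff_dY hf (by norm_num)
    exact (contDiff_dX (m := 0) h1 (by simp)).continuous.add (contDiff_dY (m := 0) h2 (by simp)).continuous
  have hT : Continuous (fun p => lap (fun p => χ p * w p) p + χ p * (Q p * w p)) := hlapc.add hg.continuous
  have hB : IsOpen (Metric.ball p₀ (2 * r)) := Metric.isOpen_ball
  have hBU : Metric.ball p₀ (2 * r) ⊆ U := by
    intro q hq
    simp only [Metric.mem_ball] at hq
    apply infDist_pos_mem
    have h1 := Metric.infDist_le_infDist_add_dist (s := Uᶜ) (x := p₀) (y := q)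
    rw [dist_comm] at h1
    linarith
  have hae := hB.ae_eq_zero_of_integral_contDiff_smul_eq_zero (μ := volume)
    (hT.locallyIntegrable.locallyIntegrableOn _) ?_
  · have hz : (fun p => lap (fun p => χ p * w p) p + χ p * (Q p * w p)) =ᵐ[volume.restrict (Metric.ball p₀ (2 * r))]
        fun _ => 0 := (ae_restrict_iff' hB.measurableSet).2 hae
    have h0 := MeasureTheory.Measure.eqOn_open_of_ae_eq hz hB hT.continuousOn continuousOn_const
      (Metric.mem_ball_self (by linarith))
    simp only at h0
    have hev : (fun p => χ p * w p) =ᶠ[𝓝 p₀] w := by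
      filter_upwards [Metric.ball_mem_nhds p₀ (show 0 < 2 * r by linarith)] with q hq
      rw [hχ1 q hq, one_mul]
    have hl : lap (fun p => χ p * w p) p₀ = lap w p₀ := by
      unfold lap
      rw [(dX_ev (dX_ev hev)).eq_of_nhds, (dY_ev (dY_ev hev)).eq_of_nhds]
    rw [hl, hχ1 p₀ (by simp; linarith)] at h0
    linarith
  · intro η hη hc hs
    have hηT : IsTest (Metric.ball p₀ (2 * r)) η := ⟨hη, hc, hs⟩
    have h1 := hw η (hηT.mono hBU)
    have hsym := int_lap_symm hf (hη.of_le two_le_inf) hc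
    have hout : ∀ ζ : ℝ × ℝ → ℝ, IsTest (Metric.ball p₀ (2 * r)) ζ → ∀ p, p ∉ Metric.ball p₀ (2 * r) → ζ p = 0 :=
      fun ζ hζ p hp => image_eq_zero_of_notMem_tsupport fun h => hp (hζ.sub h)
    have e1 : ∫ p, v p * lap η p = ∫ p, χ p * w p * lap η p := by
      refine integral_congr_ae ?_
      filter_upwards [vbar_ae hU hne hv hF hw] with p hp
      by_cases hpb : p ∈ Metric.ball p₀ (2 * r)
      · simp only [hχ1 p hpb, hwdef, hp (hBU hpb), one_mul]
      · simp only [hout _ hηT.lap p hpb, mul_zero]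
    have e2 : ∫ p, F p * η p = ∫ p, χ p * (Q p * w p) * η p := by
      refine integral_congr_ae ?_
      filter_upwards [vbar_ae hU hne hv hF hw] with p hp
      by_cases hpb : p ∈ Metric.ball p₀ (2 * r)
      · simp only [hχ1 p hpb, hwdef, hp (hBU hpb), one_mul, hFQ p (hBU hpb)]
      · simp only [hout _ hηT p hpb, mul_zero]
    rw [e1, e2, hsym] at h1
    have i1 : Integrable (fun p => lap (fun p => χ p * w p) p * η p) :=
      (hlapc.mul hη.continuous).integrable_of_hasCompactSupport hc.mul_left
    have i2 : Integrable (fun p => χ p * (Q p * w p) * η p) :=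
      (hg.continuous.mul hη.continuous).integrable_of_hasCompactSupport hc.mul_left
    have : ∀ p, η p • (lap (fun p => χ p * w p) p + χ p * (Q p * w p)) =
      lap (fun p => χ p * w p) p * η p + χ p * (Q p * w p) * η p := by intro p; rw [smul_eq_mul]; ring
    simp_rw [this]
    rw [integral_add i1 i2]; linarith

lemma cv_loc {k f : ℝ × ℝ → ℝ} {r : ℝ} (hk : ∀ z, r < ‖z‖ → k z = 0) (hk2 : MemLp k 2 volume)
    (hf : MemLp f 2 volume) (p : ℝ × ℝ) :
    |cv k f p| ≤ Real.sqrt (∫ z, k z ^ 2) * Real.sqrt (∫ z in Metric.closedBall p r, f z ^ 2) := by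
  have hB : MeasurableSet (Metric.closedBall p r) := Metric.isClosed_closedBall.measurableSet
  have h1 : cv k f p = cv k (indicator (Metric.closedBall p r) f) p := by
    unfold cv
    congr 1; funext z
    by_cases hz : r < ‖z‖
    · simp [hk z hz]
    · rw [indicator_of_mem]
      simp only [Metric.mem_closedBall, dist_eq_norm]
      simpa using hz
  rw [h1, ← integral_indicator hB]
  convert cv_CS hk2 (hf.indicator hB) p using 3
  congr 1; funext z
  by_cases hz : z ∈ Metric.closedBall p r <;> simp [hz]

noncomputable def CC : ℝ := (Real.sqrt (∫ z, ke 0 z ^ 2) + Real.sqrt (∫ z, Pe 0 z ^ 2)) / AA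

lemma CC_nonneg : 0 ≤ CC := by have := AA_pos; unfold CC; positivity

lemma VV_est (hv : MemLp v 2 volume) (hF : MemLp F 2 volume) {r : ℝ} (hr : 0 < r) (p : ℝ × ℝ) :
    |VV v F r p| ≤ CC * (r⁻¹ * Real.sqrt (∫ z in Metric.closedBall p r, v z ^ 2) +
      r * Real.sqrt (∫ z in Metric.closedBall p r, F z ^ 2)) := by
  have hA := AA_pos
  have h1 := cv_loc (k := fun z => Kr r (-z)) (r := r) (fun z hz => Kr_zero hr (by simpa using hz))
    ((Kn_test hr).cont.memLp_of_hasCompactSupport (Kn_test hr).cpt) hv p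
  have h2 := cv_loc (k := Pr r) (r := r) (fun z hz => Pr_zero hr hz) (Pr_memLp hr) hF p
  rw [integral_neg_eq_self (fun z => Kr r z ^ 2) volume, Kr_sq hr, Real.sqrt_mul (by positivity), Real.sqrt_inv,
    Real.sqrt_sq hr.le] at h1
  rw [Pr_sq hr, Real.sqrt_mul (by positivity), Real.sqrt_sq hr.le] at h2
  unfold VV CC
  rw [abs_div, abs_neg, abs_of_pos hA, div_mul_eq_mul_div, div_le_div_iff_of_pos_right hA]
  refine (abs_add_le _ _).trans ((add_le_add h1 h2).trans ?_)
  have a1 := Real.sqrt_nonneg (∫ z, ke 0 z ^ 2)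
  have a2 := Real.sqrt_nonneg (∫ z, Pe 0 z ^ 2)
  have a3 := Real.sqrt_nonneg (∫ z in Metric.closedBall p r, v z ^ 2)
  have a4 := Real.sqrt_nonneg (∫ z in Metric.closedBall p r, F z ^ 2)
  generalize Real.sqrt (∫ z, ke 0 z ^ 2) = A at *
  generalize Real.sqrt (∫ z, Pe 0 z ^ 2) = B at *
  generalize Real.sqrt (∫ z in Metric.closedBall p r, v z ^ 2) = X at *
  generalize Real.sqrt (∫ z in Metric.closedBall p r, F z ^ 2) = Y at *
  have : 0 ≤ A * (r * Y) := by positivity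
  have : 0 ≤ B * (r⁻¹ * X) := by positivity
  nlinarith

end reg

end Gru

end

section
open MeasureTheory Filter Topology Set
open scoped ContDiff

namespace Gru

/-- weak sequential compactness of bounded sequences in L² -/
lemma weak_limit {g : ℕ → ℝ × ℝ → ℝ} (hg : ∀ n, MemLp (g n) 2 volume) {M : ℝ} (hM : ∀ n, ∫ p, g n p ^ 2 ≤ M) :
    ∃ G : ℝ × ℝ → ℝ, MemLp G 2 volume ∧ ∃ φ : ℕ → ℕ, StrictMono φ ∧ ∀ h : ℝ × ℝ → ℝ, MemLp h 2 volume →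
      Tendsto (fun n => ∫ p, g (φ n) p * h p) atTop (𝓝 (∫ p, G p * h p)) := by
  have : Fact ((2:ENNReal) ≠ ⊤) := ⟨by norm_num⟩
  let E := Lp ℝ 2 (volume : Measure (ℝ × ℝ))
  have hin : ∀ (f h : ℝ × ℝ → ℝ) (hf : MemLp f 2 volume) (hh : MemLp h 2 volume),
      inner ℝ (hf.toLp f) (hh.toLp h) = ∫ p, f p * h p := by
    intro f h hf hh
    rw [L2.inner_def]
    refine integral_congr_ae ?_
    filter_upwards [hf.coeFn_toLp, hh.coeFn_toLp] with p h1 h2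
    rw [h1, h2]; simp [mul_comm]
  let x : ℕ → WeakDual ℝ E := fun n => StrongDual.toWeakDual (InnerProductSpace.toDual ℝ E ((hg n).toLp (g n)))
  have hx : ∀ n, x n ∈ (WeakDual.toStrongDual ⁻¹' Metric.closedBall (0 : StrongDual ℝ E) (Real.sqrt M)) := by
    intro n
    simp only [mem_preimage, Metric.mem_closedBall, dist_zero_right]
    change ‖InnerProductSpace.toDual ℝ E ((hg n).toLp (g n))‖ ≤ _
    rw [LinearIsometryEquiv.norm_map]
    apply Real.le_sqrt_of_sq_le
    rw [← real_inner_self_eq_norm_sq, hin]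
    refine le_trans (le_of_eq ?_) (hM n)
    congr 1; funext p; ring
  obtain ⟨y, -, φ, hφ, hy⟩ := WeakDual.isSeqCompact_closedBall ℝ E 0 (Real.sqrt M) hx
  let G := (InnerProductSpace.toDual ℝ E).symm (WeakDual.toStrongDual y)
  refine ⟨G, Lp.memLp G, φ, hφ, fun h hh => ?_⟩
  have h1 := ((WeakDual.eval_continuous (hh.toLp h)).tendsto y).comp hy
  have e1 : ∀ n, x (φ n) (hh.toLp h) = ∫ p, g (φ n) p * h p := by
    intro n
    rw [← hin _ _ (hg (φ n)) hh]
    exact InnerProductSpace.toDual_apply_apply ..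
  have e2 : y (hh.toLp h) = ∫ p, G p * h p := by
    rw [← hin _ _ (Lp.memLp G) hh, Lp.toLp_coeFn]
    exact (InnerProductSpace.toDual_symm_apply).symm
  rw [e2] at h1
  refine h1.congr fun n => ?_
  exact e1 n

/-- the defining function of the ball -/
noncomputable def psi (a R : ℝ) (p : ℝ × ℝ) : ℝ := R ^ 4 - (p.1 - (a + R)) ^ 4 - 4 * p.2 ^ 2

def Om (a R : ℝ) : Set (ℝ × ℝ) := {p | 0 < psi a R p}

lemma psi_smooth (a R : ℝ) : ContDiff ℝ ∞ (psi a R) := by unfold psi; fun_prop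

lemma Om_open (a R : ℝ) : IsOpen (Om a R) := isOpen_lt continuous_const (psi_smooth a R).continuous

lemma Om_x {a R : ℝ} (hR : 0 < R) {p : ℝ × ℝ} (hp : 0 ≤ psi a R p) : a ≤ p.1 ∧ p.1 ≤ a + 2 * R ∧ |p.2| ≤ R ^ 2 := by
  unfold psi at hp
  have h4 : (p.1 - (a + R)) ^ 4 ≤ R ^ 4 := by nlinarith [sq_nonneg p.2]
  have h1 : |p.1 - (a + R)| ≤ R := by
    refine le_of_pow_le_pow_left₀ (n := 4) (by norm_num) hR.le ?_
    rwa [Even.pow_abs (by decide)]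
  rw [abs_le] at h1
  refine ⟨by linarith, by linarith, ?_⟩
  apply abs_le_of_sq_le_sq _ (by positivity)
  nlinarith [sq_nonneg (p.1 - (a + R)), sq_nonneg ((p.1 - (a + R))^2), sq_nonneg p.2]

lemma psi_le (a R : ℝ) (p : ℝ × ℝ) : psi a R p ≤ R ^ 4 := by
  unfold psi
  nlinarith [sq_nonneg ((p.1 - (a + R))^2), sq_nonneg p.2]

lemma dX_of {f : ℝ × ℝ → ℝ} {p : ℝ × ℝ} {c : ℝ} (hf : DifferentiableAt ℝ f p)
    (h : HasDerivAt (fun x => f (x, p.2)) c p.1) : dX f p = c := by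
  have h1 : HasDerivAt (fun x : ℝ => (x, p.2)) ((1 : ℝ), (0 : ℝ)) p.1 :=
    (hasDerivAt_id p.1).prodMk (hasDerivAt_const p.1 p.2)
  have h2 : HasDerivAt (fun x => f (x, p.2)) (fderiv ℝ f p (1, 0)) p.1 :=
    HasFDerivAt.comp_hasDerivAt (f := fun x : ℝ => (x, p.2)) p.1 hf.hasFDerivAt h1
  exact h2.unique h
lemma dY_of {f : ℝ × ℝ → ℝ} {p : ℝ × ℝ} {c : ℝ} (hf : DifferentiableAt ℝ f p)
    (h : HasDerivAt (fun y => f (p.1, y)) c p.2) : dY f p = c := by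
  have h1 : HasDerivAt (fun y : ℝ => (p.1, y)) ((0 : ℝ), (1 : ℝ)) p.2 :=
    (hasDerivAt_const p.2 p.1).prodMk (hasDerivAt_id p.2)
  have h2 : HasDerivAt (fun y => f (p.1, y)) (fderiv ℝ f p (0, 1)) p.2 :=
    HasFDerivAt.comp_hasDerivAt (f := fun y : ℝ => (p.1, y)) p.2 hf.hasFDerivAt h1
  exact h2.unique h

lemma dX_psi (a R : ℝ) (p : ℝ × ℝ) : dX (psi a R) p = -4 * (p.1 - (a + R)) ^ 3 := by
  refine dX_of ((psi_smooth a R).differentiable (by simp) p) ?_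
  unfold psi
  have := ((((hasDerivAt_id p.1).sub_const (a + R)).pow 4).const_sub (R ^ 4)).sub_const (4 * p.2 ^ 2)
  exact this.congr_deriv (by simp)
lemma dY_psi (a R : ℝ) (p : ℝ × ℝ) : dY (psi a R) p = -8 * p.2 := by
  refine dY_of ((psi_smooth a R).differentiable (by simp) p) ?_
  unfold psi
  have := (((hasDerivAt_id p.2).pow 2).const_mul 4).const_sub (R ^ 4 - (p.1 - (a + R)) ^ 4)
  exact this.congr_deriv (by simp; ring)

/-- energy form -/
noncomputable def en (η ζ : ℝ × ℝ → ℝ) : ℝ := ∫ p, (dX η p * dX ζ p + p.1 ^ 2 * (dY η p * dY ζ p))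

lemma hardy_poly {a R : ℝ} (ha : 0 < a) (ha1 : a < 1) (hR : 1 ≤ R) {p : ℝ × ℝ} (hp : 0 ≤ psi a R p) :
    a ^ 2 ≤ 6 * (p.1 - (a + R)) ^ 2 * psi a R p + 4 * (p.1 - (a + R)) ^ 6
      + p.1 ^ 2 * (4 * psi a R p + 16 * p.2 ^ 2) := by
  have hx := (Om_x (by linarith) hp).1
  have hx2 : a ^ 2 ≤ p.1 ^ 2 := by nlinarith
  set t := p.1 - (a + R) with ht
  have e : 4 * psi a R p + 16 * p.2 ^ 2 = 4 * (R ^ 4 - t ^ 4) := by unfold psi; ring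
  have h0 : 0 ≤ 4 * psi a R p + 16 * p.2 ^ 2 := by positivity
  rw [e] at h0 ⊢
  have hR4 : 1 ≤ R ^ 4 := one_le_pow₀ hR
  have h1 : 0 ≤ 6 * t ^ 2 * psi a R p := by positivity
  by_cases hc : t ^ 4 ≤ R ^ 4 / 2
  · have : a ^ 2 ≤ p.1 ^ 2 * (4 * (R ^ 4 - t ^ 4)) := by nlinarith
    have : 0 ≤ t ^ 6 := by positivity
    linarith
  · have h4 : 1 / 2 < t ^ 4 := by linarith
    have h5 : 1 / 2 ≤ t ^ 2 := by nlinarith [sq_nonneg t]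
    have h6 : 1 / 4 ≤ t ^ 6 := by nlinarith [sq_nonneg t]
    have : 0 ≤ p.1 ^ 2 * (4 * (R ^ 4 - t ^ 4)) := by positivity
    nlinarith

lemma IsTest.mul_smooth {U : Set (ℝ × ℝ)} {η f : ℝ × ℝ → ℝ} (h : IsTest U η)
    (hf : ContDiff ℝ ∞ f) : IsTest U (fun p => f p * η p) := h.mul_on fun _ _ => hf.contDiffAt

lemma IsTest.zero_out {U : Set (ℝ × ℝ)} {η : ℝ × ℝ → ℝ} (h : IsTest U η) {p : ℝ × ℝ} (hp : p ∉ U) : η p = 0 :=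
  image_eq_zero_of_notMem_tsupport fun h' => hp (h.sub h')

lemma hardy_aux {a R : ℝ} (ha : 0 < a) (ha1 : a < 1) (hR : 1 ≤ R) {ζ : ℝ × ℝ → ℝ} (hζ : IsTest (Om a R) ζ) :
    a ^ 2 * ∫ p, ζ p ^ 2 ≤ en (fun p => psi a R p * ζ p) (fun p => psi a R p * ζ p) := by
  have hη := hζ.mul_smooth (psi_smooth a R)
  have hd : ∀ {f : ℝ × ℝ → ℝ}, ContDiff ℝ ∞ f → ∀ p, DifferentiableAt ℝ f p :=
    fun hf p => hf.differentiable (by simp) p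
  have hs := psi_smooth a R
  -- the two divergence terms
  have hA : IsTest (Om a R) (fun p => (psi a R p * (-2 * (p.1 - (a + R)) ^ 3)) * (ζ p * ζ p)) :=
    (hζ.mul_smooth hζ.smooth).mul_smooth (by fun_prop)
  have hB : IsTest (Om a R) (fun p => (psi a R p * (p.1 ^ 2 * (-4 * p.2))) * (ζ p * ζ p)) :=
    (hζ.mul_smooth hζ.smooth).mul_smooth (by fun_prop)
  have h1 : (1 : WithTop ℕ∞) ≤ ∞ := by simp
  have iA := int_dX_zero (hA.smooth.of_le h1) hA.cpt
  have iB := int_dY_zero (hB.smooth.of_le h1) hB.cpt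
  have ieA := hA.dX.int
  have ieB := hB.dY.int
  have i2 : Integrable (fun p => a ^ 2 * ζ p ^ 2) := by
    have := ((hζ.mul_smooth hζ.smooth).const_mul (a ^ 2)).int
    simpa [sq] using this
  have i3 : Integrable (fun p => dX (fun p => psi a R p * ζ p) p * dX (fun p => psi a R p * ζ p) p
      + p.1 ^ 2 * (dY (fun p => psi a R p * ζ p) p * dY (fun p => psi a R p * ζ p) p)) :=
    ((hη.dX.mul_smooth hη.dX.smooth).add ((hη.dY.mul_smooth hη.dY.smooth).mul_smooth
      (f := fun p => p.1 ^ 2) (by fun_prop))).int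
  have ieAB : Integrable (fun p => dX (fun p => (psi a R p * (-2 * (p.1 - (a + R)) ^ 3)) * (ζ p * ζ p)) p +
    dY (fun p => (psi a R p * (p.1 ^ 2 * (-4 * p.2))) * (ζ p * ζ p)) p) := ieA.add ieB
  have key : ∫ p, (a ^ 2 * ζ p ^ 2 + (dX (fun p => (psi a R p * (-2 * (p.1 - (a + R)) ^ 3)) * (ζ p * ζ p)) p +
    dY (fun p => (psi a R p * (p.1 ^ 2 * (-4 * p.2))) * (ζ p * ζ p)) p)) ≤
      en (fun p => psi a R p * ζ p) (fun p => psi a R p * ζ p) := by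
    refine integral_mono (i2.add ieAB) i3 ?_
    intro p
    have c1 : dX (fun p : ℝ × ℝ => -2 * (p.1 - (a + R)) ^ 3) p = -6 * (p.1 - (a + R)) ^ 2 := by
      refine dX_of (by fun_prop) ?_
      have := (((hasDerivAt_id p.1).sub_const (a + R)).pow 3).const_mul (-2)
      exact this.congr_deriv (by simp; ring)
    have c2 : dY (fun p : ℝ × ℝ => p.1 ^ 2 * (-4 * p.2)) p = - 4 * p.1 ^ 2 := by
      refine dY_of (by fun_prop) ?_
      have := ((hasDerivAt_id p.2).const_mul (-4)).const_mul (p.1 ^ 2)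
      exact this.congr_deriv (by simp; ring)
    simp only
    have d1 : DifferentiableAt ℝ (fun p : ℝ × ℝ => psi a R p * (-2 * (p.1 - (a + R)) ^ 3)) p :=
      (hd hs p).fun_mul (by fun_prop)
    have d2 : DifferentiableAt ℝ (fun p : ℝ × ℝ => psi a R p * (p.1 ^ 2 * (-4 * p.2))) p :=
      (hd hs p).fun_mul (by fun_prop)
    rw [dX_mul d1 ((hd hζ.smooth p).fun_mul (hd hζ.smooth p)),
      dX_mul (hd hζ.smooth p) (hd hζ.smooth p), dX_mul (hd hs p) (by fun_prop), dX_psi, c1,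
      dY_mul d2 ((hd hζ.smooth p).fun_mul (hd hζ.smooth p)),
      dY_mul (hd hζ.smooth p) (hd hζ.smooth p), dY_mul (hd hs p) (by fun_prop), dY_psi, c2,
      dX_mul (hd hs p) (hd hζ.smooth p), dY_mul (hd hs p) (hd hζ.smooth p), dX_psi, dY_psi]
    by_cases hp : p ∈ Om a R
    · have hpoly := hardy_poly ha ha1 hR (le_of_lt hp)
      set t := p.1 - (a + R)
      set P := psi a R p
      have s1 : 0 ≤ (P * dX ζ p - 2 * t ^ 3 * ζ p) ^ 2 := sq_nonneg _
      have s2 : 0 ≤ p.1 ^ 2 * (P * dY ζ p - 4 * p.2 * ζ p) ^ 2 := by positivity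
      have s3 := mul_le_mul_of_nonneg_right hpoly (sq_nonneg (ζ p))
      linarith
    · rw [hζ.zero_out hp, hζ.dX.zero_out hp, hζ.dY.zero_out hp]
      simp
  have e0 : ∫ p, (a ^ 2 * ζ p ^ 2 + (dX (fun p => (psi a R p * (-2 * (p.1 - (a + R)) ^ 3)) * (ζ p * ζ p)) p +
    dY (fun p => (psi a R p * (p.1 ^ 2 * (-4 * p.2))) * (ζ p * ζ p)) p)) = a ^ 2 * ∫ p, ζ p ^ 2 := by
    rw [integral_add i2 ieAB, integral_add ieA ieB, iA, iB, integral_const_mul]; ring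
  rw [e0] at key
  exact key

/-- dividing by psi -/
lemma IsTest.div_psi {a R : ℝ} {η : ℝ × ℝ → ℝ} (h : IsTest (Om a R) η) :
    IsTest (Om a R) (fun p => (psi a R p)⁻¹ * η p) :=
  h.mul_on fun p hp => ((psi_smooth a R).contDiffAt).inv (ne_of_gt (h.sub hp))

lemma psi_div {a R : ℝ} {η : ℝ × ℝ → ℝ} (h : IsTest (Om a R) η) :
    (fun p => psi a R p * ((psi a R p)⁻¹ * η p)) = η := by
  funext p
  by_cases hp : p ∈ Om a R
  · rw [mul_inv_cancel_left₀ (ne_of_gt hp)]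
  · rw [h.zero_out hp]; simp

lemma hardy {a R : ℝ} (ha : 0 < a) (ha1 : a < 1) (hR : 1 ≤ R) {η : ℝ × ℝ → ℝ} (hη : IsTest (Om a R) η) :
    a ^ 2 * ∫ p, ((psi a R p)⁻¹ * η p) ^ 2 ≤ en η η := by
  have := hardy_aux ha ha1 hR hη.div_psi
  rwa [psi_div hη] at this

end Gru

end

section
open MeasureTheory Filter Topology Set
open scoped ContDiff

namespace Gru

lemma test_sq_int {U : Set (ℝ × ℝ)} {η : ℝ × ℝ → ℝ} (h : IsTest U η) : Integrable (fun p => η p ^ 2) := by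
  have := (h.mul_smooth h.smooth).int
  simpa [sq] using this

lemma test_memLp {U : Set (ℝ × ℝ)} {η : ℝ × ℝ → ℝ} (h : IsTest U η) : MemLp η 2 volume :=
  h.cont.memLp_of_hasCompactSupport h.cpt

lemma transl {η : ℝ × ℝ → ℝ} (hη : IsTest univ η) (z : ℝ × ℝ) :
    ∫ p, (η p - η (p - z)) ^ 2 ≤ ∫ p, (z.1 * dX η p + z.2 * dY η p) ^ 2 := by
  set h : ℝ × ℝ → ℝ := fun p => z.1 * dX η p + z.2 * dY η p with hh
  have hT : IsTest univ h := (hη.dX.const_mul z.1).add (hη.dY.const_mul z.2)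
  have hcont : Continuous fun x : (ℝ × ℝ) × ℝ => h (x.1 - z + x.2 • z) := by
    have := hT.cont; fun_prop
  have hder : ∀ p : ℝ × ℝ, ∀ t : ℝ, HasDerivAt (fun t : ℝ => η (p - z + t • z)) (h (p - z + t • z)) t := by
    intro p t
    have h1 : HasDerivAt (fun t : ℝ => p - z + t • z) z t := by
      have := ((hasDerivAt_id t).smul_const z).const_add (p - z)
      simpa using this
    have h2 := HasFDerivAt.comp_hasDerivAt (f := fun t : ℝ => p - z + t • z) t
      (hη.smooth.differentiable (by simp) (p - z + t • z)).hasFDerivAt h1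
    refine h2.congr_deriv ?_
    rw [clm_eq_mk (fderiv ℝ η (p - z + t • z)), mk_apply]
    simp only [hh, dX, dY]; ring
  have hpt : ∀ p, (η p - η (p - z)) ^ 2 ≤ ∫ t in Ioc (0:ℝ) 1, h (p - z + t • z) ^ 2 := by
    intro p
    have hc : Continuous fun t : ℝ => h (p - z + t • z) := by have := hT.cont; fun_prop
    have e := intervalIntegral.integral_eq_sub_of_hasDerivAt (a := 0) (b := 1) (fun t _ => hder p t)
      (hc.intervalIntegrable 0 1)
    simp only [one_smul, sub_add_cancel, zero_smul, add_zero] at e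
    rw [intervalIntegral.integral_of_le zero_le_one] at e
    have m1 : MemLp (fun t : ℝ => h (p - z + t • z)) 2 (volume.restrict (Ioc (0:ℝ) 1)) := by
      refine (memLp_two_iff_integrable_sq hc.aestronglyMeasurable).2 ?_
      exact ((hc.pow 2).integrableOn_Icc).mono_set Ioc_subset_Icc_self
    have := CS m1 (memLp_const (1:ℝ))
    simp only [mul_one, one_pow] at this
    rw [e] at this
    have e1 : ∫ _ in Ioc (0:ℝ) 1, (1:ℝ) = 1 := by simp
    rw [e1, Real.sqrt_one, mul_one] at this
    have := Real.abs_le_sqrt (x := η p - η (p - z)) (y := ∫ t in Ioc (0:ℝ) 1, h (p - z + t • z) ^ 2)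
    have hn : 0 ≤ ∫ t in Ioc (0:ℝ) 1, h (p - z + t • z) ^ 2 := integral_nonneg fun _ => sq_nonneg _
    rw [← sq_abs]
    calc |η p - η (p - z)| ^ 2 ≤ (Real.sqrt (∫ t in Ioc (0:ℝ) 1, h (p - z + t • z) ^ 2)) ^ 2 := by gcongr
      _ = _ := Real.sq_sqrt hn
  have hinv : ∀ t : ℝ, ∫ p, h (p - z + t • z) ^ 2 = ∫ p, h p ^ 2 := by
    intro t
    have := integral_add_right_eq_self (μ := volume) (fun p => h p ^ 2) (-z + t • z)
    rw [← this]; congr 1; funext p; congr 2; abel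
  have hint1 : ∀ t : ℝ, Integrable (fun p => h (p - z + t • z) ^ 2) := by
    intro t
    have := (test_sq_int hT).comp_add_right (-z + t • z)
    refine this.congr (Eventually.of_forall fun p => ?_)
    simp only; congr 2; abel
  have hprod : Integrable (fun x : (ℝ × ℝ) × ℝ => h (x.1 - z + x.2 • z) ^ 2)
      ((volume : Measure (ℝ × ℝ)).prod (volume.restrict (Ioc (0:ℝ) 1))) := by
    refine (integrable_prod_iff' (hcont.pow 2).aestronglyMeasurable).2 ⟨Eventually.of_forall hint1, ?_⟩
    have : (fun t : ℝ => ∫ p, ‖h (p - z + t • z) ^ 2‖) = fun _ => ∫ p, h p ^ 2 := by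
      funext t; rw [← hinv t]; congr 1; funext p; simp
    exact this ▸ integrable_const _
  have hsub : Integrable (fun p => (η p - η (p - z)) ^ 2) := by
    have m : MemLp (fun p => η p - η (p - z)) 2 volume :=
      (test_memLp hη).sub ((test_memLp hη).comp_measurePreserving (measurePreserving_sub_right volume z))
    exact m.integrable_sq
  calc ∫ p, (η p - η (p - z)) ^ 2 ≤ ∫ p, ∫ t in Ioc (0:ℝ) 1, h (p - z + t • z) ^ 2 :=
        integral_mono hsub hprod.integral_prod_left hpt
    _ = ∫ t in Ioc (0:ℝ) 1, ∫ p, h (p - z + t • z) ^ 2 := integral_integral_swap hprod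
    _ = ∫ p, h p ^ 2 := by simp [hinv]

lemma corr {η : ℝ × ℝ → ℝ} (hη : IsTest univ η) {M : ℝ} (hM : ∫ p, (dX η p ^ 2 + dY η p ^ 2) ≤ M)
    (h1 : ∫ p, η p ^ 2 = 1) (z : ℝ × ℝ) : 1 - ‖z‖ ^ 2 * M ≤ ∫ p, η p * η (p - z) := by
  have ht := transl hη z
  have m1 := test_memLp hη
  have m2 : MemLp (fun p => η (p - z)) 2 volume :=
    (test_memLp hη).comp_measurePreserving (measurePreserving_sub_right volume z)
  have e : ∫ p, (η p - η (p - z)) ^ 2 = 2 - 2 * ∫ p, η p * η (p - z) := by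
    have i1 := m1.integrable_sq
    have i2 := m2.integrable_sq
    have i3 : Integrable (fun p => η p * η (p - z)) := m1.integrable_mul m2
    have i4 : Integrable (fun p => η p ^ 2 + η (p - z) ^ 2) := i1.add i2
    have : ∀ p, (η p - η (p - z)) ^ 2 = (η p ^ 2 + η (p - z) ^ 2) - 2 * (η p * η (p - z)) := fun p => by ring
    simp_rw [this]
    rw [integral_sub i4 (i3.const_mul 2), integral_add i1 i2, integral_const_mul,
      integral_sub_right_eq_self (fun p => η p ^ 2), h1]
    ring
  have b : ∫ p, (z.1 * dX η p + z.2 * dY η p) ^ 2 ≤ 2 * ‖z‖ ^ 2 * M := by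
    have hT : IsTest univ (fun p => z.1 * dX η p + z.2 * dY η p) := (hη.dX.const_mul z.1).add (hη.dY.const_mul z.2)
    have i : Integrable (fun p => dX η p ^ 2 + dY η p ^ 2) := (test_sq_int hη.dX).add (test_sq_int hη.dY)
    calc ∫ p, (z.1 * dX η p + z.2 * dY η p) ^ 2 ≤ ∫ p, 2 * ‖z‖ ^ 2 * (dX η p ^ 2 + dY η p ^ 2) := by
          refine integral_mono (test_sq_int hT) (i.const_mul _) fun p => ?_
          have z1 : z.1 ^ 2 ≤ ‖z‖ ^ 2 := by
            rw [← sq_abs z.1]; exact pow_le_pow_left₀ (abs_nonneg _) (norm_fst_le z) 2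
          have z2 : z.2 ^ 2 ≤ ‖z‖ ^ 2 := by
            rw [← sq_abs z.2]; exact pow_le_pow_left₀ (abs_nonneg _) (norm_snd_le z) 2
          have := mul_le_mul_of_nonneg_right z1 (sq_nonneg (dX η p))
          have := mul_le_mul_of_nonneg_right z2 (sq_nonneg (dY η p))
          have := sq_nonneg (z.1 * dX η p - z.2 * dY η p)
          simp only; nlinarith
      _ ≤ _ := by
          rw [integral_const_mul]
          exact mul_le_mul_of_nonneg_left hM (by positivity)
  rw [e] at ht
  linarith

lemma rellich {η : ℕ → ℝ × ℝ → ℝ} {U : Set (ℝ × ℝ)} (hη : ∀ n, IsTest U (η n)) {ρ M : ℝ}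
    (hU : U ⊆ Metric.closedBall 0 ρ)
    (h1 : ∀ n, ∫ p, η n p ^ 2 = 1) (hM : ∀ n, ∫ p, (dX (η n) p ^ 2 + dY (η n) p ^ 2) ≤ M)
    (hw : ∀ h : ℝ × ℝ → ℝ, Continuous h → HasCompactSupport h → Tendsto (fun n => ∫ p, η n p * h p) atTop (𝓝 0)) :
    False := by
  have hM0 : 0 ≤ M := (integral_nonneg fun p => by positivity).trans (hM 0)
  obtain ⟨δ, hδ, hδM⟩ : ∃ δ : ℝ, 0 < δ ∧ δ ^ 2 * M ≤ 1 / 2 := by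
    refine ⟨1 / (2 * (M + 1)), by positivity, ?_⟩
    rw [div_pow, div_mul_eq_mul_div, div_le_iff₀ (by positivity)]
    nlinarith
  let φ : ContDiffBump (0 : ℝ × ℝ) := ⟨δ / 2, δ, by linarith, by linarith⟩
  have hφc : Continuous φ := φ.continuous
  have hφs : HasCompactSupport φ := φ.hasCompactSupport
  have hφ0 : ∀ z, δ < ‖z‖ → φ z = 0 := fun z hz => φ.zero_of_le_dist (by simpa using hz.le)
  have hφ2 : MemLp φ 2 volume := hφc.memLp_of_hasCompactSupport hφs
  have hη' : ∀ n, IsTest univ (η n) := fun n => (hη n).mono (subset_univ _)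
  have hcc : ∀ n, Continuous (cv φ (η n)) := fun n =>
    cv_cont hφc.locallyIntegrable (hη n).cont (hη n).cpt
  have hcs : ∀ n, HasCompactSupport (cv φ (η n)) := fun n => cv_cpt hφs (hη n).cpt
  -- lower bound
  have hlow : ∀ n, 1 / 2 * ∫ z, φ z ≤ ∫ p, η n p * cv φ (η n) p := by
    intro n
    have hprod : Integrable (fun x : (ℝ × ℝ) × (ℝ × ℝ) => η n x.1 * (φ x.2 * η n (x.1 - x.2)))
        ((volume : Measure (ℝ × ℝ)).prod (volume : Measure (ℝ × ℝ))) := by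
      refine Continuous.integrable_of_hasCompactSupport ?_ ?_
      · have := (hη n).cont; fun_prop
      · refine HasCompactSupport.intro ((hη n).cpt.isCompact.prod hφs.isCompact) ?_
        intro x hx
        simp only [mem_prod, not_and_or] at hx
        rcases hx with hx | hx
        · simp [image_eq_zero_of_notMem_tsupport hx]
        · simp [image_eq_zero_of_notMem_tsupport hx]
    have e : ∫ p, η n p * cv φ (η n) p = ∫ z, φ z * ∫ p, η n p * η n (p - z) := by
      unfold cv
      simp_rw [← integral_const_mul]
      rw [integral_integral_swap hprod]
      congr 1; funext z; congr 1; funext p; ring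
    rw [e, ← integral_const_mul]
    refine integral_mono ((hφc.integrable_of_hasCompactSupport hφs).const_mul _) ?_ ?_
    · refine hprod.integral_prod_right.congr (Eventually.of_forall fun z => ?_)
      simp only
      rw [← integral_const_mul]; congr 1; funext p; ring
    · intro z
      simp only
      by_cases hz : δ < ‖z‖
      · simp [hφ0 z hz]
      · have := corr (hη' n) (hM n) (h1 n) z
        have hz2 : ‖z‖ ^ 2 ≤ δ ^ 2 := pow_le_pow_left₀ (norm_nonneg _) (not_lt.1 hz) 2
        have h3 : ‖z‖ ^ 2 * M ≤ δ ^ 2 * M := mul_le_mul_of_nonneg_right hz2 hM0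
        rw [mul_comm]
        exact mul_le_mul_of_nonneg_left (by linarith) φ.nonneg
  have hup : ∀ n, ∫ p, η n p * cv φ (η n) p ≤ Real.sqrt (∫ p, cv φ (η n) p ^ 2) := by
    intro n
    have := CS (test_memLp (hη n)) ((hcc n).memLp_of_hasCompactSupport (μ := volume) (p := 2) (hcs n))
    rw [h1 n, Real.sqrt_one, one_mul] at this
    exact (le_abs_self _).trans this
  have hlim : Tendsto (fun n => ∫ p, cv φ (η n) p ^ 2) atTop (𝓝 (∫ _ : ℝ × ℝ, (0:ℝ))) := by
    refine tendsto_integral_of_dominated_convergence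
      (indicator (Metric.closedBall 0 (ρ + δ)) fun _ => ∫ z, φ z ^ 2) ?_ ?_ ?_ ?_
    · exact fun n => ((hcc n).pow 2).aestronglyMeasurable
    · refine (integrable_indicator_iff Metric.isClosed_closedBall.measurableSet).2 ?_
      exact (integrableOn_const_iff).2 (Or.inr (isCompact_closedBall _ _).measure_lt_top)
    · intro n
      refine Eventually.of_forall fun p => ?_
      rw [Real.norm_of_nonneg (sq_nonneg _)]
      by_cases hp : p ∈ Metric.closedBall (0 : ℝ × ℝ) (ρ + δ)
      · rw [indicator_of_mem hp]
        have := cv_CS hφ2 (test_memLp (hη n)) p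
        rw [h1 n, Real.sqrt_one, mul_one] at this
        rw [← sq_abs]
        calc |cv φ (η n) p| ^ 2 ≤ (Real.sqrt (∫ z, φ z ^ 2)) ^ 2 := by gcongr
          _ = _ := Real.sq_sqrt (integral_nonneg fun _ => sq_nonneg _)
      · rw [indicator_of_notMem hp]
        have : cv φ (η n) p = 0 := by
          unfold cv
          have : ∀ z, φ z * η n (p - z) = 0 := by
            intro z
            by_cases hz : δ < ‖z‖
            · simp [hφ0 z hz]
            · rw [(hη n).zero_out, mul_zero]
              intro hq
              have h5 := hU hq
              apply hp
              simp only [mem_closedBall_zero_iff] at h5 ⊢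
              have := norm_add_le (p - z) z
              rw [sub_add_cancel] at this
              linarith
          simp [this]
        rw [this]; simp
    · refine Eventually.of_forall fun p => ?_
      have := hw (fun z => φ (p - z)) (hφc.comp (continuous_const.sub continuous_id))
        (hφs.comp_homeomorph (Homeomorph.subLeft p))
      have e : ∀ n, ∫ q, η n q * φ (p - q) = cv φ (η n) p := fun n => by rw [cv_comm]; rfl
      simp_rw [e] at this
      simpa using this.pow 2
  simp only [integral_zero] at hlim
  have hlim2 := hlim.sqrt
  rw [Real.sqrt_zero] at hlim2
  have hfin := ge_of_tendsto' hlim2 (fun n => (hlow n).trans (hup n))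
  have := φ.integral_pos (μ := volume)
  linarith

end Gru

end

section
open MeasureTheory Filter Topology Set
open scoped ContDiff

namespace Gru

noncomputable def glap (ζ : ℝ × ℝ → ℝ) (p : ℝ × ℝ) : ℝ := dX (dX ζ) p + p.1 ^ 2 * dY (dY ζ) p

section
variable {U : Set (ℝ × ℝ)} {η ζ : ℝ × ℝ → ℝ}

lemma en_test (hη : IsTest U η) (hζ : IsTest U ζ) :
    IsTest U (fun p => dX η p * dX ζ p + p.1 ^ 2 * (dY η p * dY ζ p)) :=
  (hζ.dX.mul_smooth hη.dX.smooth).add ((hζ.dY.mul_smooth hη.dY.smooth).mul_smooth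
      (f := fun p => p.1 ^ 2) (by fun_prop))

lemma glap_test (hζ : IsTest U ζ) : IsTest U (glap ζ) :=
  hζ.dX.dX.add (hζ.dY.dY.mul_smooth (f := fun p => p.1 ^ 2) (by fun_prop))

lemma en_nonneg (η : ℝ × ℝ → ℝ) : 0 ≤ en η η := by
  refine integral_nonneg fun p => ?_
  simp only [Pi.zero_apply]
  nlinarith [mul_self_nonneg (dX η p), mul_nonneg (sq_nonneg p.1) (mul_self_nonneg (dY η p))]

lemma IsTest.diffAt (hη : IsTest U η) (p : ℝ × ℝ) : DifferentiableAt ℝ η p := hη.smooth.differentiable (by simp) p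

lemma en_ibp (hη : IsTest U η) (hζ : IsTest U ζ) : en η ζ = - ∫ p, η p * glap ζ p := by
  have h1 : (1 : WithTop ℕ∞) ≤ ∞ := by simp
  have hY : IsTest U (fun p => p.1 ^ 2 * dY ζ p) := hζ.dY.mul_smooth (f := fun p => p.1 ^ 2) (by fun_prop)
  have a1 := ibpX (hη.smooth.of_le h1) (hζ.dX.smooth.of_le h1) hζ.dX.cpt
  have a2 := ibpY (hη.smooth.of_le h1) (hY.smooth.of_le h1) hY.cpt
  have e : ∀ p, dY (fun p => p.1 ^ 2 * dY ζ p) p = p.1 ^ 2 * dY (dY ζ) p := by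
    intro p
    rw [dY_mul (by fun_prop) (hζ.dY.diffAt p)]
    rw [dY_of (f := fun p : ℝ × ℝ => p.1 ^ 2) (c := 0) (by fun_prop) (hasDerivAt_const p.2 (p.1 ^ 2))]
    ring
  simp_rw [e] at a2
  have i1 : Integrable (fun p => dX η p * dX ζ p) := (hζ.dX.mul_smooth hη.dX.smooth).int
  have i2 : Integrable (fun p => p.1 ^ 2 * (dY η p * dY ζ p)) :=
    ((hζ.dY.mul_smooth hη.dY.smooth).mul_smooth (f := fun p => p.1 ^ 2) (by fun_prop)).int
  have i3 : Integrable (fun p => η p * dX (dX ζ) p) := (hζ.dX.dX.mul_smooth hη.smooth).int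
  have i4 : Integrable (fun p => η p * (p.1 ^ 2 * dY (dY ζ) p)) :=
    ((hζ.dY.dY.mul_smooth (f := fun p => p.1 ^ 2) (by fun_prop)).mul_smooth hη.smooth).int
  unfold en glap
  simp_rw [mul_add]
  rw [integral_add i1 i2, integral_add i3 i4, a1, a2]
  have : ∫ p : ℝ × ℝ, p.1 ^ 2 * (dY η p * dY ζ p) = ∫ p : ℝ × ℝ, dY η p * (p.1 ^ 2 * dY ζ p) := by
    congr 1; funext p; ring
  rw [this]; ring

lemma en_quad (hη : IsTest U η) (hζ : IsTest U ζ) (t : ℝ) :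
    en (fun p => η p + t * ζ p) (fun p => η p + t * ζ p) = en η η + 2 * t * en η ζ + t ^ 2 * en ζ ζ := by
  have i1 := (en_test hη hη).int
  have i2 := (en_test hη hζ).int.const_mul (2 * t)
  have i3 := (en_test hζ hζ).int.const_mul (t ^ 2)
  unfold en
  rw [← integral_const_mul, ← integral_const_mul, ← integral_add i1 i2]
  have i4 : Integrable (fun p => (dX η p * dX η p + p.1 ^ 2 * (dY η p * dY η p)) +
    2 * t * (dX η p * dX ζ p + p.1 ^ 2 * (dY η p * dY ζ p))) := i1.add i2
  rw [← integral_add i4 i3]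
  congr 1; funext p
  rw [dX_add (hη.diffAt p) ((hζ.const_mul t).diffAt p), dY_add (hη.diffAt p) ((hζ.const_mul t).diffAt p),
    dX_cmul t (hζ.diffAt p), dY_cmul t (hζ.diffAt p)]
  ring

lemma sq_quad (hη : IsTest U η) (hζ : IsTest U ζ) (t : ℝ) :
    ∫ p, (η p + t * ζ p) ^ 2 = (∫ p, η p ^ 2) + 2 * t * (∫ p, η p * ζ p) + t ^ 2 * ∫ p, ζ p ^ 2 := by
  have i1 := test_sq_int hη
  have i2 := (hζ.mul_smooth hη.smooth).int.const_mul (2 * t)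
  have i3 := (test_sq_int hζ).const_mul (t ^ 2)
  rw [← integral_const_mul, ← integral_const_mul, ← integral_add i1 i2]
  have i4 : Integrable (fun p => η p ^ 2 + 2 * t * (η p * ζ p)) := i1.add i2
  rw [← integral_add i4 i3]
  congr 1; funext p; ring

lemma en_scale (hη : IsTest U η) (t : ℝ) :
    en (fun p => t * η p) (fun p => t * η p) = t ^ 2 * en η η := by
  unfold en
  rw [← integral_const_mul]
  congr 1; funext p
  rw [dX_cmul t (hη.diffAt p), dY_cmul t (hη.diffAt p)]; ring

end

end Gru

end

section
open MeasureTheory Filter Topology Set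
open scoped ContDiff

namespace Gru

noncomputable def Bu : ContDiffBump (0 : ℝ) := ⟨1 / 8, 1 / 4, by norm_num, by norm_num⟩

noncomputable def I0 : ℝ := ∫ s : ℝ, Bu s ^ 2
noncomputable def I1 : ℝ := ∫ s : ℝ, deriv Bu s ^ 2

lemma Bu_smooth : ContDiff ℝ ∞ (Bu : ℝ → ℝ) := Bu.contDiff

lemma Bu_deriv_cont : Continuous (deriv (Bu : ℝ → ℝ)) := Bu_smooth.continuous_deriv (by simp)

lemma Bu_zero {s : ℝ} (hs : 1 / 4 < |s|) : Bu s = 0 ∧ deriv Bu s = 0 := by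
  have hz : ∀ᶠ u in 𝓝 s, Bu u = 0 := by
    filter_upwards [(isOpen_lt continuous_const continuous_abs).mem_nhds hs] with u hu
    refine Bu.zero_of_le_dist ?_
    simp only [dist_zero_right, Real.norm_eq_abs]
    exact le_of_lt hu
  refine ⟨hz.self_of_nhds, ?_⟩
  have : (Bu : ℝ → ℝ) =ᶠ[𝓝 s] fun _ => 0 := hz
  rw [this.deriv_eq]; simp

lemma I0_pos : 0 < I0 := by
  unfold I0
  have hc : HasCompactSupport (fun s => Bu s ^ 2) := by
    exact HasCompactSupport.intro (isCompact_closedBall (0:ℝ) (1/4)) fun s hs => by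
      simp only [Metric.mem_closedBall, dist_zero_right, Real.norm_eq_abs, not_le] at hs
      simp [(Bu_zero hs).1]
  refine Continuous.integral_pos_of_hasCompactSupport_nonneg_nonzero (x := 0) (Bu.continuous.pow 2) hc
    (fun s => sq_nonneg _) ?_
  rw [Bu.one_of_mem_closedBall (by simp [Bu])]; norm_num

lemma I1_nonneg : 0 ≤ I1 := integral_nonneg fun _ => sq_nonneg _

noncomputable def tst (a R : ℝ) (p : ℝ × ℝ) : ℝ := Bu ((p.1 - (a + R)) / R) * Bu (p.2 / R ^ 2)

lemma tst_test {a R : ℝ} (hR : 1 ≤ R) : IsTest (Om a R) (tst a R) := by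
  have hR0 : 0 < R := by linarith
  have hcl : IsClosed {p : ℝ × ℝ | |p.1 - (a + R)| ≤ R / 4 ∧ |p.2| ≤ R ^ 2 / 4} :=
    IsClosed.inter (s₁ := {p : ℝ × ℝ | |p.1 - (a + R)| ≤ R / 4}) (s₂ := {p : ℝ × ℝ | |p.2| ≤ R ^ 2 / 4})
      (isClosed_le (by fun_prop) continuous_const)
      (isClosed_le (by fun_prop) continuous_const)
  have hts : tsupport (tst a R) ⊆ {p : ℝ × ℝ | |p.1 - (a + R)| ≤ R / 4 ∧ |p.2| ≤ R ^ 2 / 4} := by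
    refine closure_minimal ?_ ?_
    · intro p hp
      simp only [Function.mem_support, tst, ne_eq, mul_eq_zero, not_or] at hp
      constructor
      · by_contra h
        apply hp.1
        refine (Bu_zero ?_).1
        rw [abs_div, abs_of_pos hR0, lt_div_iff₀ hR0]; linarith
      · by_contra h
        apply hp.2
        refine (Bu_zero ?_).1
        rw [abs_div, abs_of_pos (by positivity : 0 < R ^ 2), lt_div_iff₀ (by positivity)]; linarith
    · exact hcl
  have hsub : {p : ℝ × ℝ | |p.1 - (a + R)| ≤ R / 4 ∧ |p.2| ≤ R ^ 2 / 4} ⊆ Om a R := by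
    rintro p ⟨h1, h2⟩
    change 0 < psi a R p
    unfold psi
    have e1 : (p.1 - (a + R)) ^ 4 ≤ (R / 4) ^ 4 := by
      rw [← Even.pow_abs (by decide : Even 4)]; gcongr
    have e2 : p.2 ^ 2 ≤ (R ^ 2 / 4) ^ 2 := by
      rw [← sq_abs]; gcongr
    have : 0 < R ^ 4 := by positivity
    nlinarith
  refine ⟨?_, ?_, hts.trans hsub⟩
  · unfold tst
    exact (Bu_smooth.comp (by fun_prop)).mul (Bu_smooth.comp (by fun_prop))
  · refine ((isCompact_Icc (a := a + R - R / 4) (b := a + R + R / 4)).prod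
      (isCompact_Icc (a := - (R ^ 2 / 4)) (b := R ^ 2 / 4))).of_isClosed_subset (isClosed_tsupport _) (hts.trans ?_)
    · rintro p ⟨h1, h2⟩
      rw [abs_le] at h1 h2
      exact ⟨⟨by linarith, by linarith⟩, h2⟩

lemma sc_int {g : ℝ → ℝ} (hg : Integrable g) (c : ℝ) {r : ℝ} (hr : 0 < r) :
    Integrable (fun x => g ((x - c) / r)) ∧ ∫ x, g ((x - c) / r) = r * ∫ x, g x := by
  refine ⟨(hg.comp_div hr.ne').comp_sub_right c, ?_⟩
  rw [integral_sub_right_eq_self (fun x => g (x / r)) c, Measure.integral_comp_div, abs_of_pos hr, smul_eq_mul]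

lemma iB0 : Integrable (fun s => Bu s ^ 2) :=
  (Bu.continuous.pow 2).integrable_of_hasCompactSupport
    (HasCompactSupport.intro (isCompact_closedBall (0:ℝ) (1/4)) fun s hs => by
      simp only [Metric.mem_closedBall, dist_zero_right, Real.norm_eq_abs, not_le] at hs
      simp [(Bu_zero hs).1])
lemma iB1 : Integrable (fun s => deriv Bu s ^ 2) :=
  (Bu_deriv_cont.pow 2).integrable_of_hasCompactSupport
    (HasCompactSupport.intro (isCompact_closedBall (0:ℝ) (1/4)) fun s hs => by
      simp only [Metric.mem_closedBall, dist_zero_right, Real.norm_eq_abs, not_le] at hs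
      simp [(Bu_zero hs).2])

lemma tst_sq {a R : ℝ} (hR : 1 ≤ R) : ∫ p, tst a R p ^ 2 = (R * I0) * (R ^ 2 * I0) := by
  have hR0 : 0 < R := by linarith
  have h1 := (sc_int iB0 (a + R) hR0).2
  have h2 := (sc_int iB0 0 (show 0 < R ^ 2 by positivity)).2
  simp only [sub_zero] at h2
  unfold tst
  simp only [mul_pow]
  rw [show (volume : Measure (ℝ × ℝ)) = (volume : Measure ℝ).prod volume from rfl,
    integral_prod_mul (fun x => Bu ((x - (a + R)) / R) ^ 2) (fun y => Bu (y / R ^ 2) ^ 2), h1, h2]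
  rfl

lemma tst_en {a R : ℝ} (ha : 0 < a) (ha1 : a < 1) (hR : 1 ≤ R) :
    en (tst a R) (tst a R) ≤ (R ^ 2)⁻¹ * ((R * I1) * (R ^ 2 * I0) + 6 * ((R * I0) * (R ^ 2 * I1))) := by
  have hR0 : 0 < R := by linarith
  have hR2 : 0 < R ^ 2 := by positivity
  have hT := tst_test (a := a) hR
  have j1 := sc_int iB0 (a + R) hR0
  have j2 := sc_int iB0 0 hR2
  have k1 := sc_int iB1 (a + R) hR0
  have k2 := sc_int iB1 0 hR2
  simp only [sub_zero] at j2 k2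
  have iA := k1.1.mul_prod j2.1
  have iB := (j1.1.mul_prod k2.1).const_mul 6
  have eA := integral_prod_mul (μ := volume) (ν := volume)
    (fun x => deriv Bu ((x - (a + R)) / R) ^ 2) (fun y => Bu (y / R ^ 2) ^ 2)
  have eB := integral_prod_mul (μ := volume) (ν := volume)
    (fun x => Bu ((x - (a + R)) / R) ^ 2) (fun y => deriv Bu (y / R ^ 2) ^ 2)
  rw [k1.2, j2.2] at eA
  rw [j1.2, k2.2] at eB
  have hAB : (R ^ 2)⁻¹ * ((R * I1) * (R ^ 2 * I0) + 6 * ((R * I0) * (R ^ 2 * I1))) =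
     ∫ p : ℝ × ℝ, (R ^ 2)⁻¹ * (deriv Bu ((p.1 - (a + R)) / R) ^ 2 * Bu (p.2 / R ^ 2) ^ 2 +
      6 * (Bu ((p.1 - (a + R)) / R) ^ 2 * deriv Bu (p.2 / R ^ 2) ^ 2)) := by
    rw [integral_const_mul, show (volume : Measure (ℝ × ℝ)) = (volume : Measure ℝ).prod volume from rfl,
      integral_add iA iB, integral_const_mul, eA, eB]
    rfl
  rw [hAB]
  refine integral_mono (en_test hT hT).int ((iA.add iB).const_mul _) ?_
  intro p
  have hBd : Differentiable ℝ (Bu : ℝ → ℝ) := Bu_smooth.differentiable (by simp)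
  have ex : dX (tst a R) p = deriv Bu ((p.1 - (a + R)) / R) / R * Bu (p.2 / R ^ 2) := by
    refine dX_of (hT.diffAt p) ?_
    have h1 : HasDerivAt (fun x : ℝ => (x - (a + R)) / R) (1 / R) p.1 :=
      ((hasDerivAt_id p.1).sub_const (a + R)).div_const R
    have h2 := (HasDerivAt.comp p.1 (hBd _).hasDerivAt h1).mul_const (Bu (p.2 / R ^ 2))
    exact h2.congr_deriv (by ring)
  have ey : dY (tst a R) p = Bu ((p.1 - (a + R)) / R) * (deriv Bu (p.2 / R ^ 2) / R ^ 2) := by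
    refine dY_of (hT.diffAt p) ?_
    have h1 : HasDerivAt (fun y : ℝ => y / R ^ 2) (1 / R ^ 2) p.2 := (hasDerivAt_id p.2).div_const _
    have h2 := (HasDerivAt.comp p.2 (hBd _).hasDerivAt h1).const_mul (Bu ((p.1 - (a + R)) / R))
    exact h2.congr_deriv (by ring)
  simp only
  rw [ex, ey]
  by_cases hz : 1 / 4 < |(p.1 - (a + R)) / R|
  · simp [(Bu_zero hz).1, (Bu_zero hz).2]
  · rw [abs_div, abs_of_pos hR0, lt_div_iff₀ hR0, not_lt, abs_le] at hz
    have hx : p.1 ^ 2 ≤ 6 * R ^ 2 := by nlinarith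
    generalize Bu ((p.1 - (a + R)) / R) = b1
    generalize deriv Bu ((p.1 - (a + R)) / R) = b2
    generalize Bu (p.2 / R ^ 2) = b3
    generalize deriv Bu (p.2 / R ^ 2) = b4
    have h5 : (R ^ 2)⁻¹ * (b2 ^ 2 * b3 ^ 2 + 6 * (b1 ^ 2 * b4 ^ 2)) -
      (b2 / R * b3 * (b2 / R * b3) + p.1 ^ 2 * (b1 * (b4 / R ^ 2) * (b1 * (b4 / R ^ 2)))) =
      (6 * R ^ 2 - p.1 ^ 2) * (b1 * b4 / R ^ 2) ^ 2 := by
      field_simp; ring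
    have h6 : 0 ≤ (6 * R ^ 2 - p.1 ^ 2) * (b1 * b4 / R ^ 2) ^ 2 := mul_nonneg (by linarith) (sq_nonneg _)
    linarith

/-- the universal constant -/
noncomputable def C0 : ℝ := 7 * I1 / I0

lemma tst_ratio {a R : ℝ} (ha : 0 < a) (ha1 : a < 1) (hR : 1 ≤ R) :
    en (tst a R) (tst a R) ≤ C0 / R ^ 2 * ∫ p, tst a R p ^ 2 := by
  refine (tst_en ha ha1 hR).trans (le_of_eq ?_)
  rw [tst_sq hR, C0]
  have := I0_pos
  have : 0 < R := by linarith
  field_simp; ring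

end Gru

end

section
open MeasureTheory Filter Topology Set
open scoped ContDiff

namespace Gru

noncomputable def Sp (a R : ℝ) : Set ℝ := {t | ∃ η, IsTest (Om a R) η ∧ ∫ p, η p ^ 2 = 1 ∧ en η η = t}

lemma Sp_bdd (a R : ℝ) : BddBelow (Sp a R) := ⟨0, by rintro t ⟨η, -, -, rfl⟩; exact en_nonneg η⟩

lemma Sp_mem {a R : ℝ} {η : ℝ × ℝ → ℝ} (hη : IsTest (Om a R) η) (h : 0 < ∫ p, η p ^ 2) :
    (∫ p, η p ^ 2)⁻¹ * en η η ∈ Sp a R := by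
  set c := ∫ p, η p ^ 2 with hc
  have hs : ((Real.sqrt c)⁻¹) ^ 2 = c⁻¹ := by rw [inv_pow, Real.sq_sqrt h.le]
  refine ⟨fun p => (Real.sqrt c)⁻¹ * η p, hη.const_mul _, ?_, ?_⟩
  · simp only [mul_pow]
    rw [integral_const_mul, ← hc, hs, inv_mul_cancel₀ h.ne']
  · rw [en_scale hη, hs]

lemma Sp_lower {a R : ℝ} {η : ℝ × ℝ → ℝ} (hη : IsTest (Om a R) η) :
    sInf (Sp a R) * ∫ p, η p ^ 2 ≤ en η η := by
  rcases (integral_nonneg fun p => sq_nonneg (η p) : 0 ≤ ∫ p, η p ^ 2).eq_or_lt with h | h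
  · rw [← h, mul_zero]; exact en_nonneg η
  · have := csInf_le (Sp_bdd a R) (Sp_mem hη h)
    rw [inv_mul_eq_div, le_div_iff₀ h] at this
    exact this

lemma tst_pos {a R : ℝ} (hR : 1 ≤ R) : 0 < ∫ p, tst a R p ^ 2 := by
  rw [tst_sq hR]; have := I0_pos; positivity

lemma Sp_nonempty {a R : ℝ} (hR : 1 ≤ R) : (Sp a R).Nonempty := ⟨_, Sp_mem (tst_test hR) (tst_pos hR)⟩

lemma Sp_upper {a R : ℝ} (ha : 0 < a) (ha1 : a < 1) (hR : 1 ≤ R) : sInf (Sp a R) ≤ C0 / R ^ 2 := by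
  have h := (Sp_lower (tst_test (a := a) hR)).trans (tst_ratio ha ha1 hR)
  exact le_of_mul_le_mul_right h (tst_pos hR)

lemma sq_le_hardy {a R : ℝ} (hR : 1 ≤ R) {η : ℝ × ℝ → ℝ} (hη : IsTest (Om a R) η) :
    ∫ p, η p ^ 2 ≤ R ^ 8 * ∫ p, ((psi a R p)⁻¹ * η p) ^ 2 := by
  rw [← integral_const_mul]
  refine integral_mono (test_sq_int hη) ((test_sq_int hη.div_psi).const_mul _) fun p => ?_
  simp only
  by_cases hp : p ∈ Om a R
  · have h1 : 0 < psi a R p := hp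
    have h2 := psi_le a R p
    have h3 : (psi a R p) ^ 2 ≤ (R ^ 4) ^ 2 := pow_le_pow_left₀ h1.le h2 2
    have h4 : η p ^ 2 = (psi a R p) ^ 2 * ((psi a R p)⁻¹ * η p) ^ 2 := by field_simp
    calc η p ^ 2 = (psi a R p) ^ 2 * ((psi a R p)⁻¹ * η p) ^ 2 := h4
      _ ≤ (R ^ 4) ^ 2 * ((psi a R p)⁻¹ * η p) ^ 2 := by gcongr
      _ = _ := by ring
  · rw [hη.zero_out hp]; simp

lemma Sp_inf_pos {a R : ℝ} (ha : 0 < a) (ha1 : a < 1) (hR : 1 ≤ R) : 0 < sInf (Sp a R) := by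
  have hR8 : 0 < R ^ 8 := by positivity
  refine lt_of_lt_of_le (show 0 < a ^ 2 / R ^ 8 by positivity) (le_csInf (Sp_nonempty hR) ?_)
  rintro t ⟨η, hη, h1, rfl⟩
  have h2 := hardy ha ha1 hR hη
  have h3 := sq_le_hardy hR hη
  rw [h1] at h3
  rw [div_le_iff₀ hR8]
  have := mul_le_mul_of_nonneg_left h3 (sq_nonneg a)
  nlinarith

lemma Om_bdd {a R : ℝ} (hR : 1 ≤ R) (ha : 0 < a) : Om a R ⊆ Metric.closedBall 0 (a + 2 * R + R ^ 2) := by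
  intro p hp
  obtain ⟨h1, h2, h3⟩ := Om_x (a := a) (R := R) (by linarith) (le_of_lt hp)
  rw [mem_closedBall_zero_iff, Prod.norm_def]
  have : 0 ≤ R ^ 2 := by positivity
  refine max_le ?_ ?_
  · rw [Real.norm_of_nonneg (by linarith)]; linarith
  · rw [Real.norm_eq_abs]; linarith

lemma grad_le {a R : ℝ} (ha : 0 < a) (ha1 : a < 1) (hR : 1 ≤ R) {η : ℝ × ℝ → ℝ} (hη : IsTest (Om a R) η) :
    ∫ p, (dX η p ^ 2 + dY η p ^ 2) ≤ (a ^ 2)⁻¹ * en η η := by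
  unfold en
  rw [← integral_const_mul]
  have i : Integrable (fun p => dX η p ^ 2 + dY η p ^ 2) := (test_sq_int hη.dX).add (test_sq_int hη.dY)
  refine integral_mono i ((en_test hη hη).int.const_mul _) fun p => ?_
  simp only
  by_cases hp : p ∈ Om a R
  · have h1 := (Om_x (a := a) (R := R) (by linarith) (le_of_lt hp)).1
    rw [← div_eq_inv_mul, le_div_iff₀ (by positivity)]
    have e1 : a ^ 2 ≤ 1 := by nlinarith
    have e2 : a ^ 2 ≤ p.1 ^ 2 := by nlinarith
    have := mul_le_mul_of_nonneg_right e1 (sq_nonneg (dX η p))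
    have := mul_le_mul_of_nonneg_right e2 (sq_nonneg (dY η p))
    nlinarith
  · rw [hη.dX.zero_out hp, hη.dY.zero_out hp]; simp

lemma q_CS {a R : ℝ} {η ζ : ℝ × ℝ → ℝ} (hη : IsTest (Om a R) η) (hζ : IsTest (Om a R) ζ) :
    (en η ζ - sInf (Sp a R) * ∫ p, η p * ζ p) ^ 2 ≤
      (en η η - sInf (Sp a R) * ∫ p, η p ^ 2) * (en ζ ζ - sInf (Sp a R) * ∫ p, ζ p ^ 2) := by
  set l := sInf (Sp a R)
  have h : ∀ t : ℝ, 0 ≤ (en ζ ζ - l * ∫ p, ζ p ^ 2) * (t * t) + (2 * (en η ζ - l * ∫ p, η p * ζ p)) * t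
      + (en η η - l * ∫ p, η p ^ 2) := by
    intro t
    have h1 := Sp_lower (hη.add (hζ.const_mul t))
    rw [en_quad hη hζ, sq_quad hη hζ] at h1
    change l * _ ≤ _ at h1
    linarith
  have := discrim_le_zero h
  unfold discrim at this
  nlinarith

theorem weak_eig {a R : ℝ} (ha : 0 < a) (ha1 : a < 1) (hR : 1 ≤ R) :
    ∃ (lam : ℝ) (G : ℝ × ℝ → ℝ), 0 < lam ∧ lam ≤ C0 / R ^ 2 ∧ MemLp G 2 volume ∧ (∀ p, p ∉ Om a R → G p = 0) ∧
      (¬ G =ᵐ[volume] fun _ => 0) ∧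
      ∀ ζ, IsTest (Om a R) ζ → ∫ p, G p * (psi a R p * (glap ζ p + lam * ζ p)) = 0 := by
  set l := sInf (Sp a R) with hl
  obtain ⟨u, hu, hut, hum⟩ := exists_seq_tendsto_sInf (Sp_nonempty (a := a) hR) (Sp_bdd a R)
  choose η hη h1 hen using hum
  have hen' : ∀ n, en (η n) (η n) ≤ u 0 := fun n => by rw [hen n]; exact hu (Nat.zero_le n)
  have ha2 : 0 < a ^ 2 := by positivity
  have hgb : ∀ n, ∫ p, ((psi a R p)⁻¹ * η n p) ^ 2 ≤ (a ^ 2)⁻¹ * u 0 := by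
    intro n
    have := (hardy ha ha1 hR (hη n)).trans (hen' n)
    rw [← div_eq_inv_mul, le_div_iff₀ ha2]; linarith
  obtain ⟨G₀, hG₀, φ, hφ, hlim⟩ := weak_limit (fun n => test_memLp (hη n).div_psi) hgb
  have hOm := (Om_open a R).measurableSet
  let G := indicator (Om a R) G₀
  have hG : MemLp G 2 volume := hG₀.indicator hOm
  have hlimG : ∀ h : ℝ × ℝ → ℝ, Continuous h → HasCompactSupport h →
      Tendsto (fun n => ∫ p, η (φ n) p * h p) atTop (𝓝 (∫ p, G p * (psi a R p * h p))) := by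
    intro h hc hs
    have hm : MemLp (fun p => psi a R p * h p) 2 volume :=
      ((psi_smooth a R).continuous.mul hc).memLp_of_hasCompactSupport hs.mul_left
    have hm2 := hm.indicator hOm
    have := hlim _ hm2
    have e1 : ∀ n, ∫ p, (psi a R p)⁻¹ * η (φ n) p * indicator (Om a R) (fun p => psi a R p * h p) p
        = ∫ p, η (φ n) p * h p := by
      intro n
      congr 1; funext p
      by_cases hp : p ∈ Om a R
      · rw [indicator_of_mem hp]
        have : psi a R p ≠ 0 := ne_of_gt hp
        field_simp
      · rw [indicator_of_notMem hp, (hη _).zero_out hp]; simp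
    have e2 : ∫ p, G₀ p * indicator (Om a R) (fun p => psi a R p * h p) p = ∫ p, G p * (psi a R p * h p) := by
      congr 1; funext p
      by_cases hp : p ∈ Om a R <;> simp [G, hp]
    simp_rw [e1, e2] at this
    exact this
  refine ⟨l, G, Sp_inf_pos ha ha1 hR, Sp_upper ha ha1 hR, hG, fun p hp => by simp [G, hp], ?_, ?_⟩
  · intro h0
    refine rellich (η := fun n => η (φ n)) (fun n => hη (φ n)) (Om_bdd hR ha) (fun n => h1 (φ n))
      (M := (a ^ 2)⁻¹ * u 0) ?_ ?_
    · intro n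
      refine (grad_le ha ha1 hR (hη (φ n))).trans ?_
      exact mul_le_mul_of_nonneg_left (hen' _) (by positivity)
    · intro h hc hs
      have := hlimG h hc hs
      have e : ∫ p, G p * (psi a R p * h p) = 0 := by
        rw [← integral_zero (ℝ × ℝ) ℝ (μ := volume)]
        refine integral_congr_ae ?_
        filter_upwards [h0] with p hp
        rw [hp, zero_mul]
      rwa [e] at this
  · intro ζ hζ
    have hT : IsTest (Om a R) (fun p => glap ζ p + l * ζ p) := (glap_test hζ).add (hζ.const_mul l)
    refine tendsto_nhds_unique (hlimG _ hT.cont hT.cpt) ?_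
    have e : ∀ n, ∫ p, η n p * (glap ζ p + l * ζ p) = -(en (η n) ζ - l * ∫ p, η n p * ζ p) := by
      intro n
      rw [en_ibp (hη n) hζ]
      have i1 : Integrable (fun p => η n p * glap ζ p) := ((glap_test hζ).mul_smooth (hη n).smooth).int
      have i2 : Integrable (fun p => l * (η n p * ζ p)) := (hζ.mul_smooth (hη n).smooth).int.const_mul l
      rw [← integral_const_mul, neg_sub, sub_neg_eq_add, add_comm, ← integral_add i1 i2]
      congr 1; funext p; ring
    have hz : Tendsto (fun n => ∫ p, η n p * (glap ζ p + l * ζ p)) atTop (𝓝 0) := by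
      rw [tendsto_zero_iff_abs_tendsto_zero]
      have hb : ∀ n, |∫ p, η n p * (glap ζ p + l * ζ p)| ≤
          Real.sqrt ((u n - l) * (en ζ ζ - l * ∫ p, ζ p ^ 2)) := by
        intro n
        apply Real.abs_le_sqrt
        rw [e, neg_sq]
        have := q_CS (hη n) hζ
        rw [h1 n, hen n, ← hl, mul_one] at this
        exact this
      have ht : Tendsto (fun n => Real.sqrt ((u n - l) * (en ζ ζ - l * ∫ p, ζ p ^ 2))) atTop (𝓝 0) := by
        have := ((hut.sub_const l).mul_const (en ζ ζ - l * ∫ p, ζ p ^ 2)).sqrt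
        rwa [← hl, sub_self, zero_mul, Real.sqrt_zero] at this
      exact squeeze_zero (fun n => abs_nonneg _) hb ht
    exact hz.comp hφ.tendsto_atTop

end Gru

end

section
open MeasureTheory Filter Topology Set
open scoped ContDiff

namespace Gru

lemma bridgeX {u : ℝ × ℝ → ℝ} {p : ℝ × ℝ} (hu : ContDiffAt ℝ 2 u p) :
    deriv (deriv (fun x => u (x, p.2))) p.1 = dX (dX u) p := by
  have h1 : ∀ᶠ q in 𝓝 p, DifferentiableAt ℝ u q := by
    filter_upwards [hu.eventually (by simp)] with q hq
    exact hq.differentiableAt (by simp)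
  have hd : DifferentiableAt ℝ (dX u) p := by
    have : ContDiffAt ℝ 1 (fderiv ℝ u) p := hu.fderiv_right (by norm_num)
    exact (this.differentiableAt (by simp)).clm_apply (differentiableAt_const _)
  have hs : ∀ (f : ℝ × ℝ → ℝ) (x : ℝ), DifferentiableAt ℝ f (x, p.2) → HasDerivAt (fun x => f (x, p.2)) (dX f (x, p.2)) x := by
    intro f x hf
    have h2 : HasDerivAt (fun x : ℝ => (x, p.2)) ((1:ℝ), (0:ℝ)) x := (hasDerivAt_id x).prodMk (hasDerivAt_const x p.2)
    exact hf.hasFDerivAt.comp_hasDerivAt x h2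
  have hc : Tendsto (fun x : ℝ => (x, p.2)) (𝓝 p.1) (𝓝 p) := by
    have : Continuous (fun x : ℝ => (x, p.2)) := by fun_prop
    simpa using this.tendsto p.1
  have he : deriv (fun x => u (x, p.2)) =ᶠ[𝓝 p.1] fun x => dX u (x, p.2) := by
    filter_upwards [hc.eventually h1] with x hx
    exact (hs u x hx).deriv
  rw [he.deriv_eq]
  exact (hs (dX u) p.1 hd).deriv

lemma bridgeY {u : ℝ × ℝ → ℝ} {p : ℝ × ℝ} (hu : ContDiffAt ℝ 2 u p) :
    deriv (deriv (fun y => u (p.1, y))) p.2 = dY (dY u) p := by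
  have h1 : ∀ᶠ q in 𝓝 p, DifferentiableAt ℝ u q := by
    filter_upwards [hu.eventually (by simp)] with q hq
    exact hq.differentiableAt (by simp)
  have hd : DifferentiableAt ℝ (dY u) p := by
    have : ContDiffAt ℝ 1 (fderiv ℝ u) p := hu.fderiv_right (by norm_num)
    exact (this.differentiableAt (by simp)).clm_apply (differentiableAt_const _)
  have hs : ∀ (f : ℝ × ℝ → ℝ) (x : ℝ), DifferentiableAt ℝ f (p.1, x) → HasDerivAt (fun x => f (p.1, x)) (dY f (p.1, x)) x := by
    intro f x hf
    have h2 : HasDerivAt (fun x : ℝ => (p.1, x)) ((0:ℝ), (1:ℝ)) x := (hasDerivAt_const x p.1).prodMk (hasDerivAt_id x)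
    exact hf.hasFDerivAt.comp_hasDerivAt x h2
  have hc : Tendsto (fun x : ℝ => (p.1, x)) (𝓝 p.2) (𝓝 p) := by
    have : Continuous (fun x : ℝ => (p.1, x)) := by fun_prop
    simpa using this.tendsto p.2
  have he : deriv (fun x => u (p.1, x)) =ᶠ[𝓝 p.2] fun x => dY u (p.1, x) := by
    filter_upwards [hc.eventually h1] with x hx
    exact (hs u x hx).deriv
  rw [he.deriv_eq]
  exact (hs (dY u) p.2 hd).deriv

/-- the straightening map and its inverse -/
noncomputable def Th (p : ℝ × ℝ) : ℝ × ℝ := (p.1 ^ 2 / 2, p.2)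
noncomputable def Ti (q : ℝ × ℝ) : ℝ × ℝ := (Real.sqrt (2 * q.1), q.2)

lemma Th_smooth : ContDiff ℝ ∞ Th := by unfold Th; fun_prop
lemma Ti_cont : Continuous Ti := by unfold Ti; fun_prop

lemma Ti_Th {p : ℝ × ℝ} (hp : 0 ≤ p.1) : Ti (Th p) = p := by
  unfold Ti Th
  ext
  · simp only; rw [show 2 * (p.1 ^ 2 / 2) = p.1 ^ 2 by ring, Real.sqrt_sq hp]
  · rfl
lemma Th_Ti {q : ℝ × ℝ} (hq : 0 ≤ q.1) : Th (Ti q) = q := by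
  unfold Ti Th
  ext
  · simp only; rw [Real.sq_sqrt (by linarith)]; ring
  · rfl

/-- the lift -/
noncomputable def lift (f : ℝ × ℝ → ℝ) (p : ℝ × ℝ) : ℝ := (Real.sqrt p.1)⁻¹ * f (Th p)

lemma sqrt_inv_smooth {p : ℝ × ℝ} (hp : 0 < p.1) : ContDiffAt ℝ ∞ (fun p : ℝ × ℝ => (Real.sqrt p.1)⁻¹) p :=
  (contDiffAt_fst.sqrt hp.ne').inv (Real.sqrt_pos.2 hp).ne'

lemma lift_smooth {f : ℝ × ℝ → ℝ} {p : ℝ × ℝ} {n : WithTop ℕ∞} (hn : n ≤ ∞) (hp : 0 < p.1) (hf : ContDiffAt ℝ n f (Th p)) :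
    ContDiffAt ℝ n (lift f) p :=
  ((sqrt_inv_smooth hp).of_le hn).mul (hf.comp p (Th_smooth.contDiffAt.of_le hn))

lemma lift_1d {h : ℝ → ℝ} {x : ℝ} (hx : 0 < x) (hh : ContDiffAt ℝ 2 h (x ^ 2 / 2)) :
    deriv (deriv (fun x => (Real.sqrt x)⁻¹ * h (x ^ 2 / 2))) x =
      (Real.sqrt x)⁻¹ * (x ^ 2 * deriv (deriv h) (x ^ 2 / 2) + 3 / (4 * x ^ 2) * h (x ^ 2 / 2)) := by
  have hsq : ∀ t : ℝ, HasDerivAt (fun x : ℝ => x ^ 2 / 2) t t := fun t =>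
    ((hasDerivAt_pow 2 t).div_const 2).congr_deriv (by simp)
  have hinv : ∀ t : ℝ, 0 < t → HasDerivAt (fun x => (Real.sqrt x)⁻¹) (-(1 / 2) * (t⁻¹ * (Real.sqrt t)⁻¹)) t := by
    intro t ht
    have hs := Real.sqrt_pos.2 ht
    refine ((Real.hasDerivAt_sqrt ht.ne').fun_inv hs.ne').congr_deriv ?_
    rw [Real.sq_sqrt ht.le]; field_simp
  have hev : ∀ᶠ t in 𝓝 x, 0 < t ∧ DifferentiableAt ℝ h (t ^ 2 / 2) := by
    refine (lt_mem_nhds hx).and ?_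
    have h1 : ∀ᶠ s in 𝓝 (x ^ 2 / 2), DifferentiableAt ℝ h s := by
      filter_upwards [hh.eventually (by simp)] with q hq
      exact hq.differentiableAt (by simp)
    exact (hsq x).continuousAt.tendsto.eventually h1
  have he : deriv (fun x => (Real.sqrt x)⁻¹ * h (x ^ 2 / 2)) =ᶠ[𝓝 x]
      fun t => -(1 / 2) * (t⁻¹ * (Real.sqrt t)⁻¹) * h (t ^ 2 / 2) + (Real.sqrt t)⁻¹ * (deriv h (t ^ 2 / 2) * t) := by
    filter_upwards [hev] with t ht
    exact ((hinv t ht.1).fun_mul (ht.2.hasDerivAt.comp t (hsq t))).deriv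
  rw [he.deriv_eq]
  have hd : DifferentiableAt ℝ h (x ^ 2 / 2) := hh.differentiableAt (by simp)
  have hdd : DifferentiableAt ℝ (deriv h) (x ^ 2 / 2) := by
    have : ContDiffAt ℝ 1 (fderiv ℝ h) (x ^ 2 / 2) := hh.fderiv_right (by norm_num)
    exact (this.differentiableAt (by simp)).clm_apply (differentiableAt_const _)
  have hs := Real.sqrt_pos.2 hx
  have hA := (((hasDerivAt_inv hx.ne').fun_mul (hinv x hx)).const_mul (-(1/2))).fun_mul (hd.hasDerivAt.comp x (hsq x))
  have hB := (hinv x hx).fun_mul ((hdd.hasDerivAt.comp x (hsq x)).fun_mul (hasDerivAt_id x))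
  have hAB := (hA.fun_add hB).deriv
  refine hAB.trans ?_
  simp only [Function.comp, id]
  field_simp
  ring

lemma lift_XX {f : ℝ × ℝ → ℝ} {p : ℝ × ℝ} (hp : 0 < p.1) (hf : ContDiffAt ℝ 2 f (Th p)) :
    deriv (deriv (fun x => lift f (x, p.2))) p.1 =
      (Real.sqrt p.1)⁻¹ * (p.1 ^ 2 * dX (dX f) (Th p) + 3 / (4 * p.1 ^ 2) * f (Th p)) := by
  rw [← bridgeX hf]
  refine lift_1d (h := fun s => f (s, p.2)) hp ?_
  exact ContDiffAt.comp (p.1 ^ 2 / 2) hf (by fun_prop)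

lemma lift_YY {f : ℝ × ℝ → ℝ} {p : ℝ × ℝ} (hf : ContDiffAt ℝ 2 f (Th p)) :
    deriv (deriv (fun y => lift f (p.1, y))) p.2 = (Real.sqrt p.1)⁻¹ * dY (dY f) (Th p) := by
  rw [← bridgeY hf]
  simp only [lift, Th]
  have : deriv (fun y => (Real.sqrt p.1)⁻¹ * f (p.1 ^ 2 / 2, y)) = fun y => (Real.sqrt p.1)⁻¹ * deriv (fun y => f (p.1 ^ 2 / 2, y)) y := by
    funext y; exact deriv_const_mul_field _
  rw [this]; exact deriv_const_mul_field _

lemma lift_all {f : ℝ × ℝ → ℝ} {p : ℝ × ℝ} (hp : 0 < p.1) (hf : ContDiffAt ℝ 2 f (Th p)) (lam : ℝ) :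
    deriv (deriv (fun x => lift f (x, p.2))) p.1 + p.1 ^ 2 * deriv (deriv (fun y => lift f (p.1, y))) p.2 + lam * lift f p =
      (Real.sqrt p.1)⁻¹ * (p.1 ^ 2 * lap f (Th p) + (3 / (4 * p.1 ^ 2) + lam) * f (Th p)) := by
  rw [lift_XX hp hf, lift_YY hf]
  unfold lap lift; ring

lemma lift_glap {f : ℝ × ℝ → ℝ} {p : ℝ × ℝ} (hp : 0 < p.1) (hf : ContDiffAt ℝ 2 f (Th p)) (lam : ℝ) :
    glap (lift f) p + lam * lift f p =
      (Real.sqrt p.1)⁻¹ * (p.1 ^ 2 * lap f (Th p) + (3 / (4 * p.1 ^ 2) + lam) * f (Th p)) := by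
  rw [← lift_all hp hf]
  have := lift_smooth two_le_inf hp hf
  rw [bridgeX this, bridgeY this]; rfl

end Gru

end

section
open MeasureTheory Filter Topology Set
open scoped ContDiff

namespace Gru

/-- the straightened domain -/
def Dm (a R : ℝ) : Set (ℝ × ℝ) := Ti ⁻¹' (Om a R)

lemma Dm_open (a R : ℝ) : IsOpen (Dm a R) := (Om_open a R).preimage Ti_cont

section cov
variable {a R : ℝ}

lemma Om_pos (ha : 0 < a) (hR : 1 ≤ R) {p : ℝ × ℝ} (hp : p ∈ Om a R) : 0 < p.1 :=
  lt_of_lt_of_le ha (Om_x (by linarith) (le_of_lt hp)).1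

lemma Dm_low (ha : 0 < a) (hR : 1 ≤ R) {q : ℝ × ℝ} (hq : 0 ≤ psi a R (Ti q)) : a ^ 2 / 2 ≤ q.1 := by
  have h := (Om_x (by linarith) hq).1
  simp only [Ti] at h
  have h2 : 0 < 2 * q.1 := Real.sqrt_pos.1 (lt_of_lt_of_le ha h)
  have := Real.sq_sqrt h2.le
  nlinarith

lemma Dm_pos (ha : 0 < a) (hR : 1 ≤ R) {q : ℝ × ℝ} (hq : q ∈ Dm a R) : 0 < q.1 :=
  lt_of_lt_of_le (by positivity) (Dm_low ha hR (le_of_lt hq))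

lemma Th_mem (ha : 0 < a) (hR : 1 ≤ R) {p : ℝ × ℝ} (hp : p ∈ Om a R) : Th p ∈ Dm a R := by
  show Ti (Th p) ∈ Om a R
  rwa [Ti_Th (Om_pos ha hR hp).le]

lemma Th_image (ha : 0 < a) (hR : 1 ≤ R) : Th '' Om a R = Dm a R := by
  ext q; constructor
  · rintro ⟨p, hp, rfl⟩; exact Th_mem ha hR hp
  · intro hq; exact ⟨Ti q, hq, Th_Ti (Dm_pos ha hR hq).le⟩

lemma Th_inj (ha : 0 < a) (hR : 1 ≤ R) : InjOn Th (Om a R) := by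
  intro p hp q hq h
  rw [← Ti_Th (Om_pos ha hR hp).le, h, Ti_Th (Om_pos ha hR hq).le]

noncomputable def Thd (p : ℝ × ℝ) : ℝ × ℝ →L[ℝ] ℝ × ℝ :=
  ContinuousLinearMap.prodMap (p.1 • ContinuousLinearMap.id ℝ ℝ) (ContinuousLinearMap.id ℝ ℝ)

lemma Thd_det (p : ℝ × ℝ) : (Thd p).det = p.1 := by
  have : ((Thd p : ℝ × ℝ →L[ℝ] ℝ × ℝ) : ℝ × ℝ →ₗ[ℝ] ℝ × ℝ) = LinearMap.prodMap (p.1 • LinearMap.id) LinearMap.id := rfl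
  rw [ContinuousLinearMap.det, this, LinearMap.det_prodMap]
  simp

lemma Thd_has (p : ℝ × ℝ) : HasFDerivAt Th (Thd p) p := by
  have h1 : HasFDerivAt (fun p : ℝ × ℝ => p.1 ^ 2 / 2) (p.1 • ContinuousLinearMap.fst ℝ ℝ ℝ) p := by
    have hd : HasDerivAt (fun x : ℝ => x ^ 2 / 2) p.1 p.1 := ((hasDerivAt_pow 2 p.1).div_const 2).congr_deriv (by simp)
    exact hd.comp_hasFDerivAt p hasFDerivAt_fst
  exact h1.prodMk hasFDerivAt_snd

lemma cov_int (ha : 0 < a) (hR : 1 ≤ R) (f : ℝ × ℝ → ℝ) :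
    ∫ q in Dm a R, f q = ∫ p in Om a R, p.1 * f (Th p) := by
  rw [← Th_image ha hR, integral_image_eq_integral_abs_det_fderiv_smul volume (Om_open a R).measurableSet
    (fun p _ => (Thd_has p).hasFDerivWithinAt) (Th_inj ha hR)]
  refine setIntegral_congr_fun (Om_open a R).measurableSet fun p hp => ?_
  simp only [Thd_det, smul_eq_mul, abs_of_pos (Om_pos ha hR hp)]

lemma cov_integrable (ha : 0 < a) (hR : 1 ≤ R) (f : ℝ × ℝ → ℝ) :
    IntegrableOn f (Dm a R) ↔ IntegrableOn (fun p => p.1 * f (Th p)) (Om a R) := by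
  rw [← Th_image ha hR, integrableOn_image_iff_integrableOn_abs_det_fderiv_smul volume (Om_open a R).measurableSet
    (fun p _ => (Thd_has p).hasFDerivWithinAt) (Th_inj ha hR)]
  refine integrableOn_congr_fun (fun p hp => ?_) (Om_open a R).measurableSet
  simp only [Thd_det, smul_eq_mul, abs_of_pos (Om_pos ha hR hp)]

lemma lift_zero_low (ha : 0 < a) (hR : 1 ≤ R) {η : ℝ × ℝ → ℝ} (hη : IsTest (Dm a R) η) {p : ℝ × ℝ} (hp : p.1 < a) :
    lift η p = 0 := by
  unfold lift
  rcases le_or_gt p.1 0 with h | h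
  · rw [Real.sqrt_eq_zero_of_nonpos h]; simp
  · rw [hη.zero_out, mul_zero]
    intro h2
    have h3 := Dm_low ha hR (le_of_lt h2)
    simp only [Th] at h3
    nlinarith

lemma lift_test (ha : 0 < a) (hR : 1 ≤ R) {η : ℝ × ℝ → ℝ} (hη : IsTest (Dm a R) η) : IsTest (Om a R) (lift η) := by
  have hK : IsCompact (Ti '' tsupport η) := hη.cpt.isCompact.image Ti_cont
  have hs : Function.support (lift η) ⊆ Ti '' tsupport η := by
    intro p hp
    have h0 : a ≤ p.1 := by
      by_contra h
      exact hp (lift_zero_low ha hR hη (not_le.1 h))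
    refine ⟨Th p, ?_, Ti_Th (by linarith)⟩
    refine subset_tsupport _ ?_
    intro h
    exact hp (by unfold lift; rw [h, mul_zero])
  refine ⟨contDiff_iff_contDiffAt.2 fun p => ?_, HasCompactSupport.of_support_subset_isCompact hK hs, ?_⟩
  · rcases lt_or_ge p.1 a with h | h
    · have : lift η =ᶠ[𝓝 p] fun _ => 0 := by
        filter_upwards [(isOpen_lt continuous_fst continuous_const).mem_nhds h] with q hq
        exact lift_zero_low ha hR hη hq
      exact contDiffAt_const.congr_of_eventuallyEq this
    · exact lift_smooth le_rfl (by linarith) hη.smooth.contDiffAt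
  · refine (closure_minimal hs hK.isClosed).trans ?_
    rintro _ ⟨q, hq, rfl⟩
    exact hη.sub hq

noncomputable def Gt (G : ℝ × ℝ → ℝ) (q : ℝ × ℝ) : ℝ := Real.sqrt (Real.sqrt (2 * q.1)) * G (Ti q)
noncomputable def vt (a R : ℝ) (G : ℝ × ℝ → ℝ) (q : ℝ × ℝ) : ℝ := psi a R (Ti q) * Gt G q
noncomputable def Qt (lam : ℝ) (q : ℝ × ℝ) : ℝ := 3 / (16 * q.1 ^ 2) + lam / (2 * q.1)
noncomputable def Ft (a R lam : ℝ) (G : ℝ × ℝ → ℝ) (q : ℝ × ℝ) : ℝ := Qt lam q * vt a R G q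

lemma Gt_Th (G : ℝ × ℝ → ℝ) {p : ℝ × ℝ} (hp : 0 < p.1) : Gt G (Th p) = Real.sqrt p.1 * G p := by
  unfold Gt
  rw [Ti_Th hp.le]
  simp only [Th]
  rw [show 2 * (p.1 ^ 2 / 2) = p.1 ^ 2 by ring, Real.sqrt_sq hp.le]

variable {G : ℝ × ℝ → ℝ} {lam : ℝ}

lemma Gt_zero (h0 : ∀ p, p ∉ Om a R → G p = 0) {q : ℝ × ℝ} (hq : q ∉ Dm a R) : Gt G q = 0 := by
  unfold Gt; rw [h0 _ hq, mul_zero]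
lemma vt_zero (h0 : ∀ p, p ∉ Om a R → G p = 0) {q : ℝ × ℝ} (hq : q ∉ Dm a R) : vt a R G q = 0 := by
  unfold vt; rw [Gt_zero h0 hq, mul_zero]

lemma Gt_meas (hm : Measurable G) : Measurable (Gt G) := by
  have h1 : Measurable (fun q : ℝ × ℝ => Real.sqrt (Real.sqrt (2 * q.1))) := by fun_prop
  exact h1.mul (hm.comp Ti_cont.measurable)

lemma vt_meas (hm : Measurable G) : Measurable (vt a R G) :=
  (((psi_smooth a R).continuous.comp Ti_cont).measurable).mul (Gt_meas hm)

lemma Ft_meas (hm : Measurable G) : Measurable (Ft a R lam G) := by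
  unfold Ft
  have : Measurable (Qt lam) := by unfold Qt; fun_prop
  exact this.mul (vt_meas hm)

lemma Gt_memLp (ha : 0 < a) (hR : 1 ≤ R) (hm : Measurable G) (hG : MemLp G 2 volume) (h0 : ∀ p, p ∉ Om a R → G p = 0) :
    MemLp (Gt G) 2 volume := by
  refine memLp_of_sq (Gt_meas hm).aestronglyMeasurable ?_
  rw [← integrableOn_iff_integrable_of_support_subset (s := Dm a R), cov_integrable ha hR]
  · have hi : IntegrableOn (fun p => G p ^ 2) (Om a R) := hG.integrable_sq.integrableOn
    have h1 : IntegrableOn (fun p : ℝ × ℝ => p.1 ^ 2 * G p ^ 2) (Om a R) := by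
      refine Integrable.bdd_mul (c := (a + 2 * R) ^ 2) hi (by fun_prop) ?_
      refine (ae_restrict_iff' (Om_open a R).measurableSet).2 (Eventually.of_forall fun p hp => ?_)
      have := Om_x (by linarith) (le_of_lt hp)
      rw [Real.norm_eq_abs, abs_of_nonneg (sq_nonneg _)]
      nlinarith
    refine h1.congr_fun (fun p hp => ?_) (Om_open a R).measurableSet
    have hp0 := Om_pos ha hR hp
    simp only [Gt_Th G hp0, mul_pow, Real.sq_sqrt hp0.le]; ring
  · intro q hq
    by_contra h
    exact hq (by simp [Gt_zero h0 h])

lemma psi_Ti_bd (q : ℝ × ℝ) (hq : q ∈ Dm a R) : |psi a R (Ti q)| ≤ R ^ 4 := by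
  rw [abs_of_pos hq]; exact psi_le _ _ _

lemma vt_memLp (ha : 0 < a) (hR : 1 ≤ R) (hm : Measurable G) (hG : MemLp G 2 volume) (h0 : ∀ p, p ∉ Om a R → G p = 0) :
    MemLp (vt a R G) 2 volume := by
  refine (Gt_memLp ha hR hm hG h0).of_le_mul (c := R ^ 4) (vt_meas hm).aestronglyMeasurable (Eventually.of_forall fun q => ?_)
  by_cases hq : q ∈ Dm a R
  · unfold vt
    rw [norm_mul]
    exact mul_le_mul_of_nonneg_right (psi_Ti_bd q hq) (norm_nonneg _)
  · rw [vt_zero h0 hq, norm_zero]; positivity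

lemma Qt_bd (ha : 0 < a) (hR : 1 ≤ R) (hl : 0 < lam) {q : ℝ × ℝ} (hq : q ∈ Dm a R) :
    |Qt lam q| ≤ 3 / (16 * (a ^ 2 / 2) ^ 2) + lam / (2 * (a ^ 2 / 2)) := by
  have h1 := Dm_low ha hR (le_of_lt hq)
  have h2 := Dm_pos ha hR hq
  unfold Qt
  rw [abs_of_pos (by positivity)]
  gcongr

lemma Ft_memLp (ha : 0 < a) (hR : 1 ≤ R) (hl : 0 < lam) (hm : Measurable G) (hG : MemLp G 2 volume)
    (h0 : ∀ p, p ∉ Om a R → G p = 0) : MemLp (Ft a R lam G) 2 volume := by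
  refine (vt_memLp ha hR hm hG h0).of_le_mul (c := 3 / (16 * (a ^ 2 / 2) ^ 2) + lam / (2 * (a ^ 2 / 2)))
    (Ft_meas hm).aestronglyMeasurable (Eventually.of_forall fun q => ?_)
  by_cases hq : q ∈ Dm a R
  · unfold Ft
    rw [norm_mul]
    exact mul_le_mul_of_nonneg_right (Qt_bd ha hR hl hq) (norm_nonneg _)
  · unfold Ft; rw [vt_zero h0 hq]; simp

lemma Qt_smooth (ha : 0 < a) (hR : 1 ≤ R) : ContDiffOn ℝ ∞ (Qt lam) (Dm a R) := by
  intro q hq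
  have h2 := (Dm_pos ha hR hq).ne'
  unfold Qt
  refine ContDiffAt.contDiffWithinAt ?_
  exact (contDiffAt_const.div (by fun_prop) (by positivity)).add (contDiffAt_const.div (by fun_prop) (by positivity))

lemma weak_flat (ha : 0 < a) (hR : 1 ≤ R) (hl : 0 < lam) (hm : Measurable G) (hG : MemLp G 2 volume)
    (h0 : ∀ p, p ∉ Om a R → G p = 0)
    (hw : ∀ ζ, IsTest (Om a R) ζ → ∫ p, G p * (psi a R p * (glap ζ p + lam * ζ p)) = 0)
    {η : ℝ × ℝ → ℝ} (hη : IsTest (Dm a R) η) :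
    ∫ q, vt a R G q * lap η q = - ∫ q, Ft a R lam G q * η q := by
  have i1 : Integrable (fun q => vt a R G q * lap η q) :=
    (vt_memLp ha hR hm hG h0).integrable_mul (test_memLp hη.lap)
  have i2 : Integrable (fun q => Ft a R lam G q * η q) :=
    (Ft_memLp ha hR hl hm hG h0).integrable_mul (test_memLp hη)
  have h := hw _ (lift_test ha hR hη)
  rw [← setIntegral_eq_integral_of_forall_compl_eq_zero (s := Om a R) (fun p hp => by rw [h0 p hp, zero_mul])] at h
  have e : ∫ p in Om a R, G p * (psi a R p * (glap (lift η) p + lam * lift η p)) =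
      ∫ q in Dm a R, (vt a R G q * lap η q + Ft a R lam G q * η q) := by
    rw [cov_int ha hR]
    refine setIntegral_congr_fun (Om_open a R).measurableSet fun p hp => ?_
    have hp0 := Om_pos ha hR hp
    have hs := Real.sqrt_pos.2 hp0
    rw [lift_glap hp0 (hη.smooth.contDiffAt.of_le two_le_inf)]
    unfold Ft vt Qt
    rw [Gt_Th G hp0, Ti_Th hp0.le]
    have e1 : (Th p).1 = p.1 ^ 2 / 2 := rfl
    rw [e1]
    have e2 : p.1 = Real.sqrt p.1 ^ 2 := (Real.sq_sqrt hp0.le).symm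
    generalize Real.sqrt p.1 = s at *
    rw [e2]
    field_simp
    ring
  rw [e, setIntegral_eq_integral_of_forall_compl_eq_zero, integral_add i1 i2] at h
  · linarith
  · intro q hq
    unfold Ft
    rw [vt_zero h0 hq]; ring

lemma vt_ne (ha : 0 < a) (hR : 1 ≤ R) (hm : Measurable G) (hG : MemLp G 2 volume) (h0 : ∀ p, p ∉ Om a R → G p = 0)
    (hv : vt a R G =ᵐ[volume] fun _ => 0) : G =ᵐ[volume] fun _ => 0 := by
  have h1 : ∫ q in Dm a R, vt a R G q ^ 2 = 0 := by
    have : (fun q => vt a R G q ^ 2) =ᵐ[volume.restrict (Dm a R)] fun _ => 0 := by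
      filter_upwards [ae_restrict_of_ae hv] with q hq
      rw [hq]; ring
    rw [integral_congr_ae this]; simp
  have h2 : IntegrableOn (fun q => vt a R G q ^ 2) (Dm a R) := (vt_memLp ha hR hm hG h0).integrable_sq.integrableOn
  rw [cov_integrable ha hR] at h2
  rw [cov_int ha hR, integral_eq_zero_iff_of_nonneg_ae ?_ h2] at h1
  · have h3 := (ae_restrict_iff' (Om_open a R).measurableSet).1 h1
    filter_upwards [h3] with p hp
    by_cases hpO : p ∈ Om a R
    · have h4 := hp hpO
      have hp0 := Om_pos ha hR hpO
      have hs := Real.sqrt_pos.2 hp0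
      have hps : psi a R p ≠ 0 := (show 0 < psi a R p from hpO).ne'
      simp only [vt, Gt_Th G hp0, Ti_Th hp0.le, Pi.zero_apply] at h4
      simpa [hp0.ne', hs.ne', hps] using h4
    · exact h0 p hpO
  · refine (ae_restrict_iff' (Om_open a R).measurableSet).2 (Eventually.of_forall fun p hp => ?_)
    have hp0 := Om_pos ha hR hp
    simp only [Pi.zero_apply]; positivity

lemma weak_eig2 (ha : 0 < a) (ha1 : a < 1) (hR : 1 ≤ R) : ∃ lam G, 0 < lam ∧ lam ≤ C0 / R ^ 2 ∧ Measurable G ∧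
    MemLp G 2 volume ∧ (∀ p, p ∉ Om a R → G p = 0) ∧ (¬ G =ᵐ[volume] fun _ => 0) ∧
    ∀ ζ, IsTest (Om a R) ζ → ∫ p, G p * (psi a R p * (glap ζ p + lam * ζ p)) = 0 := by
  obtain ⟨lam, G, hl, hl2, hG, h0, hne, hw⟩ := weak_eig ha ha1 hR
  set G' := (Om a R).indicator (hG.1.mk G) with hG'
  have hae : G' =ᵐ[volume] G := by
    filter_upwards [hG.1.ae_eq_mk] with p hp
    by_cases h : p ∈ Om a R
    · rw [hG', indicator_of_mem h, hp]
    · rw [hG', indicator_of_notMem h, h0 p h]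
  refine ⟨lam, G', hl, hl2, hG.1.stronglyMeasurable_mk.measurable.indicator (Om_open a R).measurableSet,
    hG.ae_eq hae.symm, fun p hp => indicator_of_notMem hp _, fun h => hne (hae.symm.trans h), fun ζ hζ => ?_⟩
  rw [← hw ζ hζ]
  refine integral_congr_ae ?_
  filter_upwards [hae] with p hp
  rw [hp]

end cov
end Gru

end

section
open MeasureTheory Filter Topology Set
open scoped ContDiff

namespace Gru
section bdry
variable {a R : ℝ}

lemma Dm_ne (ha : 0 < a) (hR : 1 ≤ R) : ((Dm a R)ᶜ).Nonempty :=
  ⟨(0, 0), fun h => lt_irrefl _ (Dm_pos ha hR h)⟩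

noncomputable def KK (a R : ℝ) : ℝ := R ^ 4 + (2 / a) * (4 * (R + 2 / a) ^ 3) + 8 * (R ^ 2 + 1)

lemma KK_pos (ha : 0 < a) (hR : 1 ≤ R) : 0 < KK a R := by unfold KK; positivity

lemma sqrt_lip (ha : 0 < a) {s t : ℝ} (hs : a ≤ Real.sqrt (2 * s)) :
    |Real.sqrt (2 * t) - Real.sqrt (2 * s)| ≤ 2 / a * |t - s| := by
  have h2 : 0 < 2 * s := Real.sqrt_pos.1 (lt_of_lt_of_le ha hs)
  have e := Real.sq_sqrt h2.le
  have h0 := Real.sqrt_nonneg (2 * t)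
  rw [div_mul_eq_mul_div, le_div_iff₀ ha]
  rcases le_or_gt 0 t with h | h
  · have e' := Real.sq_sqrt (show 0 ≤ 2 * t by linarith)
    have : 2 * |t - s| = |Real.sqrt (2 * t) - Real.sqrt (2 * s)| * (Real.sqrt (2 * t) + Real.sqrt (2 * s)) := by
      rw [← abs_of_nonneg (show 0 ≤ Real.sqrt (2 * t) + Real.sqrt (2 * s) by linarith), ← abs_mul,
        show (2:ℝ) * |t - s| = |2 * (t - s)| by rw [abs_mul]; simp]
      congr 1; nlinarith
    rw [this]
    exact mul_le_mul_of_nonneg_left (by linarith) (abs_nonneg _)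
  · rw [Real.sqrt_eq_zero_of_nonpos (by linarith), abs_of_nonpos (by linarith), abs_of_nonpos (by linarith)]
    nlinarith

lemma psi_dist (ha : 0 < a) (hR : 1 ≤ R) {q q' : ℝ × ℝ} (hq : q ∈ Dm a R) (hq' : q' ∉ Dm a R) :
    psi a R (Ti q) ≤ KK a R * dist q q' := by
  have hd0 : 0 ≤ dist q q' := dist_nonneg
  have h1 : |q.1 - q'.1| ≤ dist q q' := by rw [Prod.dist_eq, ← Real.dist_eq]; exact le_max_left _ _
  have h2 : |q.2 - q'.2| ≤ dist q q' := by rw [Prod.dist_eq, ← Real.dist_eq]; exact le_max_right _ _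
  have hM : 0 < 2 / a := by positivity
  rcases le_or_gt 1 (dist q q') with h | h
  · have := psi_le a R (Ti q)
    have : R ^ 4 ≤ KK a R := by
      unfold KK
      have : 0 ≤ (2 / a) * (4 * (R + 2 / a) ^ 3) + 8 * (R ^ 2 + 1) := by positivity
      linarith
    nlinarith [KK_pos ha hR]
  · obtain ⟨x1, x2, x3⟩ := Om_x (by linarith) (le_of_lt (show 0 < psi a R (Ti q) from hq))
    have hl := sqrt_lip (t := q'.1) ha x1
    have hps : psi a R (Ti q') ≤ 0 := not_lt.1 hq'
    simp only [Ti] at x1 x2 x3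
    set x := Real.sqrt (2 * q.1)
    set x' := Real.sqrt (2 * q'.1)
    set d := dist q q'
    set M := R + 2 / a with hMd
    have hl2 : |x' - x| ≤ 2 / a * d := hl.trans (mul_le_mul_of_nonneg_left (by rwa [abs_sub_comm]) hM.le)
    have hl3 : |x' - x| ≤ 2 / a := hl2.trans (by nlinarith)
    have ht : |x - (a + R)| ≤ M := by rw [abs_le]; constructor <;> linarith
    have ht' : |x' - (a + R)| ≤ M := by rw [abs_le] at hl3 ⊢; constructor <;> linarith
    set t := x - (a + R)
    set t' := x' - (a + R)
    have e : t' - t = x' - x := by ring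
    have hq4 : t' ^ 4 - t ^ 4 ≤ 2 / a * d * (4 * M ^ 3) := by
      have : t' ^ 4 - t ^ 4 = (t' - t) * ((t' + t) * (t' ^ 2 + t ^ 2)) := by ring
      rw [this]
      refine (le_abs_self _).trans ?_
      rw [abs_mul, e, abs_mul]
      have b1 : |t' + t| ≤ 2 * M := (abs_add_le _ _).trans (by linarith)
      have b2 : |t' ^ 2 + t ^ 2| ≤ 2 * M ^ 2 := by
        rw [abs_of_nonneg (by positivity)]
        have := pow_le_pow_left₀ (abs_nonneg _) ht 2
        have := pow_le_pow_left₀ (abs_nonneg _) ht' 2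
        rw [sq_abs] at *
        linarith
      calc |x' - x| * (|t' + t| * |t' ^ 2 + t ^ 2|) ≤ (2 / a * d) * ((2 * M) * (2 * M ^ 2)) := by gcongr
        _ = _ := by ring
    have hy : q'.2 ^ 2 - q.2 ^ 2 ≤ d * (2 * (R ^ 2 + 1)) := by
      have : q'.2 ^ 2 - q.2 ^ 2 = (q.2 - q'.2) * (-(q'.2 + q.2)) := by ring
      rw [this]
      refine (le_abs_self _).trans ?_
      rw [abs_mul, abs_neg]
      have : |q'.2 + q.2| ≤ 2 * (R ^ 2 + 1) := by
        rw [abs_le] at x3 h2 ⊢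
        constructor <;> linarith
      gcongr
    have e1 : psi a R (Ti q) = R ^ 4 - t ^ 4 - 4 * q.2 ^ 2 := rfl
    have e2 : psi a R (Ti q') = R ^ 4 - t' ^ 4 - 4 * q'.2 ^ 2 := rfl
    have e3 : KK a R * d = R ^ 4 * d + 2 / a * d * (4 * M ^ 3) + 4 * (d * (2 * (R ^ 2 + 1))) := by
      unfold KK; ring
    have : 0 ≤ R ^ 4 * d := by positivity
    linarith

lemma psi_infDist (ha : 0 < a) (hR : 1 ≤ R) {q : ℝ × ℝ} (hq : q ∈ Dm a R) :
    psi a R (Ti q) ≤ KK a R * Metric.infDist q (Dm a R)ᶜ := by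
  have hK := KK_pos ha hR
  rw [← div_le_iff₀' hK, Metric.le_infDist (Dm_ne ha hR)]
  intro q' hq'
  rw [div_le_iff₀' hK]
  exact psi_dist ha hR hq hq'

variable {G : ℝ × ℝ → ℝ} {lam : ℝ}

lemma vbar_est (ha : 0 < a) (hR : 1 ≤ R) (hl : 0 < lam) (hm : Measurable G) (hG : MemLp G 2 volume)
    (h0 : ∀ p, p ∉ Om a R → G p = 0) {p : ℝ × ℝ} (hp : p ∈ Dm a R) :
    |vbar (Dm a R) (vt a R G) (Ft a R lam G) p| ≤ CC * (3 * KK a R *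
      Real.sqrt (∫ z in Metric.closedBall p (Metric.infDist p (Dm a R)ᶜ / 2), Gt G z ^ 2) +
      Metric.infDist p (Dm a R)ᶜ / 2 * Real.sqrt (∫ z, Ft a R lam G z ^ 2)) := by
  have hv := vt_memLp ha hR hm hG h0
  have hF := Ft_memLp ha hR hl hm hG h0
  have hd := infDist_pos (Dm_open a R) (Dm_ne ha hR) hp
  have hK := KK_pos ha hR
  unfold vbar
  set d := Metric.infDist p (Dm a R)ᶜ with hddef
  set r := d / 2 with hr
  have hr0 : 0 < r := by positivity
  refine (VV_est hv hF hr0 p).trans (mul_le_mul_of_nonneg_left ?_ CC_nonneg)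
  have hB : MeasurableSet (Metric.closedBall p r) := Metric.isClosed_closedBall.measurableSet
  have iG : IntegrableOn (fun z => Gt G z ^ 2) (Metric.closedBall p r) := (Gt_memLp ha hR hm hG h0).integrable_sq.integrableOn
  have iv : IntegrableOn (fun z => vt a R G z ^ 2) (Metric.closedBall p r) := hv.integrable_sq.integrableOn
  refine add_le_add ?_ ?_
  · have h1 : ∫ z in Metric.closedBall p r, vt a R G z ^ 2 ≤ (3 * KK a R * r) ^ 2 * ∫ z in Metric.closedBall p r, Gt G z ^ 2 := by
      rw [← integral_const_mul]
      refine setIntegral_mono_on iv (iG.const_mul _) hB fun z hz => ?_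
      by_cases hzD : z ∈ Dm a R
      · unfold vt
        rw [mul_pow]
        refine mul_le_mul_of_nonneg_right ?_ (sq_nonneg _)
        have h3 := psi_infDist ha hR hzD
        have h4 := Metric.infDist_le_infDist_add_dist (s := (Dm a R)ᶜ) (x := z) (y := p)
        have h5 : dist z p ≤ r := hz
        have h6 : (0:ℝ) < psi a R (Ti z) := hzD
        refine pow_le_pow_left₀ h6.le ?_ 2
        have : Metric.infDist z (Dm a R)ᶜ ≤ 3 * r := by linarith
        nlinarith
      · rw [vt_zero h0 hzD, zero_pow two_ne_zero]; positivity
    calc r⁻¹ * Real.sqrt (∫ z in Metric.closedBall p r, vt a R G z ^ 2)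
        ≤ r⁻¹ * Real.sqrt ((3 * KK a R * r) ^ 2 * ∫ z in Metric.closedBall p r, Gt G z ^ 2) := by gcongr
      _ = _ := by
        rw [Real.sqrt_mul (sq_nonneg _), Real.sqrt_sq (by positivity)]
        field_simp
  · refine mul_le_mul_of_nonneg_left (Real.sqrt_le_sqrt ?_) hr0.le
    exact setIntegral_le_integral hF.integrable_sq (Eventually.of_forall fun z => sq_nonneg _)

lemma vbar_bdry (ha : 0 < a) (hR : 1 ≤ R) (hl : 0 < lam) (hm : Measurable G) (hG : MemLp G 2 volume)
    (h0 : ∀ p, p ∉ Om a R → G p = 0) {p₀ : ℝ × ℝ} (hp : p₀ ∉ Dm a R) :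
    Tendsto (vbar (Dm a R) (vt a R G) (Ft a R lam G)) (𝓝[Dm a R] p₀) (𝓝 0) := by
  have hr : Tendsto (fun p => Metric.infDist p (Dm a R)ᶜ / 2) (𝓝[Dm a R] p₀) (𝓝 0) := by
    have hc : Continuous (fun p => Metric.infDist p (Dm a R)ᶜ / 2) := (Metric.continuous_infDist_pt _).div_const 2
    have := hc.tendsto p₀
    rw [Metric.infDist_zero_of_mem (show p₀ ∈ (Dm a R)ᶜ from hp), zero_div] at this
    exact this.mono_left nhdsWithin_le_nhds
  have hμ : Tendsto (fun p => volume (Metric.closedBall p (Metric.infDist p (Dm a R)ᶜ / 2))) (𝓝[Dm a R] p₀) (𝓝 0) := by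
    have e : ∀ p : ℝ × ℝ, volume (Metric.closedBall p (Metric.infDist p (Dm a R)ᶜ / 2)) =
        ENNReal.ofReal ((Metric.infDist p (Dm a R)ᶜ / 2) ^ Module.finrank ℝ (ℝ × ℝ)) * volume (Metric.ball (0 : ℝ × ℝ) 1) := fun p =>
      Measure.addHaar_closedBall _ _ (by have := Metric.infDist_nonneg (x := p) (s := (Dm a R)ᶜ); positivity)
    simp_rw [e]
    have h1 := ENNReal.tendsto_ofReal (hr.pow (Module.finrank ℝ (ℝ × ℝ)))
    have h2 := ENNReal.Tendsto.mul_const h1 (Or.inr (measure_ball_lt_top (μ := volume) (x := (0 : ℝ × ℝ)) (r := 1)).ne)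
    simpa using h2
  have hI := (Gt_memLp ha hR hm hG h0).integrable_sq.tendsto_setIntegral_nhds_zero hμ
  have hS := (Real.continuous_sqrt.tendsto 0).comp hI
  rw [Real.sqrt_zero] at hS
  have hT := ((hS.const_mul (3 * KK a R)).add (hr.mul_const (Real.sqrt (∫ z, Ft a R lam G z ^ 2)))).const_mul CC
  simp only [mul_zero, zero_mul, add_zero] at hT
  refine squeeze_zero_norm' ?_ hT
  filter_upwards [self_mem_nhdsWithin] with p hp
  exact vbar_est ha hR hl hm hG h0 hp

end bdry

lemma final {a R : ℝ} (ha : 0 < a) (ha1 : a < 1) (hR : 1 ≤ R) : ∃ lam φ, (∃ p ∈ Om a R, φ p ≠ 0) ∧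
    ContinuousOn φ (closure (Om a R)) ∧ ContDiffOn ℝ 2 φ (Om a R) ∧
    (∀ p ∈ Om a R, deriv (deriv (fun x => φ (x, p.2))) p.1 + p.1 ^ 2 * deriv (deriv (fun y => φ (p.1, y))) p.2 + lam * φ p = 0) ∧
    (∀ p ∈ frontier (Om a R), φ p = 0) ∧ 0 < lam ∧ lam ≤ C0 / R ^ 2 := by
  obtain ⟨lam, G, hl, hl2, hm, hG, h0, hne, hw⟩ := weak_eig2 ha ha1 hR
  have hv := vt_memLp ha hR hm hG h0
  have hF := Ft_memLp ha hR hl hm hG h0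
  have hwf : ∀ η, IsTest (Dm a R) η → _ := fun η hη => weak_flat ha hR hl hm hG h0 hw hη
  have hQ := Qt_smooth (lam := lam) ha hR
  have hFQ : ∀ p ∈ Dm a R, Ft a R lam G p = Qt lam p * vt a R G p := fun _ _ => rfl
  have hae := vbar_ae (Dm_open a R) (Dm_ne ha hR) hv hF hwf
  have hC2 := vbar_C2 (Dm_open a R) (Dm_ne ha hR) hv hF hQ hFQ hwf
  have hpde := fun (p : ℝ × ℝ) (hp : p ∈ Dm a R) => vbar_pde (Dm_open a R) (Dm_ne ha hR) hv hF hQ hFQ hwf hp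
  have hbd := fun (p : ℝ × ℝ) (hp : p ∉ Dm a R) => vbar_bdry ha hR hl hm hG h0 hp
  set w := vbar (Dm a R) (vt a R G) (Ft a R lam G) with hwdef
  have hOo := Om_open a R
  have hwat : ∀ p ∈ Om a R, ContDiffAt ℝ 2 w (Th p) := fun p hp =>
    hC2.contDiffAt ((Dm_open a R).mem_nhds (Th_mem ha hR hp))
  set φ := (Om a R).indicator (lift w) with hφ
  have hin : ∀ p ∈ Om a R, φ p = lift w p := fun p hp => indicator_of_mem hp _
  have hout : ∀ p, p ∉ Om a R → φ p = 0 := fun p hp => indicator_of_notMem hp _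
  have heq : ∀ p ∈ Om a R, φ =ᶠ[𝓝 p] lift w := by
    intro p hp
    filter_upwards [hOo.mem_nhds hp] with q hq
    exact hin q hq
  have hφ2 : ∀ p ∈ Om a R, ContDiffAt ℝ 2 φ p := fun p hp =>
    (lift_smooth two_le_inf (Om_pos ha hR hp) (hwat p hp)).congr_of_eventuallyEq (heq p hp)
  refine ⟨lam, φ, ?_, ?_, fun p hp => (hφ2 p hp).contDiffWithinAt, ?_, ?_, hl, hl2⟩
  · by_contra hcon
    push Not at hcon
    refine hne (vt_ne ha hR hm hG h0 ?_)
    filter_upwards [hae] with q hq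
    by_cases hqD : q ∈ Dm a R
    · rw [← hq hqD]
      have h1 := hcon (Ti q) hqD
      rw [hin _ hqD] at h1
      unfold lift at h1
      rw [Th_Ti (Dm_pos ha hR hqD).le] at h1
      have h2 := Real.sqrt_pos.2 (Om_pos ha hR (show Ti q ∈ Om a R from hqD))
      simpa [h2.ne'] using h1
    · exact vt_zero h0 hqD
  · intro p hpc
    by_cases hp : p ∈ Om a R
    · exact (hφ2 p hp).continuousAt.continuousWithinAt
    · have hp1 : a ≤ p.1 := by
        have hs : closure (Om a R) ⊆ {p | a ≤ p.1} :=
          closure_minimal (fun q hq => (Om_x (by linarith) (le_of_lt hq)).1) (isClosed_le continuous_const continuous_fst)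
        exact hs hpc
      have hTp : Th p ∉ Dm a R := by
        intro h
        have h' : Ti (Th p) ∈ Om a R := h
        rw [Ti_Th (by linarith)] at h'
        exact hp h'
      refine ContinuousAt.continuousWithinAt ?_
      show Tendsto φ (𝓝 p) (𝓝 (φ p))
      rw [hout p hp, ← nhdsWithin_univ, ← union_compl_self (Om a R), nhdsWithin_union]
      refine Tendsto.sup ?_ ?_
      · have hT : Tendsto Th (𝓝[Om a R] p) (𝓝[Dm a R] (Th p)) :=
          tendsto_nhdsWithin_iff.2 ⟨(Th_smooth.continuous.tendsto p).mono_left nhdsWithin_le_nhds,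
            by filter_upwards [self_mem_nhdsWithin] with q hq; exact Th_mem ha hR hq⟩
        have h1 := (hbd _ hTp).comp hT
        have h2 := ((sqrt_inv_smooth (lt_of_lt_of_le ha hp1)).continuousAt.tendsto.mono_left nhdsWithin_le_nhds :
          Tendsto _ (𝓝[Om a R] p) _).mul h1
        rw [mul_zero] at h2
        refine h2.congr' ?_
        filter_upwards [self_mem_nhdsWithin] with q hq
        exact (hin q hq).symm
      · refine tendsto_const_nhds.congr' ?_
        filter_upwards [self_mem_nhdsWithin] with q hq
        exact (hout q hq).symm
  · intro p hp
    have hcx : Tendsto (fun x : ℝ => (x, p.2)) (𝓝 p.1) (𝓝 p) := by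
      have : Continuous (fun x : ℝ => (x, p.2)) := by fun_prop
      simpa using this.tendsto p.1
    have hcy : Tendsto (fun x : ℝ => (p.1, x)) (𝓝 p.2) (𝓝 p) := by
      have : Continuous (fun x : ℝ => (p.1, x)) := by fun_prop
      simpa using this.tendsto p.2
    have ex : (fun x => φ (x, p.2)) =ᶠ[𝓝 p.1] fun x => lift w (x, p.2) := hcx.eventually (heq p hp)
    have ey : (fun y => φ (p.1, y)) =ᶠ[𝓝 p.2] fun y => lift w (p.1, y) := hcy.eventually (heq p hp)
    have hp0 := Om_pos ha hR hp
    rw [ex.deriv.deriv_eq, ey.deriv.deriv_eq, hin p hp, lift_all hp0 (hwat p hp), hpde _ (Th_mem ha hR hp)]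
    unfold Qt
    have e1 : (Th p).1 = p.1 ^ 2 / 2 := rfl
    rw [e1]
    have hs := Real.sqrt_pos.2 hp0
    field_simp
    ring
  · intro p hp
    rw [hOo.frontier_eq] at hp
    exact hout p hp.2

end Gru

end

lemma gBall_eq {a R : ℝ} (hR : 1 ≤ R) : gBall (a + R, 0) R = Gru.Om a R := by
  ext p
  show ((p - (a + R, 0)).1 ^ 4 + 4 * (p - (a + R, 0)).2 ^ 2) ^ ((1 : ℝ) / 4) < R ↔
    0 < R ^ 4 - (p.1 - (a + R)) ^ 4 - 4 * p.2 ^ 2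
  simp only [Prod.fst_sub, Prod.snd_sub, sub_zero]
  rw [one_div, Real.rpow_inv_lt_iff_of_pos (by positivity) (by linarith) (by norm_num)]
  have : R ^ (4 : ℝ) = R ^ 4 := by exact_mod_cast Real.rpow_natCast R 4
  rw [this]
  constructor <;> intro h <;> linarith

/-- basic spectral theory on the Grushin ball `Ω = B_R((a+R, 0))`.
For `a ∈ (0,1)` and `R ≥ 1` there exist an eigenvalue `λ` and a non-trivial
eigenfunction `φ`, continuous on `closure Ω` and `C²` in `Ω`, with `Δ_G φ + λ φ = 0`
in `Ω`, `φ = 0` on `∂Ω`, and `0 < λ ≤ C/R²` for a constant `C > 0` independent of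
`a` and `R`. -/
theorem grushin_principal_eigenvalue :
    ∃ C > (0 : ℝ), ∀ a ∈ Set.Ioo (0 : ℝ) 1, ∀ R : ℝ, 1 ≤ R →
      ∃ (lam : ℝ) (φ : ℝ × ℝ → ℝ),
        (∃ p ∈ gBall (a + R, 0) R, φ p ≠ 0) ∧
        ContinuousOn φ (closure (gBall (a + R, 0) R)) ∧
        ContDiffOn ℝ 2 φ (gBall (a + R, 0) R) ∧
        (∀ p ∈ gBall (a + R, 0) R, grushinLap φ p + lam * φ p = 0) ∧
        (∀ p ∈ frontier (gBall (a + R, 0) R), φ p = 0) ∧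
        0 < lam ∧ lam ≤ C / R ^ 2 := by
  have hC : (0:ℝ) < Gru.C0 + 1 := by
    have h1 := Gru.I0_pos
    have h2 := Gru.I1_nonneg
    unfold Gru.C0
    positivity
  refine ⟨Gru.C0 + 1, hC, ?_⟩
  intro a ha R hR
  obtain ⟨lam, φ, h1, h2, h3, h4, h5, h6, h7⟩ := Gru.final ha.1 ha.2 hR
  rw [gBall_eq hR]
  refine ⟨lam, φ, h1, h2, h3, h4, h5, h6, h7.trans ?_⟩
  have : (0:ℝ) < R ^ 2 := by positivity
  gcongr
  linarith
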